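/- arXiv:1505.06390 — 5 statements merged into one kernel-verified Lean document; each statement's English description precedes it below -/
import Mathlib

section
/- Let P be a smooth solution of the polarized Gowdy wave equation satisfying the integrability condition ∫₀^{2π} ∂τP(0,θ) ∂θP(0,θ) dθ = 0, and let ℓ ∈ ℝ. Then there exists a unique smooth function λ : ℝ → ℝ → ℝ, 2π-periodic in θ, such that λ(0,0) = ℓ, ∂τλ = (∂τP)² + e^{-2τ}(∂θP)², and ∂θλ = 2 ∂τP ∂θP everywhere. -/
open Real

/-- Derivative along the first variable. -/
lemma gowdy_partial_fst {F : ℝ × ℝ → ℝ} {L : ℝ × ℝ →L[ℝ] ℝ} {τ θ : ℝ}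
    (h : HasFDerivAt F L (τ, θ)) : HasDerivAt (fun s => F (s, θ)) (L (1, 0)) τ :=
  HasFDerivAt.comp_hasDerivAt (f := fun s : ℝ => (s, θ)) τ h
    ((hasDerivAt_id τ).prodMk (hasDerivAt_const τ θ))

/-- Derivative along the second variable. -/
lemma gowdy_partial_snd {F : ℝ × ℝ → ℝ} {L : ℝ × ℝ →L[ℝ] ℝ} {τ θ : ℝ}
    (h : HasFDerivAt F L (τ, θ)) : HasDerivAt (fun t => F (τ, t)) (L (0, 1)) θ :=
  HasFDerivAt.comp_hasDerivAt (f := fun t : ℝ => (τ, t)) θ h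
    ((hasDerivAt_const θ τ).prodMk (hasDerivAt_id θ))

/-- Smooth Poincaré lemma for a 1-form `A dτ + B dθ` on the plane. -/
lemma gowdy_poincare {A B : ℝ × ℝ → ℝ} (hA : ContDiff ℝ (⊤ : ℕ∞) A)
    (hB : ContDiff ℝ (⊤ : ℕ∞) B)
    (h : ∀ p, fderiv ℝ A p (0, 1) = fderiv ℝ B p (1, 0)) :
    ∃ f : ℝ × ℝ → ℝ, ContDiff ℝ (⊤ : ℕ∞) f ∧
      ∀ p, HasFDerivAt f (A p • ContinuousLinearMap.fst ℝ ℝ ℝ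
        + B p • ContinuousLinearMap.snd ℝ ℝ ℝ) p := by
  have hAd : Differentiable ℝ A := hA.differentiable (by simp)
  have hBd : Differentiable ℝ B := hB.differentiable (by simp)
  have hω : ContDiff ℝ (⊤ : ℕ∞) (fun p => A p • ContinuousLinearMap.fst ℝ ℝ ℝ
        + B p • ContinuousLinearMap.snd ℝ ℝ ℝ) :=
    (hA.smul contDiff_const).add (hB.smul contDiff_const)
  obtain ⟨f, hf⟩ := (convex_univ (𝕜 := ℝ) (E := ℝ × ℝ)).exists_forall_hasFDerivAt_of_fderiv_symmetric
    isOpen_univ (hω.differentiable (by simp)).differentiableOn (by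
      rintro p - ⟨x1, x2⟩ ⟨y1, y2⟩
      have hd := ((hAd p).hasFDerivAt.smul_const (ContinuousLinearMap.fst ℝ ℝ ℝ)).add
        ((hBd p).hasFDerivAt.smul_const (ContinuousLinearMap.snd ℝ ℝ ℝ))
      have hd' := hd.fderiv
      have e : ∀ (L : ℝ × ℝ →L[ℝ] ℝ) (x y : ℝ), L (x, y) = x * L (1, 0) + y * L (0, 1) := by
        intro L x y
        have : ((x, y) : ℝ × ℝ) = x • (1, 0) + y • (0, 1) := by simp
        rw [this, map_add, map_smul, map_smul]; simp
      erw [hd']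
      simp only [add_apply, ContinuousLinearMap.smulRight_apply,
        smul_apply, ContinuousLinearMap.coe_fst',
        ContinuousLinearMap.coe_snd', smul_eq_mul]
      rw [e (fderiv ℝ A p) x1, e (fderiv ℝ A p) y1, e (fderiv ℝ B p) x1, e (fderiv ℝ B p) y1,
        h p]
      ring)
  refine ⟨f, ?_, fun p => hf p trivial⟩
  rw [contDiff_infty_iff_fderiv]
  refine ⟨fun p => (hf p trivial).differentiableAt, ?_⟩
  have : fderiv ℝ f = _ := funext fun p => (hf p trivial).fderiv
  rw [this]; exact hω

/-- A function on the plane both of whose partial derivatives vanish is constant. -/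
lemma gowdy_const {g : ℝ → ℝ → ℝ} (h1 : ∀ τ θ, HasDerivAt (fun s => g s θ) 0 τ)
    (h2 : ∀ τ θ, HasDerivAt (g τ) 0 θ) (τ θ : ℝ) : g τ θ = g 0 0 := by
  have a : g τ θ = g 0 θ := is_const_of_deriv_eq_zero (f := fun s => g s θ)
    (fun s => (h1 s θ).differentiableAt) (fun s => (h1 s θ).deriv) τ 0
  have b : g 0 θ = g 0 0 := is_const_of_deriv_eq_zero
    (fun s => (h2 0 s).differentiableAt) (fun s => (h2 0 s).deriv) θ 0
  rw [a, b]


/-- Given a smooth solution `P` of the polarized Gowdy wave equation satisfying the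
integrability condition, and a constant `ℓ`, there is a unique smooth 2π-periodic
`λ` with `λ(0,0) = ℓ` solving `∂τλ = (∂τP)² + e^{-2τ}(∂θP)²` and `∂θλ = 2 ∂τP ∂θP`. -/
theorem polarized_gowdy_lambda_exists_unique
    (P : ℝ → ℝ → ℝ)
    (hsmooth : ContDiff ℝ (⊤ : ℕ∞) (fun p : ℝ × ℝ => P p.1 p.2))
    (hper : ∀ τ θ : ℝ, P τ (θ + 2 * π) = P τ θ)
    (hwave : ∀ τ θ : ℝ, deriv (fun s => deriv (fun s' => P s' θ) s) τ
      = Real.exp (-2 * τ) * deriv (deriv (P τ)) θ)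
    (hint : (∫ θ in (0:ℝ)..(2 * π), deriv (fun s => P s θ) 0 * deriv (P 0) θ) = 0)
    (ℓ : ℝ) :
    ∃! lam : ℝ → ℝ → ℝ,
      ContDiff ℝ (⊤ : ℕ∞) (fun p : ℝ × ℝ => lam p.1 p.2) ∧
      (∀ τ θ : ℝ, lam τ (θ + 2 * π) = lam τ θ) ∧
      lam 0 0 = ℓ ∧
      (∀ τ θ : ℝ, deriv (fun s => lam s θ) τ
        = (deriv (fun s => P s θ) τ) ^ 2 + Real.exp (-2 * τ) * (deriv (P τ) θ) ^ 2) ∧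
      (∀ τ θ : ℝ, deriv (lam τ) θ = 2 * deriv (fun s => P s θ) τ * deriv (P τ) θ) := by
  set F : ℝ × ℝ → ℝ := fun p => P p.1 p.2 with hF
  have hFd : Differentiable ℝ F := hsmooth.differentiable (by simp)
  set a : ℝ × ℝ → ℝ := fun p => fderiv ℝ F p (1, 0) with ha
  set b : ℝ × ℝ → ℝ := fun p => fderiv ℝ F p (0, 1) with hb
  have hF' : ContDiff ℝ (⊤ : ℕ∞) (fderiv ℝ F) := (contDiff_infty_iff_fderiv.1 hsmooth).2
  have hF'd : Differentiable ℝ (fderiv ℝ F) := hF'.differentiable (by simp)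
  have has : ContDiff ℝ (⊤ : ℕ∞) a := hF'.clm_apply contDiff_const
  have hbs : ContDiff ℝ (⊤ : ℕ∞) b := hF'.clm_apply contDiff_const
  have had : Differentiable ℝ a := has.differentiable (by simp)
  have hbd : Differentiable ℝ b := hbs.differentiable (by simp)
  have hP1 : ∀ τ θ : ℝ, deriv (fun s => P s θ) τ = a (τ, θ) := fun τ θ =>
    (gowdy_partial_fst (hFd (τ, θ)).hasFDerivAt).deriv
  have hP2 : ∀ τ θ : ℝ, deriv (P τ) θ = b (τ, θ) := fun τ θ =>
    (gowdy_partial_snd (hFd (τ, θ)).hasFDerivAt).deriv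
  have hsymm : ∀ p, fderiv ℝ a p (0, 1) = fderiv ℝ b p (1, 0) := by
    intro p
    have h1 : ∀ v w : ℝ × ℝ, fderiv ℝ (fun q => fderiv ℝ F q v) p w
        = fderiv ℝ (fderiv ℝ F) p w v := by
      intro v w
      have := ((hF'd p).hasFDerivAt.clm_apply (hasFDerivAt_const v p)).fderiv
      rw [this]; simp
    rw [ha, hb, h1, h1]
    exact second_derivative_symmetric (fun y => (hFd y).hasFDerivAt) (hF'd p).hasFDerivAt _ _
  have hw : ∀ τ θ : ℝ, fderiv ℝ a (τ, θ) (1, 0)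
      = Real.exp (-2 * τ) * fderiv ℝ b (τ, θ) (0, 1) := by
    intro τ θ
    have h := hwave τ θ
    have e2 : deriv (P τ) = fun t => b (τ, t) := funext fun t => hP2 τ t
    simp only [hP1] at h
    rw [e2, (gowdy_partial_fst (had (τ, θ)).hasFDerivAt).deriv,
      (gowdy_partial_snd (hbd (τ, θ)).hasFDerivAt).deriv] at h
    exact h
  have hpa : ∀ τ θ : ℝ, a (τ, θ + 2 * π) = a (τ, θ) := by
    intro τ θ
    rw [← hP1, ← hP1]; simp only [hper]
  have hpb : ∀ τ θ : ℝ, b (τ, θ + 2 * π) = b (τ, θ) := by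
    intro τ θ
    rw [← hP2, ← hP2, ← deriv_comp_add_const]
    congr 1
    exact funext (hper τ)
  simp only [hP1, hP2] at hint ⊢
  set A : ℝ × ℝ → ℝ := fun p => a p ^ 2 + Real.exp (-2 * p.1) * b p ^ 2 with hA
  set B : ℝ × ℝ → ℝ := fun p => 2 * a p * b p with hB
  have hAs : ContDiff ℝ (⊤ : ℕ∞) A :=
    (has.pow 2).add ((contDiff_const.mul contDiff_fst).exp.mul (hbs.pow 2))
  have hBs : ContDiff ℝ (⊤ : ℕ∞) B := (contDiff_const.mul has).mul hbs
  have hAd : Differentiable ℝ A := hAs.differentiable (by simp)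
  have hBd : Differentiable ℝ B := hBs.differentiable (by simp)
  have hclosed : ∀ p, fderiv ℝ A p (0, 1) = fderiv ℝ B p (1, 0) := by
    rintro ⟨τ, θ⟩
    have a2 := gowdy_partial_snd (had (τ, θ)).hasFDerivAt
    have b2 := gowdy_partial_snd (hbd (τ, θ)).hasFDerivAt
    have a1 := gowdy_partial_fst (had (τ, θ)).hasFDerivAt
    have b1 := gowdy_partial_fst (hbd (τ, θ)).hasFDerivAt
    have e1 := (gowdy_partial_snd (hAd (τ, θ)).hasFDerivAt).unique
      ((a2.pow 2).add ((b2.pow 2).const_mul (Real.exp (-2 * τ))))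
    have e2 := (gowdy_partial_fst (hBd (τ, θ)).hasFDerivAt).unique
      ((a1.const_mul 2).mul b1)
    rw [e1, e2, hsymm, hw]
    norm_num
    ring
  obtain ⟨f, hfs, hf⟩ := gowdy_poincare hAs hBs hclosed
  have hf1 : ∀ τ θ : ℝ, HasDerivAt (fun s => f (s, θ)) (A (τ, θ)) τ := by
    intro τ θ
    simpa using gowdy_partial_fst (hf (τ, θ))
  have hf2 : ∀ τ θ : ℝ, HasDerivAt (fun t => f (τ, t)) (B (τ, θ)) θ := by
    intro τ θ
    simpa using gowdy_partial_snd (hf (τ, θ))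
  have hf0 : f (0, 0 + 2 * π) - f (0, 0) = 0 := by
    have hc : Continuous fun t : ℝ => B (0, t) := hBs.continuous.comp (by fun_prop)
    have := intervalIntegral.integral_eq_sub_of_hasDerivAt (a := 0) (b := 2 * π)
      (fun t _ => hf2 0 t) (hc.intervalIntegrable _ _)
    rw [zero_add, ← this]
    simp only [hB, mul_assoc]
    rw [intervalIntegral.integral_const_mul, hint, mul_zero]
  have hpA : ∀ τ θ : ℝ, A (τ, θ + 2 * π) = A (τ, θ) := by
    intro τ θ; simp only [hA, hpa, hpb]
  have hpB : ∀ τ θ : ℝ, B (τ, θ + 2 * π) = B (τ, θ) := by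
    intro τ θ; simp only [hB, hpa, hpb]
  refine ⟨fun τ θ => f (τ, θ) - f (0, 0) + ℓ, ⟨?_, ?_, ?_, ?_, ?_⟩, ?_⟩
  · exact (hfs.sub contDiff_const).add contDiff_const
  · intro τ θ
    have := gowdy_const (g := fun τ θ => f (τ, θ + 2 * π) - f (τ, θ))
      (fun τ θ => by
        have := (hf1 τ (θ + 2 * π)).sub (hf1 τ θ)
        rw [hpA, sub_self] at this
        exact this)
      (fun τ θ => by
        have := ((hf2 τ (θ + 2 * π)).comp_add_const θ (2 * π)).sub (hf2 τ θ)
        rw [hpB, sub_self] at this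
        exact this) τ θ
    simp only [hf0] at this
    linarith
  · simp
  · intro τ θ
    exact (((hf1 τ θ).sub_const _).add_const _).deriv
  · intro τ θ
    exact (((hf2 τ θ).sub_const _).add_const _).deriv
  · rintro lam ⟨hs, -, h0, h1, h2⟩
    have hd : Differentiable ℝ (fun p : ℝ × ℝ => lam p.1 p.2) := hs.differentiable (by simp)
    have hl1 : ∀ τ θ : ℝ, HasDerivAt (fun s => lam s θ) (A (τ, θ)) τ := by
      intro τ θ
      have hx : HasDerivAt (fun s => lam s θ) (deriv (fun s => lam s θ) τ) τ :=
        (gowdy_partial_fst (hd (τ, θ)).hasFDerivAt).differentiableAt.hasDerivAt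
      rw [h1 τ θ] at hx
      exact hx
    have hl2 : ∀ τ θ : ℝ, HasDerivAt (lam τ) (B (τ, θ)) θ := by
      intro τ θ
      have hx : HasDerivAt (lam τ) (deriv (lam τ) θ) θ :=
        (gowdy_partial_snd (hd (τ, θ)).hasFDerivAt).differentiableAt.hasDerivAt
      rw [h2 τ θ] at hx
      exact hx
    funext τ θ
    have := gowdy_const (g := fun τ θ => lam τ θ - f (τ, θ))
      (fun τ θ => by
        have hx := (hl1 τ θ).sub (hf1 τ θ)
        rw [sub_self] at hx
        exact hx)
      (fun τ θ => by
        have hx := (hl2 τ θ).sub (hf2 τ θ)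
        rw [sub_self] at hx
        exact hx) τ θ
    simp only [h0] at this
    linarith
end

section
/- Let P be a smooth solution of the polarized Gowdy wave equation and let λ be a smooth 2π-periodic-in-θ function satisfying ∂τλ = (∂τP)² + e^{-2τ}(∂θP)² and ∂θλ = 2 ∂τP ∂θP. Let v be the asymptotic velocity of P, i.e. the smooth function with |∂τP(τ,θ) - v(θ)| ≤ C e^{-2τ} for τ ≥ 0. Then there exists a constant C' > 0 such that |∂τλ(τ,θ) - v(θ)²| ≤ C' e^{-2τ} for all τ ≥ 0 and all θ; consequently there is a smooth 2π-periodic μ with |λ(τ,θ) - v(θ)²τ - μ(θ)| ≤ C' e^{-2τ} for all τ ≥ 0. -/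
open Real

namespace GowdyAux

open Filter Topology

/-- Smoothness of a function of two real variables. -/
def Smooth2 (F : ℝ → ℝ → ℝ) : Prop := ContDiff ℝ (⊤ : ℕ∞) (fun p : ℝ × ℝ => F p.1 p.2)

/-- time derivative -/
noncomputable def dT (F : ℝ → ℝ → ℝ) : ℝ → ℝ → ℝ := fun τ θ => deriv (fun s => F s θ) τ

/-- space derivative -/
noncomputable def dX (F : ℝ → ℝ → ℝ) : ℝ → ℝ → ℝ := fun τ θ => deriv (F τ) θ

lemma hasT_aux {F : ℝ → ℝ → ℝ} (hF : Smooth2 F) (τ θ : ℝ) :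
    HasDerivAt (fun s => F s θ) (fderiv ℝ (fun p : ℝ × ℝ => F p.1 p.2) (τ, θ) (1, 0)) τ := by
  have h1 : HasFDerivAt (fun p : ℝ × ℝ => F p.1 p.2)
      (fderiv ℝ (fun p : ℝ × ℝ => F p.1 p.2) (τ, θ)) (τ, θ) :=
    ((ContDiff.differentiable hF (by simp)) (τ, θ)).hasFDerivAt
  have h2 : HasDerivAt (fun s : ℝ => (s, θ)) ((1 : ℝ), (0 : ℝ)) τ :=
    (hasDerivAt_id τ).prodMk (hasDerivAt_const τ θ)
  exact h1.comp_hasDerivAt (f := fun s : ℝ => (s, θ)) τ h2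

lemma hasX_aux {F : ℝ → ℝ → ℝ} (hF : Smooth2 F) (τ θ : ℝ) :
    HasDerivAt (F τ) (fderiv ℝ (fun p : ℝ × ℝ => F p.1 p.2) (τ, θ) (0, 1)) θ := by
  have h1 : HasFDerivAt (fun p : ℝ × ℝ => F p.1 p.2)
      (fderiv ℝ (fun p : ℝ × ℝ => F p.1 p.2) (τ, θ)) (τ, θ) :=
    ((ContDiff.differentiable hF (by simp)) (τ, θ)).hasFDerivAt
  have h2 : HasDerivAt (fun s : ℝ => (τ, s)) ((0 : ℝ), (1 : ℝ)) θ :=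
    (hasDerivAt_const θ τ).prodMk (hasDerivAt_id θ)
  exact h1.comp_hasDerivAt (f := fun s : ℝ => (τ, s)) θ h2

lemma dT_eq {F : ℝ → ℝ → ℝ} (hF : Smooth2 F) (τ θ : ℝ) :
    dT F τ θ = fderiv ℝ (fun p : ℝ × ℝ => F p.1 p.2) (τ, θ) (1, 0) := (hasT_aux hF τ θ).deriv

lemma dX_eq {F : ℝ → ℝ → ℝ} (hF : Smooth2 F) (τ θ : ℝ) :
    dX F τ θ = fderiv ℝ (fun p : ℝ × ℝ => F p.1 p.2) (τ, θ) (0, 1) := (hasX_aux hF τ θ).deriv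

lemma hasT {F : ℝ → ℝ → ℝ} (hF : Smooth2 F) (τ θ : ℝ) :
    HasDerivAt (fun s => F s θ) (dT F τ θ) τ := by
  rw [dT_eq hF]; exact hasT_aux hF τ θ

lemma hasX {F : ℝ → ℝ → ℝ} (hF : Smooth2 F) (τ θ : ℝ) :
    HasDerivAt (F τ) (dX F τ θ) θ := by
  rw [dX_eq hF]; exact hasX_aux hF τ θ

lemma smooth_fd {F : ℝ → ℝ → ℝ} (hF : Smooth2 F) :
    ContDiff ℝ (⊤ : ℕ∞) (fderiv ℝ (fun p : ℝ × ℝ => F p.1 p.2)) :=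
  ContDiff.fderiv_right hF (by simp)

lemma smoothT {F : ℝ → ℝ → ℝ} (hF : Smooth2 F) : Smooth2 (dT F) := by
  have : (fun p : ℝ × ℝ => dT F p.1 p.2)
      = fun p => fderiv ℝ (fun p : ℝ × ℝ => F p.1 p.2) p (1, 0) := by
    ext p; exact dT_eq hF p.1 p.2
  unfold Smooth2
  rw [this]
  exact (smooth_fd hF).clm_apply contDiff_const

lemma smoothX {F : ℝ → ℝ → ℝ} (hF : Smooth2 F) : Smooth2 (dX F) := by
  have : (fun p : ℝ × ℝ => dX F p.1 p.2)
      = fun p => fderiv ℝ (fun p : ℝ × ℝ => F p.1 p.2) p (0, 1) := by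
    ext p; exact dX_eq hF p.1 p.2
  unfold Smooth2
  rw [this]
  exact (smooth_fd hF).clm_apply contDiff_const

lemma comm {F : ℝ → ℝ → ℝ} (hF : Smooth2 F) (τ θ : ℝ) : dT (dX F) τ θ = dX (dT F) τ θ := by
  rw [dT_eq (smoothX hF), dX_eq (smoothT hF)]
  have e1 : (fun p : ℝ × ℝ => dT F p.1 p.2)
      = fun p => fderiv ℝ (fun p : ℝ × ℝ => F p.1 p.2) p (1, 0) := by
    ext p; exact dT_eq hF p.1 p.2
  have e2 : (fun p : ℝ × ℝ => dX F p.1 p.2)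
      = fun p => fderiv ℝ (fun p : ℝ × ℝ => F p.1 p.2) p (0, 1) := by
    ext p; exact dX_eq hF p.1 p.2
  rw [e1, e2]
  have hd : DifferentiableAt ℝ (fderiv ℝ (fun p : ℝ × ℝ => F p.1 p.2)) (τ, θ) :=
    (smooth_fd hF).differentiable (by simp) _
  have key : ∀ u : ℝ × ℝ, fderiv ℝ (fun p => fderiv ℝ (fun p : ℝ × ℝ => F p.1 p.2) p u) (τ, θ)
      = (fderiv ℝ (fderiv ℝ (fun p : ℝ × ℝ => F p.1 p.2)) (τ, θ)).flip u := by
    intro u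
    rw [fderiv_clm_apply hd (differentiableAt_const u)]
    simp
  rw [key, key]
  simp only [ContinuousLinearMap.flip_apply]
  exact (ContDiffAt.isSymmSndFDerivAt (ContDiff.contDiffAt hF) (by
    rw [minSmoothness_of_isRCLikeNormedField]; exact WithTop.coe_le_coe.2 (le_top : (2 : ℕ∞) ≤ ⊤))) _ _

/-- smooth periodic solutions of the polarized Gowdy wave equation -/
structure Wv (F : ℝ → ℝ → ℝ) : Prop where
  sm : Smooth2 F
  per : ∀ τ θ, F τ (θ + 2 * π) = F τ θ
  wave : ∀ τ θ, dT (dT F) τ θ = exp (-2 * τ) * dX (dX F) τ θ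

lemma perX {F : ℝ → ℝ → ℝ} (h : ∀ τ θ, F τ (θ + 2 * π) = F τ θ) (τ θ : ℝ) :
    dX F τ (θ + 2 * π) = dX F τ θ := by
  unfold dX
  rw [← deriv_comp_add_const (F τ) (2 * π) θ]
  congr 1
  ext x; exact h τ x

lemma perT {F : ℝ → ℝ → ℝ} (h : ∀ τ θ, F τ (θ + 2 * π) = F τ θ) (τ θ : ℝ) :
    dT F τ (θ + 2 * π) = dT F τ θ := by
  unfold dT
  congr 1
  ext x; exact h x θ

lemma Wv.X {F : ℝ → ℝ → ℝ} (h : Wv F) : Wv (dX F) where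
  sm := smoothX h.sm
  per := perX h.per
  wave := by
    intro τ θ
    have e : dT (dX F) = dX (dT F) := by ext τ θ; exact comm h.sm τ θ
    rw [e, comm (smoothT h.sm)]
    have e2 : dT (dT F) τ = fun θ => exp (-2 * τ) * dX (dX F) τ θ := by
      ext θ; exact h.wave τ θ
    have h3 := (hasX (smoothX (smoothX h.sm)) τ θ).const_mul (exp (-2 * τ))
    show deriv (dT (dT F) τ) θ = _
    rw [e2]
    exact h3.deriv

lemma Wv.sub_lin {F : ℝ → ℝ → ℝ} (h : Wv F) (c : ℝ) :
    Wv (fun τ θ => F τ θ - c * τ) ∧ dT (fun τ θ => F τ θ - c * τ) = (fun τ θ => dT F τ θ - c)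
      ∧ dX (fun τ θ => F τ θ - c * τ) = dX F := by
  have eT : dT (fun τ θ => F τ θ - c * τ) = fun τ θ => dT F τ θ - c := by
    ext τ θ
    have := (hasT h.sm τ θ).sub ((hasDerivAt_id τ).const_mul c)
    simp only [mul_one] at this
    exact this.deriv
  have eX : dX (fun τ θ => F τ θ - c * τ) = dX F := by
    ext τ θ
    exact ((hasX h.sm τ θ).sub_const (c * τ)).deriv
  refine ⟨⟨?_, ?_, ?_⟩, eT, eX⟩
  · exact ContDiff.sub h.sm (contDiff_const.mul contDiff_fst)
  · intro τ θ; simp only [h.per]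
  · intro τ θ
    rw [eT, eX, ← h.wave]
    exact ((hasT (smoothT h.sm) τ θ).sub_const c).deriv

lemma Wv.neg {F : ℝ → ℝ → ℝ} (h : Wv F) :
    Wv (fun τ θ => - F τ θ) ∧ dT (fun τ θ => - F τ θ) = (fun τ θ => - dT F τ θ) := by
  have eT : ∀ G : ℝ → ℝ → ℝ, Smooth2 G → dT (fun τ θ => - G τ θ) = fun τ θ => - dT G τ θ := by
    intro G hG
    ext τ θ
    exact (hasT hG τ θ).neg.deriv
  have eX : ∀ G : ℝ → ℝ → ℝ, Smooth2 G → dX (fun τ θ => - G τ θ) = fun τ θ => - dX G τ θ := by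
    intro G hG
    ext τ θ
    exact (hasX hG τ θ).neg.deriv
  refine ⟨⟨?_, ?_, ?_⟩, eT F h.sm⟩
  · exact ContDiff.neg h.sm
  · intro τ θ; simp only [h.per]
  · intro τ θ
    rw [eT F h.sm, eT _ (smoothT h.sm), eX F h.sm, eX _ (smoothX h.sm)]
    simp only [h.wave]
    ring

lemma exists_rep {E : Type*} (f : ℝ → E) (h : ∀ θ, f (θ + 2 * π) = f θ) (θ : ℝ) :
    ∃ y ∈ Set.Icc (0 : ℝ) (2 * π), f θ = f y := by
  obtain ⟨y, hy, e⟩ := Function.Periodic.exists_mem_Ico₀ (f := f) h (by positivity) θ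
  exact ⟨y, ⟨hy.1, hy.2.le⟩, e⟩

lemma bdd_of_per (f : ℝ → ℝ) (hc : Continuous f) (h : ∀ θ, f (θ + 2 * π) = f θ) :
    ∃ M, 0 < M ∧ ∀ θ, |f θ| ≤ M := by
  obtain ⟨M, hM⟩ := (isCompact_Icc (a := (0 : ℝ)) (b := 2 * π)).exists_bound_of_continuousOn
    hc.continuousOn
  refine ⟨|M| + 1, by positivity, fun θ => ?_⟩
  obtain ⟨y, hy, e⟩ := exists_rep f h θ
  rw [e]
  have := hM y hy
  rw [Real.norm_eq_abs] at this
  linarith [le_abs_self M]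

lemma left_deriv_nonneg {f : ℝ → ℝ} {d t : ℝ} (hf : HasDerivAt f d t) (ht : 0 < t)
    (hmax : ∀ s, 0 ≤ s → s ≤ t → f s ≤ f t) : 0 ≤ d := by
  have h := (hasDerivAt_iff_tendsto_slope_left_right.1 hf).1
  refine ge_of_tendsto h ?_
  filter_upwards [Ioo_mem_nhdsLT ht] with s hs
  rw [slope_def_field]
  exact div_nonneg_of_nonpos (by linarith [hmax s hs.1.le hs.2.le]) (by linarith [hs.2])

lemma cont2 {F : ℝ → ℝ → ℝ} (hF : Smooth2 F) : Continuous (fun p : ℝ × ℝ => F p.1 p.2) :=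
  ContDiff.continuous hF

lemma max_principle {F : ℝ → ℝ → ℝ} (h : Wv F) :
    ∃ M, 0 < M ∧ ∀ τ, 0 ≤ τ → ∀ θ, dT F τ θ ≤ M := by
  have hcT := cont2 (smoothT h.sm)
  have hcX := cont2 (smoothX h.sm)
  have hpT := perT h.per
  have hpX := perX h.per
  obtain ⟨M, hM0, hM⟩ := bdd_of_per (fun θ => dT F 0 θ + |dX F 0 θ|)
    (by
      have h1 : Continuous fun θ : ℝ => dT F 0 θ := hcT.comp (Continuous.prodMk_right (0 : ℝ))
      have h2 : Continuous fun θ : ℝ => dX F 0 θ := hcX.comp (Continuous.prodMk_right (0 : ℝ))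
      exact h1.add h2.abs)
    (by intro θ; simp only [hpT, hpX])
  refine ⟨M, hM0, fun T hT θ => ?_⟩
  -- it suffices to prove the bound up to ε
  suffices H : ∀ ε > 0, dT F T θ ≤ M + ε * T by
    refine le_of_forall_pos_le_add fun δ hδ => ?_
    have := H (δ / (T + 1)) (by positivity)
    have h2 : δ / (T + 1) * T ≤ δ := by
      rw [div_mul_eq_mul_div, div_le_iff₀ (by positivity)]
      nlinarith
    linarith
  intro ε hε
  set N : ℝ × ℝ → ℝ := fun p => dT F p.1 p.2 + exp (-p.1) * |dX F p.1 p.2| - ε * p.1 with hN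
  have hNc : Continuous N := by
    have : Continuous fun p : ℝ × ℝ => exp (-p.1) := by fun_prop
    exact (hcT.add (this.mul hcX.abs)).sub (continuous_const.mul continuous_fst)
  obtain ⟨p, hp, hpm⟩ := ((isCompact_Icc (a := (0 : ℝ)) (b := T)).prod
    (isCompact_Icc (a := (0 : ℝ)) (b := 2 * π))).exists_isMaxOn
    ⟨(0, 0), ⟨⟨le_rfl, hT⟩, ⟨le_rfl, by positivity⟩⟩⟩ hNc.continuousOn
  obtain ⟨τ0, θ0⟩ := p
  have hall : ∀ s, 0 ≤ s → s ≤ T → ∀ x, N (s, x) ≤ N (τ0, θ0) := by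
    intro s hs hs' x
    obtain ⟨y, hy, e⟩ := exists_rep (fun x => N (s, x)) (by
      intro x; simp only [hN, hpT, hpX]) x
    have := hpm (show (s, y) ∈ Set.Icc 0 T ×ˢ Set.Icc 0 (2 * π) from ⟨⟨hs, hs'⟩, hy⟩)
    rw [e]
    exact this
  have hτ0 : 0 ≤ τ0 := hp.1.1
  have hτT : τ0 ≤ T := hp.1.2
  have hfin := hall T hT le_rfl θ
  have hnn : 0 ≤ exp (-T) * |dX F T θ| := by positivity
  rcases hτ0.eq_or_lt with h0 | h0
  · have := hM θ0
    have h3 := le_abs_self (dT F 0 θ0 + |dX F 0 θ0|)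
    subst h0
    simp only [hN, neg_zero, exp_zero, one_mul, mul_zero, sub_zero] at hfin
    linarith
  · exfalso
    obtain ⟨σ, hσ2, hσ⟩ : ∃ σ : ℝ, σ * σ = 1 ∧ σ * dX F τ0 θ0 = |dX F τ0 θ0| := by
      rcases le_total 0 (dX F τ0 θ0) with hh | hh
      · exact ⟨1, by norm_num, by rw [abs_of_nonneg hh]; ring⟩
      · exact ⟨-1, by norm_num, by rw [abs_of_nonpos hh]; ring⟩
    have hσle : ∀ x, σ * x ≤ |x| := by
      intro x
      have : |σ| = 1 := by
        have : |σ| * |σ| = 1 := by rw [← abs_mul, hσ2, abs_one]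
        nlinarith [abs_nonneg σ]
      calc σ * x ≤ |σ * x| := le_abs_self _
        _ = |x| := by rw [abs_mul, this, one_mul]
    set A : ℝ → ℝ → ℝ := fun s x => dT F s x + exp (-s) * (σ * dX F s x) - ε * s with hA
    have hAN : ∀ s x, A s x ≤ N (s, x) := by
      intro s x
      have := mul_le_mul_of_nonneg_left (hσle (dX F s x)) (exp_pos (-s)).le
      simp only [hA, hN]; linarith
    have hA0 : A τ0 θ0 = N (τ0, θ0) := by simp only [hA, hN, hσ]
    have hAmax : ∀ s, 0 ≤ s → s ≤ T → ∀ x, A s x ≤ A τ0 θ0 := by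
      intro s hs hs' x; rw [hA0]; exact (hAN s x).trans (hall s hs hs' x)
    have hdx : HasDerivAt (A τ0) (dX (dT F) τ0 θ0 + exp (-τ0) * (σ * dX (dX F) τ0 θ0)) θ0 :=
      ((hasX (smoothT h.sm) τ0 θ0).add
        (((hasX (smoothX h.sm) τ0 θ0).const_mul σ).const_mul (exp (-τ0)))).sub_const (ε * τ0)
    have hx0 : dX (dT F) τ0 θ0 + exp (-τ0) * (σ * dX (dX F) τ0 θ0) = 0 := by
      have : IsLocalMax (A τ0) θ0 := Eventually.of_forall (hAmax τ0 hτ0 hτT)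
      exact this.hasDerivAt_eq_zero hdx
    have hexp : HasDerivAt (fun s : ℝ => exp (-s)) (-exp (-τ0)) τ0 := by
      simpa using (hasDerivAt_neg τ0).exp
    have hdt : HasDerivAt (fun s => A s θ0)
        (dT (dT F) τ0 θ0 + (-exp (-τ0) * (σ * dX F τ0 θ0)
          + exp (-τ0) * (σ * dT (dX F) τ0 θ0)) - ε * 1) τ0 :=
      ((hasT (smoothT h.sm) τ0 θ0).add
        (hexp.mul ((hasT (smoothX h.sm) τ0 θ0).const_mul σ))).sub
        ((hasDerivAt_id τ0).const_mul ε)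
    have hge := left_deriv_nonneg hdt h0 (fun s hs hs' => hAmax s hs (hs'.trans hτT) θ0)
    rw [h.wave, comm h.sm, hσ] at hge
    have he : exp (-2 * τ0) = exp (-τ0) * exp (-τ0) := by rw [← exp_add]; ring_nf
    have hx1 : exp (-τ0) * σ * (dX (dT F) τ0 θ0 + exp (-τ0) * (σ * dX (dX F) τ0 θ0)) = 0 := by
      rw [hx0, mul_zero]
    have hx2 : exp (-τ0) * (σ * dX (dT F) τ0 θ0) + exp (-2 * τ0) * dX (dX F) τ0 θ0 = 0 := by
      rw [he]
      linear_combination hx1 - exp (-τ0) * exp (-τ0) * dX (dX F) τ0 θ0 * hσ2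
    have : 0 ≤ exp (-τ0) * |dX F τ0 θ0| := by positivity
    linarith

lemma dT_bdd {F : ℝ → ℝ → ℝ} (h : Wv F) :
    ∃ M, 0 < M ∧ ∀ τ, 0 ≤ τ → ∀ θ, |dT F τ θ| ≤ M := by
  obtain ⟨M1, h1, hM1⟩ := max_principle h
  obtain ⟨M2, h2, hM2⟩ := max_principle h.neg.1
  rw [h.neg.2] at hM2
  refine ⟨M1 + M2, by positivity, fun τ hτ θ => abs_le.2 ⟨?_, ?_⟩⟩
  · have := hM2 τ hτ θ
    simp only at this
    linarith
  · linarith [hM1 τ hτ θ]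

lemma F_growth {F : ℝ → ℝ → ℝ} (h : Wv F) :
    ∃ M, 0 < M ∧ ∀ τ, 0 ≤ τ → ∀ θ, |F τ θ| ≤ M * (1 + τ) := by
  obtain ⟨M1, h1, hM1⟩ := dT_bdd h
  obtain ⟨M2, h2, hM2⟩ := bdd_of_per (F 0)
    ((cont2 h.sm).comp (Continuous.prodMk_right (0 : ℝ))) (h.per 0)
  refine ⟨M1 + M2, by positivity, fun τ hτ θ => ?_⟩
  have hd : ∀ s ∈ Set.Icc (0 : ℝ) τ, HasDerivWithinAt (fun s => F s θ) (dT F s θ)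
      (Set.Icc 0 τ) s := fun s _ => (hasT h.sm s θ).hasDerivWithinAt
  have := (convex_Icc (0 : ℝ) τ).norm_image_sub_le_of_norm_hasDerivWithin_le hd
    (fun s hs => hM1 s hs.1 θ) (Set.left_mem_Icc.2 hτ) (Set.right_mem_Icc.2 hτ)
  simp only [Real.norm_eq_abs, sub_zero, abs_of_nonneg hτ] at this
  have h4 := abs_sub_abs_le_abs_sub (F τ θ) (F 0 θ)
  nlinarith [hM2 θ, mul_nonneg h2.le hτ]

lemma exists_lim {f f' : ℝ → ℝ} {K a : ℝ} (ha : 0 < a)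
    (hf : ∀ s, HasDerivAt f (f' s) s) (hb : ∀ s, 0 ≤ s → |f' s| ≤ K * exp (-a * s)) :
    ∃ L, ∀ s, 0 ≤ s → |f s - L| ≤ K / a * exp (-a * s) := by
  have hexp : ∀ s, HasDerivAt (fun s : ℝ => K / a * exp (-a * s)) (-(K * exp (-a * s))) s := by
    intro s
    have : HasDerivAt (fun s : ℝ => K / a * exp (-a * s)) (K / a * (exp (-a * s) * (-a * 1))) s :=
      ((((hasDerivAt_id s).const_mul (-a))).exp).const_mul (K / a)
    convert this using 1
    field_simp
  have hK : 0 ≤ K := by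
    have := (abs_nonneg _).trans (hb 0 le_rfl)
    simpa using this
  have hu : AntitoneOn (fun s => f s + K / a * exp (-a * s)) (Set.Ici 0) := by
    refine antitoneOn_of_deriv_nonpos (convex_Ici 0)
      (fun s _ => ((hf s).add (hexp s)).continuousAt.continuousWithinAt)
      (fun s _ => ((hf s).add (hexp s)).differentiableAt.differentiableWithinAt) ?_
    intro s hs
    rw [interior_Ici] at hs
    rw [show deriv (fun s => f s + K / a * exp (-a * s)) s = _ from ((hf s).add (hexp s)).deriv]
    linarith [(abs_le.1 (hb s (le_of_lt hs))).2]
  have hl : MonotoneOn (fun s => f s - K / a * exp (-a * s)) (Set.Ici 0) := by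
    refine monotoneOn_of_deriv_nonneg (convex_Ici 0)
      (fun s _ => ((hf s).sub (hexp s)).continuousAt.continuousWithinAt)
      (fun s _ => ((hf s).sub (hexp s)).differentiableAt.differentiableWithinAt) ?_
    intro s hs
    rw [interior_Ici] at hs
    rw [show deriv (fun s => f s - K / a * exp (-a * s)) s = _ from ((hf s).sub (hexp s)).deriv]
    linarith [(abs_le.1 (hb s (le_of_lt hs))).1]
  have hlu : ∀ s t, 0 ≤ s → 0 ≤ t →
      f s - K / a * exp (-a * s) ≤ f t + K / a * exp (-a * t) := by
    intro s t hs ht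
    have h1 := hl (Set.mem_Ici.2 hs) (Set.mem_Ici.2 (hs.trans (le_max_left s t))) (le_max_left s t)
    have h2 := hu (Set.mem_Ici.2 ht) (Set.mem_Ici.2 (ht.trans (le_max_right s t)))
      (le_max_right s t)
    simp only at h1 h2
    have : 0 ≤ K / a * exp (-a * max s t) := by positivity
    linarith
  refine ⟨sSup ((fun s => f s - K / a * exp (-a * s)) '' Set.Ici 0), fun s hs => ?_⟩
  have b1 : f s - K / a * exp (-a * s) ≤ sSup ((fun s => f s - K / a * exp (-a * s)) '' Set.Ici 0) := by
    refine le_csSup ⟨f 0 + K / a * exp (-a * 0), ?_⟩ ⟨s, hs, rfl⟩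
    rintro _ ⟨t, ht, rfl⟩
    exact hlu t 0 ht le_rfl
  have b2 : sSup ((fun s => f s - K / a * exp (-a * s)) '' Set.Ici 0) ≤ f s + K / a * exp (-a * s) := by
    refine csSup_le ⟨_, ⟨0, Set.self_mem_Ici, rfl⟩⟩ ?_
    rintro _ ⟨t, ht, rfl⟩
    exact hlu t s ht hs
  rw [abs_le]
  constructor <;> linarith

lemma exists_velocity {F : ℝ → ℝ → ℝ} (h : Wv F) :
    ∃ (w : ℝ → ℝ) (K : ℝ), ∀ τ, 0 ≤ τ → ∀ θ, |dT F τ θ - w θ| ≤ K * exp (-τ) := by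
  obtain ⟨M, hM0, hM⟩ := F_growth h.X.X
  have hb : ∀ θ s, 0 ≤ s → |dT (dT F) s θ| ≤ M * exp (-1 * s) := by
    intro θ s hs
    rw [h.wave, abs_mul, abs_of_pos (exp_pos _)]
    have h1 := hM s hs θ
    have h2 : 1 + s ≤ exp s := by linarith [add_one_le_exp s]
    calc exp (-2 * s) * |dX (dX F) s θ| ≤ exp (-2 * s) * (M * exp s) := by
          gcongr
          exact h1.trans (by gcongr)
      _ = M * exp (-1 * s) := by
          rw [show -1 * s = -2 * s + s by ring, exp_add]; ring
  choose w hw using fun θ => exists_lim one_pos (fun s => hasT (smoothT h.sm) s θ) (hb θ)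
  refine ⟨w, M, fun τ hτ θ => ?_⟩
  have := hw θ τ hτ
  simpa using this

lemma tendsto_of_exp {f : ℝ → ℝ} {L K : ℝ} (h : ∀ s, 0 ≤ s → |f s - L| ≤ K * exp (-s)) :
    Tendsto f atTop (𝓝 L) := by
  have h0 : Tendsto (fun s : ℝ => K * exp (-s)) atTop (𝓝 0) := by
    simpa using (tendsto_exp_neg_atTop_nhds_zero).const_mul K
  rw [tendsto_iff_dist_tendsto_zero]
  refine squeeze_zero' (Eventually.of_forall fun _ => dist_nonneg) ?_ h0
  filter_upwards [eventually_ge_atTop 0] with s hs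
  rw [Real.dist_eq]; exact h s hs

lemma deriv_lim {f g : ℝ → ℝ → ℝ} {f0 g0 : ℝ → ℝ} {K1 K2 : ℝ}
    (hd : ∀ τ θ, HasDerivAt (f τ) (g τ θ) θ)
    (hf : ∀ τ, 0 ≤ τ → ∀ θ, |f τ θ - f0 θ| ≤ K1 * exp (-τ))
    (hg : ∀ τ, 0 ≤ τ → ∀ θ, |g τ θ - g0 θ| ≤ K2 * exp (-τ)) (θ : ℝ) :
    HasDerivAt f0 (g0 θ) θ := by
  have h0 : Tendsto (fun s : ℝ => K2 * exp (-s)) atTop (𝓝 0) := by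
    simpa using (tendsto_exp_neg_atTop_nhds_zero).const_mul K2
  refine hasDerivAt_of_tendstoUniformly (l := atTop) (f := f) (f' := g) ?_
    (Eventually.of_forall hd) (fun x => tendsto_of_exp fun s hs => hf s hs x) θ
  rw [Metric.tendstoUniformly_iff]
  intro ε hε
  filter_upwards [eventually_ge_atTop 0, h0.eventually_lt_const hε] with s hs hs2 x
  rw [dist_comm, Real.dist_eq]
  exact (hg s hs x).trans_lt hs2

/-- solutions with vanishing asymptotic velocity -/
def Z (F : ℝ → ℝ → ℝ) : Prop :=
  Wv F ∧ ∃ K, ∀ τ, 0 ≤ τ → ∀ θ, |dT F τ θ| ≤ K * exp (-τ)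

lemma Z.X {F : ℝ → ℝ → ℝ} (h : Z F) : Z (dX F) := by
  obtain ⟨hW, K, hK⟩ := h
  obtain ⟨w, K2, hw⟩ := exists_velocity hW.X
  have hd := deriv_lim (f := dT F) (g := dX (dT F)) (f0 := fun _ => 0) (g0 := w)
    (fun τ θ => hasX (smoothT hW.sm) τ θ) (by simpa using hK)
    (by intro τ hτ θ; rw [← comm hW.sm]; exact hw τ hτ θ)
  have hw0 : ∀ θ, w θ = 0 := fun θ => (hd θ).unique (hasDerivAt_const θ 0)
  refine ⟨hW.X, K2, fun τ hτ θ => ?_⟩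
  simpa [hw0] using hw τ hτ θ

lemma Z.lim {F : ℝ → ℝ → ℝ} (h : Z F) :
    ∃ (φ : ℝ → ℝ) (K : ℝ), ∀ τ, 0 ≤ τ → ∀ θ, |F τ θ - φ θ| ≤ K * exp (-τ) := by
  obtain ⟨hW, K, hK⟩ := h
  choose φ hφ using fun θ => exists_lim (K := K) one_pos (fun s => hasT hW.sm s θ)
    (fun s hs => by simpa using hK s hs θ)
  exact ⟨φ, K, fun τ hτ θ => by simpa using hφ θ τ hτ⟩

lemma Z.lim_smooth (n : ℕ) : ∀ {F : ℝ → ℝ → ℝ} (_ : Z F) {φ : ℝ → ℝ} {K : ℝ}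
    (_ : ∀ τ, 0 ≤ τ → ∀ θ, |F τ θ - φ θ| ≤ K * exp (-τ)), ContDiff ℝ n φ := by
  induction n with
  | zero =>
    intro F h φ K hφ
    obtain ⟨ψ, K2, hψ⟩ := h.X.lim
    have hd := deriv_lim (fun τ θ => hasX h.1.sm τ θ) hφ hψ
    simp only [Nat.cast_zero]
    exact contDiff_zero.2 (continuous_iff_continuousAt.2 fun x => (hd x).continuousAt)
  | succ n ih =>
    intro F h φ K hφ
    obtain ⟨ψ, K2, hψ⟩ := h.X.lim
    have hd := deriv_lim (fun τ θ => hasX h.1.sm τ θ) hφ hψ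
    have he : deriv φ = ψ := funext fun x => (hd x).deriv
    push_cast
    rw [contDiff_succ_iff_deriv]
    refine ⟨fun x => (hd x).differentiableAt, by simp, ?_⟩
    rw [he]
    exact ih h.X hψ

lemma Z.lim_contDiff {F : ℝ → ℝ → ℝ} (h : Z F) {φ : ℝ → ℝ} {K : ℝ}
    (hφ : ∀ τ, 0 ≤ τ → ∀ θ, |F τ θ - φ θ| ≤ K * exp (-τ)) : ContDiff ℝ (⊤ : ℕ∞) φ :=
  contDiff_infty.2 fun n => Z.lim_smooth n h hφ

lemma Z.bdd {F : ℝ → ℝ → ℝ} (h : Z F) : ∃ M, 0 < M ∧ ∀ τ, 0 ≤ τ → ∀ θ, |F τ θ| ≤ M := by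
  obtain ⟨φ, K, hφ⟩ := h.lim
  obtain ⟨M, hM0, hM⟩ := bdd_of_per (F 0)
    ((cont2 h.1.sm).comp (Continuous.prodMk_right (0 : ℝ))) (h.1.per 0)
  have hK : 0 ≤ K := by
    have := (abs_nonneg _).trans (hφ 0 le_rfl 0)
    simpa using this
  refine ⟨M + 2 * K, by positivity, fun τ hτ θ => ?_⟩
  have h1 := abs_le.1 (hφ τ hτ θ)
  have h2 := abs_le.1 (hφ 0 le_rfl θ)
  have h3 := abs_le.1 (hM θ)
  have h4 : K * exp (-τ) ≤ K := by
    have : exp (-τ) ≤ 1 := exp_le_one_iff.2 (by linarith)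
    nlinarith
  simp only [neg_zero, exp_zero, mul_one] at h2
  rw [abs_le]
  constructor <;> linarith [h1.1, h1.2, h2.1, h2.2, h3.1, h3.2]

lemma w_nonpos {h G : ℝ → ℝ} {v w C K : ℝ} (hd : ∀ s, HasDerivAt h (exp (-2 * s) * G s) s)
    (hv : ∀ s, 0 ≤ s → |h s - v| ≤ C * exp (-2 * s)) (hG : ∀ s, 0 ≤ s → |G s - w * s| ≤ K) :
    w ≤ 0 := by
  by_contra hw
  push Not at hw
  set N := 2 * (C + 1) with hN
  have hC : 0 ≤ C := by
    have := (abs_nonneg _).trans (hv 0 le_rfl)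
    simpa using this
  have hK : 0 ≤ K := (abs_nonneg _).trans (hG 0 le_rfl)
  set S := (N + K) / w with hS
  have hS0 : 0 ≤ S := by positivity
  have hexp : ∀ s, HasDerivAt (fun s : ℝ => (C + 1) * exp (-2 * s)) (-(N * exp (-2 * s))) s := by
    intro s
    have : HasDerivAt (fun s : ℝ => (C + 1) * exp (-2 * s))
        ((C + 1) * (exp (-2 * s) * (-2 * 1))) s :=
      ((((hasDerivAt_id s).const_mul (-2))).exp).const_mul (C + 1)
    convert this using 1
    ring
  have hmono : MonotoneOn (fun s => h s + (C + 1) * exp (-2 * s)) (Set.Ici S) := by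
    refine monotoneOn_of_deriv_nonneg (convex_Ici S)
      (fun s _ => ((hd s).add (hexp s)).continuousAt.continuousWithinAt)
      (fun s _ => ((hd s).add (hexp s)).differentiableAt.differentiableWithinAt) ?_
    intro s hs
    rw [interior_Ici] at hs
    rw [show deriv (fun s => h s + (C + 1) * exp (-2 * s)) s = _ from
      ((hd s).add (hexp s)).deriv]
    have hs' : S < s := hs
    have h1 := (abs_le.1 (hG s (hS0.trans hs'.le))).1
    have h2 : N + K ≤ w * s := by
      rw [hS, div_lt_iff₀ hw] at hs'
      linarith
    have : 0 ≤ exp (-2 * s) * (G s - N) := mul_nonneg (exp_pos _).le (by linarith)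
    linarith
  have hlim : Tendsto (fun s => h s + (C + 1) * exp (-2 * s)) atTop (𝓝 v) := by
    refine tendsto_of_exp (K := 2 * C + 1) fun s hs => ?_
    have h1 := abs_le.1 (hv s hs)
    have h2 : exp (-2 * s) ≤ exp (-s) := exp_le_exp.2 (by linarith)
    have h3 := exp_pos (-2 * s)
    rw [abs_le]
    constructor <;> nlinarith [h1.1, h1.2]
  have hle : h S + (C + 1) * exp (-2 * S) ≤ v := by
    refine ge_of_tendsto hlim ?_
    filter_upwards [eventually_ge_atTop S] with s hs
    exact hmono Set.self_mem_Ici hs hs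
  have := (abs_le.1 (hv S hS0)).1
  have := exp_pos (-2 * S)
  linarith

lemma velocity_const {P : ℝ → ℝ → ℝ} (h : Wv P) {v : ℝ → ℝ} {C : ℝ} (hC : 0 < C)
    (hvel : ∀ τ, 0 ≤ τ → ∀ θ, |dT P τ θ - v θ| ≤ C * exp (-2 * τ)) : ∀ θ, v θ = v 0 := by
  have hvel1 : ∀ τ, 0 ≤ τ → ∀ θ, |dT P τ θ - v θ| ≤ C * exp (-τ) := by
    intro τ hτ θ
    refine (hvel τ hτ θ).trans ?_
    gcongr
    linarith
  obtain ⟨w1, K1, hw1⟩ := exists_velocity h.X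
  obtain ⟨w, K, hw⟩ := exists_velocity h.X.X
  have hd1 := deriv_lim (f := dT P) (g := dX (dT P)) (fun τ θ => hasX (smoothT h.sm) τ θ) hvel1
    (by intro τ hτ θ; rw [← comm h.sm]; exact hw1 τ hτ θ)
  have hd2 := deriv_lim (f := dT (dX P)) (g := dX (dT (dX P)))
    (fun τ θ => hasX (smoothT h.X.sm) τ θ) hw1
    (by intro τ hτ θ; rw [← comm h.X.sm]; exact hw τ hτ θ)
  have hw0 : ∀ θ, w θ = 0 := by
    intro θ
    obtain ⟨L, hL⟩ := exists_lim (K := K) one_pos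
      (fun s => (hasT h.X.X.sm s θ).sub ((hasDerivAt_id s).const_mul (w θ)))
      (fun s hs => by simpa using hw s hs θ)
    have hK0 : 0 ≤ K := by
      have := (abs_nonneg _).trans (hw 0 le_rfl 0)
      simpa using this
    have hG : ∀ s, 0 ≤ s → |dX (dX P) s θ - w θ * s| ≤ K + |L| := by
      intro s hs
      have h1 : |dX (dX P) s θ - w θ * s - L| ≤ K * exp (-s) := by simpa using hL s hs
      have h2 : exp (-s) ≤ 1 := exp_le_one_iff.2 (by linarith)
      have h3 := abs_sub_abs_le_abs_sub (dX (dX P) s θ - w θ * s) L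
      nlinarith
    have hd : ∀ s, HasDerivAt (fun s => dT P s θ) (exp (-2 * s) * dX (dX P) s θ) s := by
      intro s; rw [← h.wave]; exact hasT (smoothT h.sm) s θ
    have a1 := w_nonpos hd (fun s hs => hvel s hs θ) hG
    have a2 : -w θ ≤ 0 := by
      refine w_nonpos (h := fun s => - dT P s θ) (G := fun s => - dX (dX P) s θ) (v := - v θ)
        (C := C) (K := K + |L|) (fun s => ?_) (fun s hs => ?_) (fun s hs => ?_)
      · have := (hd s).neg
        rw [mul_neg]; exact this
      · rw [← abs_neg]
        convert hvel s hs θ using 2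
        ring
      · rw [← abs_neg]
        convert hG s hs using 2
        ring
    linarith
  have hc1 : ∀ θ, w1 θ = w1 0 := fun θ =>
    is_const_of_deriv_eq_zero (fun x => (hd2 x).differentiableAt)
      (fun x => by rw [(hd2 x).deriv, hw0]) θ 0
  have hlin : ∀ θ, v θ - w1 0 * θ = v 0 - w1 0 * 0 := by
    have hd : ∀ x, HasDerivAt (fun θ => v θ - w1 0 * θ) (w1 x - w1 0 * 1) x := fun x =>
      (hd1 x).sub ((hasDerivAt_id x).const_mul (w1 0))
    intro θ
    exact is_const_of_deriv_eq_zero (f := fun θ => v θ - w1 0 * θ)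
      (fun x => (hd x).differentiableAt)
      (fun x => by rw [(hd x).deriv, hc1 x]; ring) θ 0
  have hper : v (0 + 2 * π) = v 0 := by
    refine tendsto_nhds_unique (tendsto_of_exp fun s hs => hvel1 s hs (0 + 2 * π)) ?_
    simp only [perT h.per]
    exact tendsto_of_exp fun s hs => hvel1 s hs 0
  have hz : w1 0 = 0 := by
    have h1 := hlin (0 + 2 * π)
    rw [hper] at h1
    have h2 : w1 0 * (2 * π) = 0 := by linarith
    rcases mul_eq_zero.1 h2 with h3 | h3
    · exact h3
    · exact absurd h3 (by positivity)
  intro θ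
  have := hlin θ
  rw [hz] at this
  linarith

end GowdyAux

/-- AVTD behavior of the polarized Gowdy metric function `λ`: if `v` is the asymptotic
velocity of `P`, then `∂τλ → v²` exponentially, and `λ(τ,θ) - v(θ)²τ` converges
exponentially to a smooth 2π-periodic function `μ`. -/
theorem polarized_gowdy_lambda_avtd
    (P : ℝ → ℝ → ℝ)
    (hsmooth : ContDiff ℝ (⊤ : ℕ∞) (fun p : ℝ × ℝ => P p.1 p.2))
    (hper : ∀ τ θ : ℝ, P τ (θ + 2 * π) = P τ θ)
    (hwave : ∀ τ θ : ℝ, deriv (fun s => deriv (fun s' => P s' θ) s) τ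
      = Real.exp (-2 * τ) * deriv (deriv (P τ)) θ)
    (lam : ℝ → ℝ → ℝ)
    (hlsmooth : ContDiff ℝ (⊤ : ℕ∞) (fun p : ℝ × ℝ => lam p.1 p.2))
    (hlper : ∀ τ θ : ℝ, lam τ (θ + 2 * π) = lam τ θ)
    (hltau : ∀ τ θ : ℝ, deriv (fun s => lam s θ) τ
      = (deriv (fun s => P s θ) τ) ^ 2 + Real.exp (-2 * τ) * (deriv (P τ) θ) ^ 2)
    (hltheta : ∀ τ θ : ℝ, deriv (lam τ) θ = 2 * deriv (fun s => P s θ) τ * deriv (P τ) θ)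
    (v : ℝ → ℝ) (hv : ContDiff ℝ (⊤ : ℕ∞) v)
    (C : ℝ) (hC : 0 < C)
    (hvel : ∀ τ : ℝ, 0 ≤ τ → ∀ θ : ℝ,
      |deriv (fun s => P s θ) τ - v θ| ≤ C * Real.exp (-2 * τ)) :
    ∃ C' : ℝ, 0 < C' ∧
      (∀ τ : ℝ, 0 ≤ τ → ∀ θ : ℝ,
        |deriv (fun s => lam s θ) τ - (v θ) ^ 2| ≤ C' * Real.exp (-2 * τ)) ∧
      ∃ μ : ℝ → ℝ, ContDiff ℝ (⊤ : ℕ∞) μ ∧ (∀ θ : ℝ, μ (θ + 2 * π) = μ θ) ∧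
        ∀ τ : ℝ, 0 ≤ τ → ∀ θ : ℝ,
          |lam τ θ - (v θ) ^ 2 * τ - μ θ| ≤ C' * Real.exp (-2 * τ) := by
  have hW : GowdyAux.Wv P := ⟨hsmooth, hper, hwave⟩
  have hcst := GowdyAux.velocity_const hW hC hvel
  obtain ⟨c, hc⟩ : ∃ c, ∀ θ, v θ = c := ⟨v 0, hcst⟩
  simp only [hc] at hvel ⊢
  have hvel' : ∀ τ : ℝ, 0 ≤ τ → ∀ θ : ℝ,
      |GowdyAux.dT P τ θ - c| ≤ C * Real.exp (-2 * τ) := hvel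
  obtain ⟨hWQ, eT, eX⟩ := hW.sub_lin c
  have hQ : GowdyAux.Z (fun τ θ => P τ θ - c * τ) := by
    refine ⟨hWQ, C, fun τ hτ θ => ?_⟩
    rw [eT]
    refine (hvel' τ hτ θ).trans ?_
    gcongr
    linarith
  have hZ : GowdyAux.Z (GowdyAux.dX P) := by
    rw [← eX]; exact hQ.X
  obtain ⟨K, hK0, hK⟩ := hZ.bdd
  obtain ⟨φ, K2, hφ⟩ := hZ.lim
  have hφs := hZ.lim_contDiff hφ
  have hexp1 : ∀ τ : ℝ, 0 ≤ τ → Real.exp (-2 * τ) ≤ 1 := fun τ hτ =>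
    Real.exp_le_one_iff.2 (by linarith)
  have hexp2 : ∀ τ : ℝ, 0 ≤ τ → Real.exp (-2 * τ) ≤ Real.exp (-τ) := fun τ hτ =>
    Real.exp_le_exp.2 (by linarith)
  set C1 : ℝ := C * (C + 2 * |c|) + K ^ 2 with hC1
  have hC1pos : 0 < C1 := by positivity
  have hpart1 : ∀ τ : ℝ, 0 ≤ τ → ∀ θ : ℝ,
      |deriv (fun s => lam s θ) τ - c ^ 2| ≤ C1 * Real.exp (-2 * τ) := by
    intro τ hτ θ
    rw [hltau]
    change |(GowdyAux.dT P τ θ) ^ 2 + Real.exp (-2 * τ) * (GowdyAux.dX P τ θ) ^ 2 - c ^ 2| ≤ _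
    have h1 := hvel' τ hτ θ
    have h2 := hK τ hτ θ
    have h3 : |GowdyAux.dT P τ θ + c| ≤ C + 2 * |c| := by
      have : GowdyAux.dT P τ θ + c = (GowdyAux.dT P τ θ - c) + 2 * c := by ring
      rw [this]
      refine (abs_add_le _ _).trans ?_
      rw [abs_mul, abs_two]
      nlinarith [hexp1 τ hτ]
    have h4 : |(GowdyAux.dT P τ θ - c) * (GowdyAux.dT P τ θ + c)|
        ≤ (C * Real.exp (-2 * τ)) * (C + 2 * |c|) := by
      rw [abs_mul]
      exact mul_le_mul h1 h3 (abs_nonneg _) (by positivity)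
    have h5 : (GowdyAux.dX P τ θ) ^ 2 ≤ K ^ 2 := by
      rw [← sq_abs]
      gcongr
    have h6 : Real.exp (-2 * τ) * (GowdyAux.dX P τ θ) ^ 2 ≤ Real.exp (-2 * τ) * K ^ 2 := by
      gcongr
    have h7 : 0 ≤ Real.exp (-2 * τ) * (GowdyAux.dX P τ θ) ^ 2 := by positivity
    have h8 := abs_le.1 h4
    rw [abs_le]
    constructor <;> nlinarith [h8.1, h8.2]
  refine ⟨C1, hC1pos, hpart1, ?_⟩
  have hls : GowdyAux.Smooth2 lam := hlsmooth
  have hμex : ∀ θ, ∃ L, ∀ s, 0 ≤ s →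
      |lam s θ - c ^ 2 * s - L| ≤ C1 / 2 * Real.exp (-2 * s) := by
    intro θ
    refine GowdyAux.exists_lim (f := fun s => lam s θ - c ^ 2 * s) (K := C1) two_pos
      (fun s => (GowdyAux.hasT hls s θ).sub ((hasDerivAt_id s).const_mul (c ^ 2)))
      (fun s hs => ?_)
    rw [mul_one]
    exact hpart1 s hs θ
  choose μ hμ using hμex
  have hμ1 : ∀ τ : ℝ, 0 ≤ τ → ∀ θ : ℝ,
      |lam τ θ - c ^ 2 * τ - μ θ| ≤ C1 * Real.exp (-2 * τ) := by
    intro τ hτ θ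
    refine (hμ θ τ hτ).trans ?_
    gcongr
    linarith
  have hμ2 : ∀ τ : ℝ, 0 ≤ τ → ∀ θ : ℝ,
      |lam τ θ - c ^ 2 * τ - μ θ| ≤ C1 * Real.exp (-τ) := by
    intro τ hτ θ
    refine (hμ1 τ hτ θ).trans ?_
    gcongr
    linarith
  have hder : ∀ θ, HasDerivAt μ (2 * c * φ θ) θ := by
    refine GowdyAux.deriv_lim (f := fun τ θ => lam τ θ - c ^ 2 * τ) (g := GowdyAux.dX lam)
      (K2 := 2 * C * K + 2 * |c| * K2) (g0 := fun θ => 2 * c * φ θ)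
      (fun τ θ => (GowdyAux.hasX hls τ θ).sub_const _) hμ2 ?_
    intro τ hτ θ
    have e : GowdyAux.dX lam τ θ = 2 * GowdyAux.dT P τ θ * GowdyAux.dX P τ θ := hltheta τ θ
    have e2 : GowdyAux.dX lam τ θ - 2 * c * φ θ
        = 2 * ((GowdyAux.dT P τ θ - c) * GowdyAux.dX P τ θ)
          + 2 * (c * (GowdyAux.dX P τ θ - φ θ)) := by rw [e]; ring
    have h1 : |(GowdyAux.dT P τ θ - c) * GowdyAux.dX P τ θ| ≤ C * Real.exp (-τ) * K := by
      rw [abs_mul]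
      refine mul_le_mul ((hvel' τ hτ θ).trans ?_) (hK τ hτ θ) (abs_nonneg _) (by positivity)
      exact mul_le_mul_of_nonneg_left (hexp2 τ hτ) hC.le
    have h2 : |c * (GowdyAux.dX P τ θ - φ θ)| ≤ |c| * (K2 * Real.exp (-τ)) := by
      rw [abs_mul]
      exact mul_le_mul_of_nonneg_left (hφ τ hτ θ) (abs_nonneg c)
    rw [e2]
    refine (abs_add_le _ _).trans ?_
    rw [abs_mul 2, abs_mul 2, abs_two]
    linarith
  refine ⟨μ, ?_, ?_, hμ1⟩
  · refine contDiff_infty_iff_deriv.2 ⟨fun x => (hder x).differentiableAt, ?_⟩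
    rw [show deriv μ = fun θ => 2 * c * φ θ from funext fun x => (hder x).deriv]
    exact contDiff_const.mul hφs
  · intro θ
    refine tendsto_nhds_unique (GowdyAux.tendsto_of_exp fun s hs => hμ2 s hs (θ + 2 * π)) ?_
    simp only [hlper]
    exact GowdyAux.tendsto_of_exp fun s hs => hμ2 s hs θ
end

section
/- For any smooth 2π-periodic functions v, φ : ℝ → ℝ there exists a unique smooth solution P of the polarized Gowdy wave equation such that sup_θ ( |P(τ,θ) - v(θ)τ - φ(θ)| + |∂τP(τ,θ) - v(θ)| ) → 0 as τ → ∞. (The map from polarized Gowdy solutions to their asymptotic data (v, φ) is a bijection.) -/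
open Real

open MeasureTheory in
/-- Weighted average of `F` along the cone. -/
noncomputable def gowdyG (F w : ℝ → ℝ) (p : ℝ × ℝ) : ℝ :=
  ∫ s in (0:ℝ)..π, w s * F (p.1 + p.2 * cos s)

structure GowdyNice (F : ℝ → ℝ) : Prop where
  smooth : ContDiff ℝ (⊤ : ℕ∞) F
  per : ∀ θ, F (θ + 2 * π) = F θ

namespace GowdyNice

theorem cont {F : ℝ → ℝ} (h : GowdyNice F) : Continuous F := h.smooth.continuous

theorem hasDeriv {F : ℝ → ℝ} (h : GowdyNice F) (x : ℝ) : HasDerivAt F (deriv F x) x :=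
  (h.smooth.differentiable (by simp) x).hasDerivAt

theorem derivN {F : ℝ → ℝ} (h : GowdyNice F) : GowdyNice (deriv F) := by
  refine ⟨?_, ?_⟩
  · have := h.smooth
    rw [show ((⊤ : ℕ∞) : WithTop ℕ∞) = ((⊤ : ℕ∞) : WithTop ℕ∞) + 1 by rfl,
      contDiff_succ_iff_deriv] at this
    exact this.2.2
  · intro θ
    rw [← deriv_comp_add_const]
    congr 1
    ext x; exact h.per x

theorem bdd {F : ℝ → ℝ} (h : GowdyNice F) : ∃ C, 0 ≤ C ∧ ∀ x, |F x| ≤ C := by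
  obtain ⟨C, hC⟩ := (isCompact_Icc (a := (0:ℝ)) (b := 2 * π)).exists_bound_of_continuousOn
    h.cont.continuousOn
  have hp : Function.Periodic F (2 * π) := h.per
  have hC' : ∀ x, |F x| ≤ C := by
    intro x
    obtain ⟨y, hy, hxy⟩ := hp.exists_mem_Ico₀ (by positivity) x
    rw [hxy]
    exact hC y ⟨hy.1, hy.2.le⟩
  exact ⟨C, (abs_nonneg _).trans (hC' 0), hC'⟩

end GowdyNice

open MeasureTheory

theorem gowdy_integrable {F w : ℝ → ℝ} (hF : GowdyNice F)
    (hw : IntervalIntegrable w volume 0 π) (x y : ℝ) :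
    IntervalIntegrable (fun s => w s * F (x + y * cos s)) volume 0 π := by
  apply hw.mul_continuousOn
  have := hF.cont
  fun_prop

theorem gowdy_mul_cos {w : ℝ → ℝ}
    (hw : IntervalIntegrable w volume 0 π) :
    IntervalIntegrable (fun s => w s * cos s) volume 0 π := by
  apply hw.mul_continuousOn
  fun_prop

theorem gowdyG_hasFDerivAt {F w : ℝ → ℝ} (hF : GowdyNice F)
    (hw : IntervalIntegrable w volume 0 π) (p : ℝ × ℝ) :
    HasFDerivAt (gowdyG F w)
      (gowdyG (deriv F) w p • ContinuousLinearMap.fst ℝ ℝ ℝ +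
        gowdyG (deriv F) (fun s => w s * cos s) p • ContinuousLinearMap.snd ℝ ℝ ℝ) p := by
  obtain ⟨C, hC0, hC⟩ := hF.derivN.bdd
  have hcF := hF.cont
  have hcF' := hF.derivN.cont
  have i1 := gowdy_integrable hF.derivN hw p.1 p.2
  have i2 := gowdy_integrable hF.derivN (gowdy_mul_cos hw) p.1 p.2
  let L : ℝ × ℝ → ℝ → (ℝ × ℝ →L[ℝ] ℝ) := fun q s =>
    (w s * deriv F (q.1 + q.2 * cos s)) • ContinuousLinearMap.fst ℝ ℝ ℝ +
    (w s * cos s * deriv F (q.1 + q.2 * cos s)) • ContinuousLinearMap.snd ℝ ℝ ℝ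
  have iL1 : IntervalIntegrable (fun s => (w s * deriv F (p.1 + p.2 * cos s)) •
      ContinuousLinearMap.fst ℝ ℝ ℝ) volume 0 π := by
    rw [intervalIntegrable_iff] at *
    exact i1.smul_const _
  have iL2 : IntervalIntegrable (fun s => (w s * cos s * deriv F (p.1 + p.2 * cos s)) •
      ContinuousLinearMap.snd ℝ ℝ ℝ) volume 0 π := by
    rw [intervalIntegrable_iff] at *
    exact i2.smul_const _
  have key := intervalIntegral.hasFDerivAt_integral_of_dominated_of_fderiv_le
    (μ := volume) (a := 0) (b := π) (𝕜 := ℝ)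
    (F := fun (q : ℝ × ℝ) s => w s * F (q.1 + q.2 * cos s)) (F' := L) (x₀ := p)
    (s := Set.univ) (bound := fun s => |w s| * (2 * C)) Filter.univ_mem
    (Filter.Eventually.of_forall fun q => (intervalIntegrable_iff.1 (gowdy_integrable hF hw q.1 q.2)).aestronglyMeasurable)
    (gowdy_integrable hF hw p.1 p.2) (intervalIntegrable_iff.1 (iL1.add iL2)).aestronglyMeasurable
    (Filter.Eventually.of_forall fun s _ q _ => ?_)
    (hw.abs.mul_const _)
    (Filter.Eventually.of_forall fun s _ q _ => ?_)
  · refine HasFDerivAt.congr_fderiv key ?_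
    simp only [L]
    rw [intervalIntegral.integral_add iL1 iL2, intervalIntegral.integral_smul_const,
      intervalIntegral.integral_smul_const]
    rfl
  · have e1 : ‖(w s * deriv F (q.1 + q.2 * cos s)) • ContinuousLinearMap.fst ℝ ℝ ℝ‖
        ≤ |w s| * C := by
      rw [norm_smul, Real.norm_eq_abs, abs_mul]
      calc _ ≤ |w s| * |deriv F (q.1 + q.2 * cos s)| * 1 := by
            gcongr; exact ContinuousLinearMap.norm_fst_le ..
        _ ≤ _ := by rw [mul_one]; gcongr; exact hC _
    have e2 : ‖(w s * cos s * deriv F (q.1 + q.2 * cos s)) • ContinuousLinearMap.snd ℝ ℝ ℝ‖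
        ≤ |w s| * C := by
      rw [norm_smul, Real.norm_eq_abs, abs_mul, abs_mul]
      calc _ ≤ |w s| * 1 * |deriv F (q.1 + q.2 * cos s)| * 1 := by
            gcongr
            · exact abs_cos_le_one s
            · exact ContinuousLinearMap.norm_snd_le ..
        _ ≤ _ := by rw [mul_one, mul_one]; gcongr; exact hC _
    calc _ ≤ _ := norm_add_le _ _
      _ ≤ _ := by linarith
  · have h1 : HasFDerivAt (fun q : ℝ × ℝ => q.1 + q.2 * cos s)
        (ContinuousLinearMap.fst ℝ ℝ ℝ + cos s • ContinuousLinearMap.snd ℝ ℝ ℝ) q :=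
      hasFDerivAt_fst.add (hasFDerivAt_snd.mul_const (cos s))
    have h2 := ((hF.hasDeriv (q.1 + q.2 * cos s)).comp_hasFDerivAt q h1).const_mul (w s)
    refine HasFDerivAt.congr_fderiv h2 ?_
    ext <;> simp [L] <;> ring

theorem gowdyG_contDiff_nat (n : ℕ) : ∀ {F w : ℝ → ℝ}, GowdyNice F →
    IntervalIntegrable w volume 0 π → ContDiff ℝ n (gowdyG F w) := by
  induction n with
  | zero =>
    intro F w hF hw
    rw [Nat.cast_zero, contDiff_zero]
    exact continuous_iff_continuousAt.2 fun p => (gowdyG_hasFDerivAt hF hw p).continuousAt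
  | succ n ih =>
    intro F w hF hw
    push_cast
    rw [contDiff_succ_iff_hasFDerivAt]
    refine ⟨_, ?_, fun p => gowdyG_hasFDerivAt hF hw p⟩
    have a1 := ih hF.derivN hw
    have a2 := ih hF.derivN (gowdy_mul_cos hw)
    fun_prop

theorem gowdyG_contDiff {F w : ℝ → ℝ} (hF : GowdyNice F)
    (hw : IntervalIntegrable w volume 0 π) : ContDiff ℝ (⊤ : ℕ∞) (gowdyG F w) :=
  contDiff_infty.2 fun n => gowdyG_contDiff_nat n hF hw

theorem gowdyG_deriv_x {F w : ℝ → ℝ} (hF : GowdyNice F)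
    (hw : IntervalIntegrable w volume 0 π) (x y : ℝ) :
    HasDerivAt (fun x => gowdyG F w (x, y)) (gowdyG (deriv F) w (x, y)) x := by
  have h := (gowdyG_hasFDerivAt hF hw (x, y)).comp_hasDerivAt x
    ((hasDerivAt_id x).prodMk (hasDerivAt_const x y))
  refine HasDerivAt.congr_deriv h ?_
  simp

theorem gowdyG_deriv_tau {F w : ℝ → ℝ} (hF : GowdyNice F)
    (hw : IntervalIntegrable w volume 0 π) (θ τ : ℝ) :
    HasDerivAt (fun s => gowdyG F w (θ, exp (-s)))
      (-(exp (-τ) * gowdyG (deriv F) (fun s => w s * cos s) (θ, exp (-τ)))) τ := by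
  have h := (gowdyG_hasFDerivAt hF hw (θ, exp (-τ))).comp_hasDerivAt τ
    ((hasDerivAt_const τ θ).prodMk ((hasDerivAt_neg τ).exp))
  refine HasDerivAt.congr_deriv h ?_
  simp; ring

theorem gowdyG_bound {F w : ℝ → ℝ} (hw : IntervalIntegrable w volume 0 π)
    {C : ℝ} (hC : ∀ x, |F x| ≤ C) (p : ℝ × ℝ) :
    |gowdyG F w p| ≤ C * ∫ s in (0:ℝ)..π, |w s| := by
  rw [← intervalIntegral.integral_const_mul]
  have := intervalIntegral.norm_integral_le_of_norm_le (f := fun s => w s * F (p.1 + p.2 * cos s))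
    (g := fun s => C * |w s|) (a := 0) (b := π) (μ := volume) pi_pos.le
    (Filter.Eventually.of_forall fun s _ => by
      rw [norm_mul, mul_comm]; exact mul_le_mul_of_nonneg_right (hC _) (abs_nonneg _))
    (hw.abs.const_mul _)
  exact this

theorem gowdyG_sub_bound {F w : ℝ → ℝ} (hF : GowdyNice F) (hw : IntervalIntegrable w volume 0 π)
    {C : ℝ} (hC : ∀ x, |deriv F x| ≤ C) (x y : ℝ) (hy : 0 ≤ y) :
    |gowdyG F w (x, y) - F x * ∫ s in (0:ℝ)..π, w s| ≤ y * C * ∫ s in (0:ℝ)..π, |w s| := by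
  have hC0 : 0 ≤ C := (abs_nonneg _).trans (hC 0)
  rw [← intervalIntegral.integral_const_mul, ← intervalIntegral.integral_const_mul, gowdyG,
    ← intervalIntegral.integral_sub (gowdy_integrable hF hw x y) (hw.const_mul _)]
  refine intervalIntegral.norm_integral_le_of_norm_le (E := ℝ) (a := 0) (b := π) (μ := volume)
    (g := fun s => y * C * |w s|) pi_pos.le
    (Filter.Eventually.of_forall fun s _ => ?_)
    (hw.abs.const_mul _)
  have : |F (x + y * cos s) - F x| ≤ C * |(x + y * cos s) - x| :=
    Convex.norm_image_sub_le_of_norm_hasDerivWithin_le (𝕜 := ℝ) (f := F) (f' := deriv F)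
      (s := Set.univ) (x := x) (y := x + y * cos s)
      (fun z _ => (hF.hasDeriv z).hasDerivWithinAt) (fun z _ => hC z) convex_univ trivial trivial
  have e : |(x + y * cos s) - x| ≤ y := by
    rw [add_sub_cancel_left, abs_mul, abs_of_nonneg hy]
    nlinarith [abs_cos_le_one s]
  calc ‖w s * F (x + y * cos s) - F x * w s‖ = |F (x + y * cos s) - F x| * |w s| := by
        rw [← abs_mul, Real.norm_eq_abs]; ring_nf
    _ ≤ (C * y) * |w s| := by
        gcongr; exact this.trans (by gcongr)
    _ = _ := by ring

/-- The singular weight. -/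
noncomputable def gowdyEll (s : ℝ) : ℝ := -2 * log (sin s) - 2 * log 2

theorem gowdyEll_int : IntervalIntegrable gowdyEll volume 0 π := by
  have := (intervalIntegrable_log_sin (a := 0) (b := π)).const_mul (-2)
  exact this.sub intervalIntegrable_const

theorem gowdyEll_integral : ∫ s in (0:ℝ)..π, gowdyEll s = 0 := by
  have := (intervalIntegrable_log_sin (a := 0) (b := π)).const_mul (-2)
  unfold gowdyEll
  simp only [Function.comp_def] at this
  rw [intervalIntegral.integral_sub this intervalIntegrable_const,
    intervalIntegral.integral_const_mul, integral_log_sin_zero_pi]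
  simp; ring

theorem gowdy_one_int : IntervalIntegrable (fun _ => (1:ℝ)) volume 0 π := intervalIntegrable_const

theorem gowdy_ibp_one {F : ℝ → ℝ} (hF : GowdyNice F) (x y : ℝ) :
    gowdyG F (fun s => 1 * cos s) (x, y) + y * gowdyG (deriv F) (fun s => 1 * cos s * cos s) (x, y)
      - y * gowdyG (deriv F) (fun _ => 1) (x, y) = 0 := by
  have hcF := hF.cont
  have i1 := gowdy_integrable hF (gowdy_mul_cos gowdy_one_int) x y
  have i2 := (gowdy_integrable hF.derivN (gowdy_mul_cos (gowdy_mul_cos gowdy_one_int)) x y).const_mul y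
  have i3 := (gowdy_integrable hF.derivN gowdy_one_int x y).const_mul y
  unfold gowdyG
  simp only
  rw [← intervalIntegral.integral_const_mul, ← intervalIntegral.integral_const_mul,
    ← intervalIntegral.integral_add i1 i2, ← intervalIntegral.integral_sub (i1.add i2) i3]
  rw [intervalIntegral.integral_eq_sub_of_hasDerivAt_of_le
    (f := fun s => F (x + y * cos s) * sin s) pi_pos.le
    (by fun_prop) (fun s hs => ?_) ((i1.add i2).sub i3)]
  · simp
  · have h1 : HasDerivAt (fun s => x + y * cos s) (y * (-sin s)) s :=
      ((hasDerivAt_cos s).const_mul y).const_add x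
    refine HasDerivAt.congr_deriv (((hF.hasDeriv _).comp s h1).mul (hasDerivAt_sin s)) ?_
    have := sin_sq_add_cos_sq s
    simp only [Function.comp]
    linear_combination (-y * deriv F (x + y * cos s)) * this

theorem gowdy_ibp_ell {F : ℝ → ℝ} (hF : GowdyNice F) (x y : ℝ) :
    gowdyG F (fun s => gowdyEll s * cos s) (x, y)
      + y * gowdyG (deriv F) (fun s => gowdyEll s * cos s * cos s) (x, y)
      - y * gowdyG (deriv F) gowdyEll (x, y)
      - 2 * gowdyG F (fun s => 1 * cos s) (x, y) = 0 := by
  have hcF := hF.cont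
  have i0 := (gowdy_integrable hF (gowdy_mul_cos gowdy_one_int) x y).const_mul 2
  have i1 := gowdy_integrable hF (gowdy_mul_cos gowdyEll_int) x y
  have i2 := (gowdy_integrable hF.derivN (gowdy_mul_cos (gowdy_mul_cos gowdyEll_int)) x y).const_mul y
  have i3 := (gowdy_integrable hF.derivN gowdyEll_int x y).const_mul y
  unfold gowdyG
  simp only
  rw [← intervalIntegral.integral_const_mul, ← intervalIntegral.integral_const_mul,
    ← intervalIntegral.integral_const_mul,
    ← intervalIntegral.integral_add i1 i2, ← intervalIntegral.integral_sub (i1.add i2) i3,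
    ← intervalIntegral.integral_sub ((i1.add i2).sub i3) i0]
  rw [intervalIntegral.integral_eq_sub_of_hasDerivAt_of_le
    (f := fun s => F (x + y * cos s) * (-2 * (sin s * log (sin s)) - 2 * log 2 * sin s)) pi_pos.le
    ?_ (fun s hs => ?_) (((i1.add i2).sub i3).sub i0)]
  · simp
  · have := Real.continuous_mul_log.comp continuous_sin
    simp only [Function.comp_def] at this
    fun_prop
  · have h1 : HasDerivAt (fun s => x + y * cos s) (y * (-sin s)) s :=
      ((hasDerivAt_cos s).const_mul y).const_add x
    have hs0 : sin s ≠ 0 := (sin_pos_of_mem_Ioo hs).ne'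
    have hl : HasDerivAt (fun s => sin s * log (sin s)) _ s :=
      (hasDerivAt_sin s).mul ((hasDerivAt_sin s).log hs0)
    refine HasDerivAt.congr_deriv (((hF.hasDeriv _).comp s h1).mul
      ((hl.const_mul (-2)).sub ((hasDerivAt_sin s).const_mul (2 * log 2)))) ?_
    have := sin_sq_add_cos_sq s
    simp only [Function.comp, gowdyEll]
    field_simp
    linear_combination (y * deriv F (x + y * cos s) * (log (sin s) + log 2)) * this

/-- The explicit solution. -/
noncomputable def gowdyP (v φ : ℝ → ℝ) (τ θ : ℝ) : ℝ :=
  π⁻¹ * (gowdyG φ (fun _ => 1) (θ, exp (-τ)) + τ * gowdyG v (fun _ => 1) (θ, exp (-τ))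
    + gowdyG v gowdyEll (θ, exp (-τ)))

theorem gowdyP_deriv_tau {v φ : ℝ → ℝ} (hv : GowdyNice v) (hφ : GowdyNice φ) (τ θ : ℝ) :
    HasDerivAt (fun s => gowdyP v φ s θ)
      (π⁻¹ * (-(exp (-τ) * gowdyG (deriv φ) (fun s => 1 * cos s) (θ, exp (-τ)))
        + gowdyG v (fun _ => 1) (θ, exp (-τ))
        - τ * (exp (-τ) * gowdyG (deriv v) (fun s => 1 * cos s) (θ, exp (-τ)))
        - exp (-τ) * gowdyG (deriv v) (fun s => gowdyEll s * cos s) (θ, exp (-τ)))) τ := by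
  have h1 := gowdyG_deriv_tau hφ gowdy_one_int θ τ
  have h2 := (hasDerivAt_id τ).mul (gowdyG_deriv_tau hv gowdy_one_int θ τ)
  have h3 := gowdyG_deriv_tau hv gowdyEll_int θ τ
  refine HasDerivAt.congr_deriv (((h1.add h2).add h3).const_mul π⁻¹) ?_
  simp only [id]
  ring

theorem gowdyP_deriv_tau2 {v φ : ℝ → ℝ} (hv : GowdyNice v) (hφ : GowdyNice φ) (τ θ : ℝ) :
    HasDerivAt (fun s => deriv (fun s' => gowdyP v φ s' θ) s)
      (exp (-2 * τ) * (π⁻¹ * (gowdyG (deriv (deriv φ)) (fun _ => 1) (θ, exp (-τ))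
        + τ * gowdyG (deriv (deriv v)) (fun _ => 1) (θ, exp (-τ))
        + gowdyG (deriv (deriv v)) gowdyEll (θ, exp (-τ))))) τ := by
  have he : (fun s => deriv (fun s' => gowdyP v φ s' θ) s) = _ :=
    funext fun s => (gowdyP_deriv_tau hv hφ s θ).deriv
  rw [he]
  have hexp : HasDerivAt (fun s : ℝ => exp (-s)) (exp (-τ) * (-1)) τ := (hasDerivAt_neg τ).exp
  have h1 := hexp.mul (gowdyG_deriv_tau hφ.derivN (gowdy_mul_cos gowdy_one_int) θ τ)
  have h2 := gowdyG_deriv_tau hv gowdy_one_int θ τ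
  have h3 := (hasDerivAt_id τ).mul
    (hexp.mul (gowdyG_deriv_tau hv.derivN (gowdy_mul_cos gowdy_one_int) θ τ))
  have h4 := hexp.mul (gowdyG_deriv_tau hv.derivN (gowdy_mul_cos gowdyEll_int) θ τ)
  refine HasDerivAt.congr_deriv ((((h1.neg.add h2).sub h3).sub h4).const_mul π⁻¹) ?_
  have b1 := gowdy_ibp_one hφ.derivN θ (exp (-τ))
  have b2 := gowdy_ibp_one hv.derivN θ (exp (-τ))
  have b3 := gowdy_ibp_ell hv.derivN θ (exp (-τ))
  have e2 : exp (-2 * τ) = exp (-τ) * exp (-τ) := by rw [← exp_add]; ring_nf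
  rw [e2]
  simp only [id, Pi.mul_apply]
  generalize exp (-τ) = t at *
  linear_combination (π⁻¹ * t) * b1 + (π⁻¹ * t * τ) * b2 + (π⁻¹ * t) * b3

theorem gowdyP_deriv_theta {v φ : ℝ → ℝ} (hv : GowdyNice v) (hφ : GowdyNice φ) (τ θ : ℝ) :
    HasDerivAt (gowdyP v φ τ) (gowdyP (deriv v) (deriv φ) τ θ) θ :=
  (((gowdyG_deriv_x hφ gowdy_one_int θ _).add
    ((gowdyG_deriv_x hv gowdy_one_int θ _).const_mul τ)).add
    (gowdyG_deriv_x hv gowdyEll_int θ _)).const_mul π⁻¹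

theorem gowdyP_smooth {v φ : ℝ → ℝ} (hv : GowdyNice v) (hφ : GowdyNice φ) :
    ContDiff ℝ (⊤ : ℕ∞) (fun p : ℝ × ℝ => gowdyP v φ p.1 p.2) := by
  have h1 := gowdyG_contDiff hφ gowdy_one_int
  have h2 := gowdyG_contDiff hv gowdy_one_int
  have h3 := gowdyG_contDiff hv gowdyEll_int
  unfold gowdyP
  fun_prop

theorem gowdyP_asymp {v φ : ℝ → ℝ} (hv : GowdyNice v) (hφ : GowdyNice φ) :
    ∀ ε : ℝ, 0 < ε → ∃ T : ℝ, ∀ τ : ℝ, T ≤ τ → ∀ θ : ℝ,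
        |gowdyP v φ τ θ - v θ * τ - φ θ| + |deriv (fun s => gowdyP v φ s θ) τ - v θ| < ε := by
  obtain ⟨A, hA0, hA⟩ := hφ.derivN.bdd
  obtain ⟨B, hB0, hB⟩ := hv.derivN.bdd
  obtain ⟨M, hM⟩ : ∃ M, M = ∫ s in (0:ℝ)..π, |gowdyEll s| := ⟨_, rfl⟩
  obtain ⟨N, hN⟩ : ∃ N, N = ∫ s in (0:ℝ)..π, |gowdyEll s * cos s| := ⟨_, rfl⟩
  obtain ⟨R, hR⟩ : ∃ R, R = ∫ s in (0:ℝ)..π, |1 * cos s| := ⟨_, rfl⟩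
  have hlim : Filter.Tendsto (fun τ : ℝ => π⁻¹ * ((A * π + B * M + A * R + B * π + B * N) *
      exp (-τ) + (B * π + B * R) * (τ * exp (-τ)))) Filter.atTop (nhds 0) := by
    have l1 : Filter.Tendsto (fun τ : ℝ => exp (-τ)) Filter.atTop (nhds 0) :=
      tendsto_exp_neg_atTop_nhds_zero
    have l2 : Filter.Tendsto (fun τ : ℝ => τ * exp (-τ)) Filter.atTop (nhds 0) := by
      simpa using tendsto_pow_mul_exp_neg_atTop_nhds_zero 1
    simpa using ((l1.const_mul (A * π + B * M + A * R + B * π + B * N)).add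
      (l2.const_mul (B * π + B * R))).const_mul π⁻¹
  intro ε hε
  obtain ⟨T, hT⟩ := Filter.eventually_atTop.1 (hlim.eventually_lt_const hε)
  refine ⟨max T 0, fun τ hτ θ => lt_of_le_of_lt ?_ (hT τ ((le_max_left _ _).trans hτ))⟩
  have hτ0 : 0 ≤ τ := (le_max_right _ _).trans hτ
  have ht := exp_pos (-τ)
  have c1 := gowdyG_sub_bound hφ gowdy_one_int hA θ (exp (-τ)) ht.le
  have c2 := gowdyG_sub_bound hv gowdy_one_int hB θ (exp (-τ)) ht.le
  have c3 := gowdyG_sub_bound hv gowdyEll_int hB θ (exp (-τ)) ht.le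
  have c4 := gowdyG_bound (gowdy_mul_cos gowdy_one_int) hA (θ, exp (-τ))
  have c5 := gowdyG_bound (gowdy_mul_cos gowdy_one_int) hB (θ, exp (-τ))
  have c6 := gowdyG_bound (gowdy_mul_cos gowdyEll_int) hB (θ, exp (-τ))
  rw [← hR] at c4 c5
  rw [← hN] at c6
  rw [← hM, gowdyEll_integral, mul_zero, sub_zero] at c3
  simp only [intervalIntegral.integral_const, abs_one, smul_eq_mul, sub_zero, mul_one] at c1 c2
  rw [(gowdyP_deriv_tau hv hφ τ θ).deriv]
  unfold gowdyP
  generalize exp (-τ) = t at *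
  generalize gowdyG φ (fun _ => 1) (θ, t) = g1 at *
  generalize gowdyG v (fun _ => 1) (θ, t) = g2 at *
  generalize gowdyG v gowdyEll (θ, t) = g3 at *
  generalize gowdyG (deriv φ) (fun s => 1 * cos s) (θ, t) = g4 at *
  generalize gowdyG (deriv v) (fun s => 1 * cos s) (θ, t) = g5 at *
  generalize gowdyG (deriv v) (fun s => gowdyEll s * cos s) (θ, t) = g6 at *
  have hπ := pi_pos
  have d1 : π⁻¹ * (g1 + τ * g2 + g3) - v θ * τ - φ θ
      = π⁻¹ * ((g1 - φ θ * π) + τ * (g2 - v θ * π) + g3) := by field_simp; ring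
  have d2 : π⁻¹ * (-(t * g4) + g2 - τ * (t * g5) - t * g6) - v θ
      = π⁻¹ * (-(t * g4) + (g2 - v θ * π) - τ * (t * g5) - t * g6) := by field_simp; ring
  rw [d1, d2, abs_mul, abs_mul, abs_of_pos (inv_pos.2 hπ), ← mul_add]
  refine mul_le_mul_of_nonneg_left ?_ (inv_pos.2 hπ).le
  have k1 : |(g1 - φ θ * π) + τ * (g2 - v θ * π) + g3| ≤ t * A * π + τ * (t * B * π) + t * B * M := by
    refine (abs_add_le _ _).trans (add_le_add ((abs_add_le _ _).trans (add_le_add c1 ?_)) c3)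
    rw [abs_mul, abs_of_nonneg hτ0]
    gcongr
  have k2 : |-(t * g4) + (g2 - v θ * π) - τ * (t * g5) - t * g6| ≤
      t * (A * R) + t * B * π + τ * (t * (B * R)) + t * (B * N) := by
    refine (abs_sub _ _).trans (add_le_add ((abs_sub _ _).trans (add_le_add
      ((abs_add_le _ _).trans (add_le_add ?_ c2)) ?_)) ?_)
    · rw [abs_neg, abs_mul, abs_of_pos ht]; gcongr
    · rw [abs_mul, abs_mul, abs_of_pos ht, abs_of_nonneg hτ0]; gcongr
    · rw [abs_mul, abs_of_pos ht]; gcongr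
  linarith

/-- Vanishing of a mode with vanishing asymptotic data. -/
theorem gowdy_mode_zero {y y1 : ℝ → ℝ} {k : ℝ} (hk : 0 ≤ k)
    (h1 : ∀ τ, HasDerivAt y (y1 τ) τ)
    (h2 : ∀ τ, HasDerivAt y1 (exp (-2 * τ) * (-k * y τ)) τ)
    (l0 : Filter.Tendsto y Filter.atTop (nhds 0))
    (l1 : Filter.Tendsto y1 Filter.atTop (nhds 0)) : ∀ τ, y τ = 0 := by
  have hexp : ∀ τ : ℝ, HasDerivAt (fun s : ℝ => exp (-2 * s)) (exp (-2 * τ) * (-2)) τ := by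
    intro τ
    have := ((hasDerivAt_id τ).const_mul (-2)).exp
    simpa using this
  have hexp2 : ∀ τ : ℝ, HasDerivAt (fun s : ℝ => exp (2 * s)) (exp (2 * τ) * 2) τ := by
    intro τ
    have := ((hasDerivAt_id τ).const_mul 2).exp
    simpa using this
  have lexp : Filter.Tendsto (fun s : ℝ => exp (-2 * s)) Filter.atTop (nhds 0) := by
    refine tendsto_exp_atBot.comp ?_
    exact Filter.tendsto_id.const_mul_atTop_of_neg (by norm_num)
  -- bound on `y1`
  obtain ⟨T, hT⟩ : ∃ T, ∀ s, T ≤ s → |y s| ≤ 1 := by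
    have := l0.abs
    rw [abs_zero] at this
    obtain ⟨T, hT⟩ := Filter.eventually_atTop.1 (this.eventually_lt_const zero_lt_one)
    exact ⟨T, fun s hs => (hT s hs).le⟩
  have aux : ∀ g g' : ℝ → ℝ, ∀ T : ℝ, (∀ τ, HasDerivAt g (g' τ) τ) → (∀ τ, T ≤ τ → 0 ≤ g' τ) →
      Filter.Tendsto g Filter.atTop (nhds 0) → ∀ τ, T ≤ τ → g τ ≤ 0 := by
    intro g g' T hg hg' lg τ hτ
    have hm : MonotoneOn g (Set.Ici T) := by
      apply monotoneOn_of_hasDerivWithinAt_nonneg (convex_Ici T)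
        (fun x _ => (hg x).continuousAt.continuousWithinAt)
        (fun x _ => (hg x).hasDerivWithinAt)
      intro x hx
      rw [interior_Ici] at hx
      exact hg' x (le_of_lt hx)
    refine ge_of_tendsto lg ?_
    filter_upwards [Filter.eventually_ge_atTop τ] with s hs
    exact hm hτ (hτ.trans hs) hs
  have u1 := aux (fun s => y1 s - k / 2 * exp (-2 * s)) _ T
    (fun τ => (h2 τ).sub ((hexp τ).const_mul (k / 2)))
    (fun τ hτ => by
      have := (abs_le.1 (hT τ hτ)).2
      have e := exp_pos (-2 * τ)
      have : 0 ≤ exp (-2 * τ) * (k * (1 - y τ)) := by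
        apply mul_nonneg e.le (mul_nonneg hk (by linarith))
      linarith) (by simpa using l1.sub (lexp.const_mul (k / 2)))
  have u2 := aux (fun s => -y1 s - k / 2 * exp (-2 * s)) _ T
    (fun τ => (h2 τ).neg.sub ((hexp τ).const_mul (k / 2)))
    (fun τ hτ => by
      have := (abs_le.1 (hT τ hτ)).1
      have e := exp_pos (-2 * τ)
      have : 0 ≤ exp (-2 * τ) * (k * (1 + y τ)) := by
        apply mul_nonneg e.le (mul_nonneg hk (by linarith))
      linarith) (by simpa using l1.neg.sub (lexp.const_mul (k / 2)))
  have le : Filter.Tendsto (fun s => exp (2 * s) * (y1 s) ^ 2) Filter.atTop (nhds 0) := by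
    refine squeeze_zero' (g := fun s => (k / 2) ^ 2 * exp (-2 * s))
      (Filter.Eventually.of_forall fun s => by positivity) ?_
      (by simpa using lexp.const_mul ((k / 2) ^ 2))
    filter_upwards [Filter.eventually_ge_atTop T] with s hs
    have a1 := u1 s hs
    have a2 := u2 s hs
    have a3 : (y1 s) ^ 2 ≤ (k / 2 * exp (-2 * s)) ^ 2 :=
      sq_le_sq' (by linarith) (by linarith)
    calc exp (2 * s) * (y1 s) ^ 2 ≤ exp (2 * s) * (k / 2 * exp (-2 * s)) ^ 2 := by gcongr
      _ = (k / 2) ^ 2 * (exp (2 * s) * exp (-2 * s)) * exp (-2 * s) := by ring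
      _ = _ := by rw [← exp_add]; simp
  have hE : ∀ τ, exp (2 * τ) * (y1 τ) ^ 2 + k * (y τ) ^ 2 ≤ 0 := by
    intro τ
    refine aux (fun τ => exp (2 * τ) * (y1 τ) ^ 2 + k * (y τ) ^ 2) _ τ
      (fun τ => ((hexp2 τ).mul ((h2 τ).pow 2)).add (((h1 τ).pow 2).const_mul k))
      (fun τ _ => ?_) (by simpa using le.add ((l0.pow 2).const_mul k)) τ le_rfl
    have e : exp (2 * τ) * exp (-(2 * τ)) = 1 := by rw [← exp_add]; simp
    have : 0 ≤ exp (2 * τ) * 2 * (y1 τ) ^ 2 := by positivity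
    simp only [Nat.cast_ofNat, Pi.pow_apply]
    norm_num
    linear_combination this + (2 * y1 τ * k * y τ) * e
  have hy1 : ∀ τ, y1 τ = 0 := by
    intro τ
    have := hE τ
    have p : 0 ≤ k * (y τ) ^ 2 := by positivity
    have q : exp (2 * τ) * (y1 τ) ^ 2 ≤ 0 := by linarith
    have := exp_pos (2 * τ)
    have q2 : (y1 τ) ^ 2 ≤ 0 := by
      by_contra! h
      nlinarith [mul_pos this h]
    exact pow_eq_zero_iff (two_ne_zero) |>.1 (le_antisymm q2 (sq_nonneg _))
  have hc : ∀ a b, y a = y b := is_const_of_deriv_eq_zero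
    (fun x => (h1 x).differentiableAt) (fun x => by rw [(h1 x).deriv, hy1])
  intro τ
  have : y = fun _ => y τ := funext fun s => hc s τ
  rw [this] at l0
  exact tendsto_nhds_unique tendsto_const_nhds l0

theorem gowdy_partials {f : ℝ × ℝ → ℝ} (hf : ContDiff ℝ (⊤ : ℕ∞) f) :
    ∃ f1 f2 : ℝ × ℝ → ℝ, ContDiff ℝ (⊤ : ℕ∞) f1 ∧ ContDiff ℝ (⊤ : ℕ∞) f2 ∧
      (∀ τ θ, HasDerivAt (fun s => f (s, θ)) (f1 (τ, θ)) τ) ∧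
      (∀ τ θ, HasDerivAt (fun x => f (τ, x)) (f2 (τ, θ)) θ) := by
  have hd : ContDiff ℝ (⊤ : ℕ∞) (fderiv ℝ f) := hf.fderiv_right (by rfl)
  refine ⟨fun p => fderiv ℝ f p (1, 0), fun p => fderiv ℝ f p (0, 1), by fun_prop, by fun_prop,
    fun τ θ => ?_, fun τ θ => ?_⟩
  · have h := ((hf.differentiable (by simp) (τ, θ)).hasFDerivAt).comp_hasDerivAt τ
      ((hasDerivAt_id τ).prodMk (hasDerivAt_const τ θ))
    exact h
  · have h := ((hf.differentiable (by simp) (τ, θ)).hasFDerivAt).comp_hasDerivAt θ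
      ((hasDerivAt_const θ τ).prodMk (hasDerivAt_id θ))
    exact h

theorem gowdy_mode_deriv {f f1 : ℝ × ℝ → ℝ} (hf : Continuous f) (hf1 : Continuous f1)
    (h : ∀ τ θ, HasDerivAt (fun s => f (s, θ)) (f1 (τ, θ)) τ)
    {e : ℝ → ℝ} (he : Continuous e) (τ : ℝ) :
    HasDerivAt (fun s => ∫ θ in (0:ℝ)..(2 * π), f (s, θ) * e θ)
      (∫ θ in (0:ℝ)..(2 * π), f1 (τ, θ) * e θ) τ := by
  obtain ⟨C, hC⟩ := ((isCompact_Icc (a := τ - 1) (b := τ + 1)).prod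
    (isCompact_Icc (a := (0:ℝ)) (b := 2 * π))).exists_bound_of_continuousOn
    (f := fun p => f1 p * e p.2) (by fun_prop)
  refine (intervalIntegral.hasDerivAt_integral_of_dominated_loc_of_deriv_le (𝕜 := ℝ)
    (F := fun s θ => f (s, θ) * e θ) (F' := fun s θ => f1 (s, θ) * e θ) (bound := fun _ => C)
    (s := Set.Icc (τ - 1) (τ + 1)) (Icc_mem_nhds (by linarith) (by linarith))
    (Filter.Eventually.of_forall fun s => Continuous.aestronglyMeasurable (by fun_prop))
    (Continuous.intervalIntegrable (by fun_prop) _ _)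
    (Continuous.aestronglyMeasurable (by fun_prop))
    (Filter.Eventually.of_forall fun θ hθ s hs => ?_) intervalIntegrable_const
    (Filter.Eventually.of_forall fun θ hθ s hs => (h s θ).mul_const _)).2
  rw [Set.uIoc_of_le (by positivity)] at hθ
  exact hC (s, θ) ⟨hs, hθ.1.le, hθ.2⟩

theorem gowdy_mode_tendsto {f : ℝ × ℝ → ℝ}
    (h : ∀ ε : ℝ, 0 < ε → ∃ T : ℝ, ∀ τ : ℝ, T ≤ τ → ∀ θ : ℝ, |f (τ, θ)| < ε)
    {e : ℝ → ℝ} (he : ∀ x, |e x| ≤ 1) :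
    Filter.Tendsto (fun s => ∫ θ in (0:ℝ)..(2 * π), f (s, θ) * e θ) Filter.atTop (nhds 0) := by
  rw [Metric.tendsto_atTop]
  intro ε hε
  obtain ⟨T, hT⟩ := h (ε / (4 * π)) (by positivity)
  refine ⟨T, fun τ hτ => ?_⟩
  have := intervalIntegral.norm_integral_le_of_norm_le_const (a := 0) (b := 2 * π)
    (f := fun θ => f (τ, θ) * e θ) (C := ε / (4 * π)) (fun θ _ => by
      rw [norm_mul]
      calc _ ≤ ε / (4 * π) * 1 := mul_le_mul (hT τ hτ θ).le (he θ) (abs_nonneg _) (by positivity)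
        _ = _ := mul_one _)
  rw [dist_zero_right]
  refine this.trans_lt ?_
  rw [sub_zero, abs_of_pos (by positivity)]
  have hπ := pi_pos
  field_simp
  norm_num

/-- Integration by parts against a trigonometric mode. -/
theorem gowdy_mode_ibp {q q1 q2 e e1 : ℝ → ℝ} {k : ℝ}
    (hq : ∀ x, HasDerivAt q (q1 x) x) (hq1 : ∀ x, HasDerivAt q1 (q2 x) x)
    (hq2 : Continuous q2)
    (he : ∀ x, HasDerivAt e (e1 x) x) (he1 : ∀ x, HasDerivAt e1 (-k * e x) x)
    (b0 : q (2 * π) = q 0) (b1 : q1 (2 * π) = q1 0)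
    (c0 : e (2 * π) = e 0) (c1 : e1 (2 * π) = e1 0) :
    ∫ θ in (0:ℝ)..(2 * π), q2 θ * e θ = -k * ∫ θ in (0:ℝ)..(2 * π), q θ * e θ := by
  have cq : Continuous q := continuous_iff_continuousAt.2 fun x => (hq x).continuousAt
  have cq1 : Continuous q1 := continuous_iff_continuousAt.2 fun x => (hq1 x).continuousAt
  have ce : Continuous e := continuous_iff_continuousAt.2 fun x => (he x).continuousAt
  have ce1 : Continuous e1 := continuous_iff_continuousAt.2 fun x => (he1 x).continuousAt
  have key := intervalIntegral.integral_eq_sub_of_hasDerivAt (a := 0) (b := 2 * π)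
    (f := fun x => q1 x * e x - q x * e1 x)
    (fun x _ => ((hq1 x).mul (he x)).sub ((hq x).mul (he1 x)))
    (Continuous.intervalIntegrable (by fun_prop) _ _)
  simp only [b0, b1, c0, c1, sub_self] at key
  rw [← intervalIntegral.integral_const_mul, ← sub_eq_zero,
    ← intervalIntegral.integral_sub (Continuous.intervalIntegrable (by fun_prop) _ _)
      (Continuous.intervalIntegrable (by fun_prop) _ _), ← key]
  congr 1
  ext x
  ring

/-- A continuous periodic function all of whose Fourier modes vanish is zero. -/
theorem gowdy_fourier_zero {q : ℝ → ℝ} (hq : Continuous q) (hper : ∀ θ, q (θ + 2 * π) = q θ)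
    (hc : ∀ n : ℤ, ∫ θ in (0:ℝ)..(2 * π), q θ * cos (n * θ) = 0)
    (hs : ∀ n : ℤ, ∫ θ in (0:ℝ)..(2 * π), q θ * sin (n * θ) = 0) : ∀ θ, q θ = 0 := by
  have : Fact (0 < 2 * π) := ⟨by positivity⟩
  have hp : Function.Periodic (fun x => (q x : ℂ)) (2 * π) := fun x => by simp [hper]
  let f : C(AddCircle (2 * π), ℂ) := ⟨hp.lift, by
    refine continuous_coinduced_dom.2 ?_
    exact Complex.continuous_ofReal.comp hq⟩
  have hf : ∀ x : ℝ, f (x : AddCircle (2 * π)) = q x := fun x => hp.lift_coe x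
  have hz : ∀ n, fourierCoeff f n = 0 := by
    intro n
    rw [fourierCoeff_eq_intervalIntegral _ n 0, zero_add]
    have : ∀ x : ℝ, fourier (-n) (x : AddCircle (2 * π)) • f (x : AddCircle (2 * π)) =
        ((q x * cos (n * x) : ℝ) : ℂ) - Complex.I * ((q x * sin (n * x) : ℝ) : ℂ) := by
      intro x
      rw [hf, fourier_coe_apply, smul_eq_mul]
      have : (2 * π * Complex.I * ((-n : ℤ) : ℂ) * x / ((2 * π : ℝ) : ℂ)) =
          ((-(n * x) : ℝ) : ℂ) * Complex.I := by
        have : (π : ℂ) ≠ 0 := by exact_mod_cast pi_ne_zero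
        push_cast
        field_simp
      rw [this, Complex.exp_mul_I, ← Complex.ofReal_cos, ← Complex.ofReal_sin, cos_neg, sin_neg]
      push_cast
      ring
    simp_rw [this]
    rw [intervalIntegral.integral_sub (Continuous.intervalIntegrable (by fun_prop) _ _)
      (Continuous.intervalIntegrable (by fun_prop) _ _), intervalIntegral.integral_const_mul,
      intervalIntegral.integral_ofReal, intervalIntegral.integral_ofReal, hc, hs]
    simp
  intro θ
  have h := has_pointwise_sum_fourier_series_of_summable (f := f)
    (by rw [show fourierCoeff f = fun _ => 0 from funext hz]; exact summable_zero) (θ : AddCircle (2 * π))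
  simp only [hz, zero_smul] at h
  have := h.unique hasSum_zero
  rw [hf] at this
  exact_mod_cast this

theorem gowdy_unique {f : ℝ × ℝ → ℝ} (hf : ContDiff ℝ (⊤ : ℕ∞) f)
    (hper : ∀ τ θ, f (τ, θ + 2 * π) = f (τ, θ))
    (heq : ∀ τ θ : ℝ, deriv (fun s => deriv (fun s' => f (s', θ)) s) τ
        = exp (-2 * τ) * deriv (deriv (fun x => f (τ, x))) θ)
    (hlim : ∀ ε : ℝ, 0 < ε → ∃ T : ℝ, ∀ τ : ℝ, T ≤ τ → ∀ θ : ℝ,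
        |f (τ, θ)| + |deriv (fun s => f (s, θ)) τ| < ε) : ∀ τ θ, f (τ, θ) = 0 := by
  obtain ⟨f1, f2, sf1, sf2, d1, d2⟩ := gowdy_partials hf
  obtain ⟨f11, _, sf11, -, d11, -⟩ := gowdy_partials sf1
  obtain ⟨_, f22, -, sf22, -, d22⟩ := gowdy_partials sf2
  have heq' : ∀ τ θ, f11 (τ, θ) = exp (-2 * τ) * f22 (τ, θ) := by
    intro τ θ
    have h := heq τ θ
    rw [show (fun s => deriv (fun s' => f (s', θ)) s) = fun s => f1 (s, θ) from
      funext fun s => (d1 s θ).deriv, (d11 τ θ).deriv,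
      show deriv (fun x => f (τ, x)) = fun x => f2 (τ, x) from
      funext fun s => (d2 τ s).deriv, (d22 τ θ).deriv] at h
    exact h
  have hper2 : ∀ τ θ, f2 (τ, θ + 2 * π) = f2 (τ, θ) := by
    intro τ θ
    rw [← (d2 τ θ).deriv, ← (d2 τ (θ + 2 * π)).deriv, ← deriv_comp_add_const]
    simp only [hper]
  have lim0 : ∀ ε : ℝ, 0 < ε → ∃ T : ℝ, ∀ τ : ℝ, T ≤ τ → ∀ θ : ℝ, |f (τ, θ)| < ε := by
    intro ε hε
    obtain ⟨T, hT⟩ := hlim ε hε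
    exact ⟨T, fun τ hτ θ => by linarith [hT τ hτ θ, abs_nonneg (deriv (fun s => f (s, θ)) τ)]⟩
  have lim1 : ∀ ε : ℝ, 0 < ε → ∃ T : ℝ, ∀ τ : ℝ, T ≤ τ → ∀ θ : ℝ, |f1 (τ, θ)| < ε := by
    intro ε hε
    obtain ⟨T, hT⟩ := hlim ε hε
    refine ⟨T, fun τ hτ θ => ?_⟩
    have := hT τ hτ θ
    rw [(d1 τ θ).deriv] at this
    linarith [abs_nonneg (f (τ, θ))]
  have mode : ∀ (k : ℝ) (e e1 : ℝ → ℝ), 0 ≤ k → (∀ x, HasDerivAt e (e1 x) x) →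
      (∀ x, HasDerivAt e1 (-k * e x) x) → e (2 * π) = e 0 → e1 (2 * π) = e1 0 →
      (∀ x, |e x| ≤ 1) → ∀ τ, ∫ θ in (0:ℝ)..(2 * π), f (τ, θ) * e θ = 0 := by
    intro k e e1 hk he he1 c0 c1 hb
    have ce : Continuous e := continuous_iff_continuousAt.2 fun x => (he x).continuousAt
    refine gowdy_mode_zero hk
      (fun τ => gowdy_mode_deriv hf.continuous sf1.continuous d1 ce τ)
      (fun τ => ?_) (gowdy_mode_tendsto lim0 hb) (gowdy_mode_tendsto lim1 hb)
    refine HasDerivAt.congr_deriv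
      (gowdy_mode_deriv sf1.continuous sf11.continuous d11 ce τ) ?_
    have hc22 := sf22.continuous
    rw [← gowdy_mode_ibp (q := fun x => f (τ, x)) (fun x => d2 τ x) (fun x => d22 τ x)
      (by fun_prop) he he1 (by simpa using hper τ 0) (by simpa using hper2 τ 0) c0 c1,
      ← intervalIntegral.integral_const_mul]
    congr 1
    ext x
    rw [heq']; ring
  intro τ
  have hfc := hf.continuous
  refine gowdy_fourier_zero (q := fun x => f (τ, x)) (by fun_prop) (hper τ) (fun n => ?_)
    (fun n => ?_)
  · refine mode ((n:ℝ) ^ 2) (fun x => cos (n * x)) (fun x => -(n * sin (n * x))) (sq_nonneg _)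
      (fun x => ?_) (fun x => ?_) ?_ ?_ (fun x => abs_cos_le_one _) τ
    · have := ((hasDerivAt_id x).const_mul (n:ℝ)).cos
      refine HasDerivAt.congr_deriv this ?_
      simp; ring
    · have := (((hasDerivAt_id x).const_mul (n:ℝ)).sin.const_mul (n:ℝ)).neg
      refine HasDerivAt.congr_deriv this ?_
      simp; ring
    · simp
    · have := Real.sin_int_mul_pi (2 * n)
      push_cast at this
      simp only [mul_zero, sin_zero]
      rw [show (n:ℝ) * (2 * π) = 2 * n * π by ring, this, mul_zero]
  · refine mode ((n:ℝ) ^ 2) (fun x => sin (n * x)) (fun x => n * cos (n * x)) (sq_nonneg _)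
      (fun x => ?_) (fun x => ?_) ?_ ?_ (fun x => abs_sin_le_one _) τ
    · have := ((hasDerivAt_id x).const_mul (n:ℝ)).sin
      refine HasDerivAt.congr_deriv this ?_
      simp; ring
    · have := (((hasDerivAt_id x).const_mul (n:ℝ)).cos.const_mul (n:ℝ))
      refine HasDerivAt.congr_deriv this ?_
      simp; ring
    · have := Real.sin_int_mul_pi (2 * n)
      push_cast at this
      simp only [mul_zero, sin_zero]
      rw [show (n:ℝ) * (2 * π) = 2 * n * π by ring, this]
    · simp

/-- The map from polarized Gowdy solutions to asymptotic data is a bijection: for any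
smooth 2π-periodic `(v, φ)` there is a unique smooth solution `P` of the polarized
Gowdy wave equation with `sup_θ (|P - vτ - φ| + |∂τP - v|) → 0` as `τ → ∞`. -/
theorem polarized_gowdy_asymptotic_data_bijective
    (v φ : ℝ → ℝ)
    (hv : ContDiff ℝ (⊤ : ℕ∞) v) (hφ : ContDiff ℝ (⊤ : ℕ∞) φ)
    (hvper : ∀ θ : ℝ, v (θ + 2 * π) = v θ)
    (hφper : ∀ θ : ℝ, φ (θ + 2 * π) = φ θ) :
    ∃! P : ℝ → ℝ → ℝ,
      ContDiff ℝ (⊤ : ℕ∞) (fun p : ℝ × ℝ => P p.1 p.2) ∧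
      (∀ τ θ : ℝ, P τ (θ + 2 * π) = P τ θ) ∧
      (∀ τ θ : ℝ, deriv (fun s => deriv (fun s' => P s' θ) s) τ
        = Real.exp (-2 * τ) * deriv (deriv (P τ)) θ) ∧
      (∀ ε : ℝ, 0 < ε → ∃ T : ℝ, ∀ τ : ℝ, T ≤ τ → ∀ θ : ℝ,
        |P τ θ - v θ * τ - φ θ| + |deriv (fun s => P s θ) τ - v θ| < ε) := by
  have nv : GowdyNice v := ⟨hv, hvper⟩
  have nφ : GowdyNice φ := ⟨hφ, hφper⟩
  have hex : ContDiff ℝ (⊤ : ℕ∞) (fun p : ℝ × ℝ => gowdyP v φ p.1 p.2) ∧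
      (∀ τ θ : ℝ, gowdyP v φ τ (θ + 2 * π) = gowdyP v φ τ θ) ∧
      (∀ τ θ : ℝ, deriv (fun s => deriv (fun s' => gowdyP v φ s' θ) s) τ
        = Real.exp (-2 * τ) * deriv (deriv (gowdyP v φ τ)) θ) ∧
      (∀ ε : ℝ, 0 < ε → ∃ T : ℝ, ∀ τ : ℝ, T ≤ τ → ∀ θ : ℝ,
        |gowdyP v φ τ θ - v θ * τ - φ θ| + |deriv (fun s => gowdyP v φ s θ) τ - v θ| < ε) := by
    refine ⟨gowdyP_smooth nv nφ, fun τ θ => ?_, fun τ θ => ?_, gowdyP_asymp nv nφ⟩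
    · simp only [gowdyP, gowdyG]
      simp only [fun a : ℝ => show θ + 2 * π + a = (θ + a) + 2 * π by ring, hvper, hφper]
    · rw [(gowdyP_deriv_tau2 nv nφ τ θ).deriv,
        show deriv (gowdyP v φ τ) = gowdyP (deriv v) (deriv φ) τ from
        funext fun x => (gowdyP_deriv_theta nv nφ τ x).deriv,
        (gowdyP_deriv_theta nv.derivN nφ.derivN τ θ).deriv]
      rfl
  refine ⟨gowdyP v φ, hex, ?_⟩
  obtain ⟨s2, p2, e2, a2⟩ := hex
  rintro P ⟨s1, p1, e1, a1⟩
  generalize gowdyP v φ = R at *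
  obtain ⟨f1, f2, sf1, sf2, d1, d2⟩ := gowdy_partials s1
  obtain ⟨f11, _, -, -, d11, -⟩ := gowdy_partials sf1
  obtain ⟨_, f22, -, -, -, d22⟩ := gowdy_partials sf2
  obtain ⟨g1, g2, sg1, sg2, c1, c2⟩ := gowdy_partials s2
  obtain ⟨g11, _, -, -, c11, -⟩ := gowdy_partials sg1
  obtain ⟨_, g22, -, -, -, c22⟩ := gowdy_partials sg2
  simp only at d1 d2 c1 c2
  have key := gowdy_unique (f := fun p => P p.1 p.2 - R p.1 p.2) (s1.sub s2)
    (fun τ θ => by simp only [p1, p2]) (fun τ θ => ?_) (fun ε hε => ?_)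
  · funext τ θ
    exact sub_eq_zero.1 (key τ θ)
  · have h1 := e1 τ θ
    have h2 := e2 τ θ
    rw [show (fun s => deriv (fun s' => P s' θ) s) = fun s => f1 (s, θ) from
      funext fun s => (d1 s θ).deriv, (d11 τ θ).deriv,
      show deriv (P τ) = fun x => f2 (τ, x) from
      funext fun s => (d2 τ s).deriv, (d22 τ θ).deriv] at h1
    rw [show (fun s => deriv (fun s' => R s' θ) s) = fun s => g1 (s, θ) from
      funext fun s => (c1 s θ).deriv, (c11 τ θ).deriv,
      show deriv (R τ) = fun x => g2 (τ, x) from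
      funext fun s => (c2 τ s).deriv, (c22 τ θ).deriv] at h2
    simp only
    rw [show (fun s => deriv (fun s' => P s' θ - R s' θ) s) = fun s => f1 (s, θ) - g1 (s, θ) from
      funext fun s => ((d1 s θ).sub (c1 s θ)).deriv, show deriv (fun s => f1 (s, θ) - g1 (s, θ)) τ = f11 (τ, θ) - g11 (τ, θ) from
      ((d11 τ θ).sub (c11 τ θ)).deriv,
      show deriv (fun x => P τ x - R τ x) = fun x => f2 (τ, x) - g2 (τ, x) from
      funext fun s => ((d2 τ s).sub (c2 τ s)).deriv, 
      show deriv (fun x => f2 (τ, x) - g2 (τ, x)) θ = f22 (τ, θ) - g22 (τ, θ) from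
      ((d22 τ θ).sub (c22 τ θ)).deriv, h1, h2]
    ring
  · obtain ⟨T1, hT1⟩ := a1 (ε / 2) (by linarith)
    obtain ⟨T2, hT2⟩ := a2 (ε / 2) (by linarith)
    refine ⟨max T1 T2, fun τ hτ θ => ?_⟩
    have b1 := hT1 τ ((le_max_left _ _).trans hτ) θ
    have b2 := hT2 τ ((le_max_right _ _).trans hτ) θ
    simp only
    rw [show deriv (fun s => P s θ - R s θ) τ = f1 (τ, θ) - g1 (τ, θ) from
      ((d1 τ θ).sub (c1 τ θ)).deriv]
    rw [(d1 τ θ).deriv] at b1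
    rw [(c1 τ θ).deriv] at b2
    have q1 := abs_sub (P τ θ - v θ * τ - φ θ) (R τ θ - v θ * τ - φ θ)
    have q2 := abs_sub (f1 (τ, θ) - v θ) (g1 (τ, θ) - v θ)
    rw [show P τ θ - v θ * τ - φ θ - (R τ θ - v θ * τ - φ θ) = P τ θ - R τ θ by ring] at q1
    rw [show f1 (τ, θ) - v θ - (g1 (τ, θ) - v θ) = f1 (τ, θ) - g1 (τ, θ) by ring] at q2
    linarith
end

section
/- Let (P, Q) be a smooth solution of the T³ Gowdy system. Then for every θ the asymptotic velocity V(θ) := lim_{τ→∞} [ (∂τP(τ,θ))² + e^{2P(τ,θ)} (∂τQ(τ,θ))² ]^{1/2} exists (the limit is a well-defined nonnegative real number). -/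
open Real Filter

noncomputable section GowdyHelpers

def gdT (F : ℝ × ℝ → ℝ) (p : ℝ × ℝ) : ℝ := fderiv ℝ F p (1, 0)
def gdX (F : ℝ × ℝ → ℝ) (p : ℝ × ℝ) : ℝ := fderiv ℝ F p (0, 1)
/-- derivative along the characteristic `θ = k + σ e^{-s}` -/
def gdS (σ : ℝ) (F : ℝ × ℝ → ℝ) (p : ℝ × ℝ) : ℝ := gdT F p - σ * Real.exp (-p.1) * gdX F p

abbrev GSm (F : ℝ × ℝ → ℝ) : Prop := ContDiff ℝ (⊤ : ℕ∞) F

lemma GSm.dT {F : ℝ × ℝ → ℝ} (h : GSm F) : GSm (gdT F) :=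
  (h.fderiv_right (m := ((⊤ : ℕ∞) : WithTop ℕ∞)) (by simp)).clm_apply contDiff_const

lemma GSm.dX {F : ℝ × ℝ → ℝ} (h : GSm F) : GSm (gdX F) :=
  (h.fderiv_right (m := ((⊤ : ℕ∞) : WithTop ℕ∞)) (by simp)).clm_apply contDiff_const

lemma GSm.diff {F : ℝ × ℝ → ℝ} (h : GSm F) : Differentiable ℝ F :=
  h.differentiable (by simp)

lemma gcurve {F : ℝ × ℝ → ℝ} (h : GSm F) {γ : ℝ → ℝ} {γ' s : ℝ} (hγ : HasDerivAt γ γ' s) :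
    HasDerivAt (fun s => F (s, γ s)) (gdT F (s, γ s) + γ' * gdX F (s, γ s)) s := by
  have h1 := (h.diff (s, γ s)).hasFDerivAt.comp_hasDerivAt s ((hasDerivAt_id s).prodMk hγ)
  have : ((1 : ℝ), γ') = (1, 0) + γ' • ((0 : ℝ), (1 : ℝ)) := by simp
  rw [this, map_add, map_smul] at h1
  exact h1

lemma gsliceT {F : ℝ × ℝ → ℝ} (h : GSm F) (s x : ℝ) :
    HasDerivAt (fun s => F (s, x)) (gdT F (s, x)) s := by
  simpa using gcurve h (hasDerivAt_const s x)

lemma gsliceX {F : ℝ × ℝ → ℝ} (h : GSm F) (s x : ℝ) :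
    HasDerivAt (fun x => F (s, x)) (gdX F (s, x)) x :=
  (h.diff (s, x)).hasFDerivAt.comp_hasDerivAt x ((hasDerivAt_const x s).prodMk (hasDerivAt_id x))

lemma gchar {F : ℝ × ℝ → ℝ} (h : GSm F) (σ k s : ℝ) :
    HasDerivAt (fun s => F (s, k + σ * Real.exp (-s))) (gdS σ F (s, k + σ * Real.exp (-s))) s := by
  have h0 : HasDerivAt (fun s : ℝ => k + σ * Real.exp (-s)) (σ * (Real.exp (-s) * (-1))) s :=
    (((hasDerivAt_neg s).exp).const_mul σ).const_add k
  have := gcurve h h0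
  convert this using 1
  simp only [gdS]; ring

lemma gsymm {F : ℝ × ℝ → ℝ} (h : GSm F) (p : ℝ × ℝ) : gdT (gdX F) p = gdX (gdT F) p := by
  have hd : DifferentiableAt ℝ (fderiv ℝ F) p :=
    ((h.fderiv_right (m := ((⊤ : ℕ∞) : WithTop ℕ∞)) (by simp)).differentiable (by simp)) p
  have hs : IsSymmSndFDerivAt ℝ F p :=
    h.contDiffAt.isSymmSndFDerivAt (by
      rw [minSmoothness_of_isRCLikeNormedField]
      exact WithTop.coe_le_coe.2 le_top)
  have e : ∀ u v : ℝ × ℝ, fderiv ℝ (fun q => fderiv ℝ F q u) p v = fderiv ℝ (fderiv ℝ F) p v u := by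
    intro u v
    rw [fderiv_clm_apply hd (differentiableAt_const u)]
    simp
  change fderiv ℝ (fun q => fderiv ℝ F q (0,1)) p (1,0) = fderiv ℝ (fun q => fderiv ℝ F q (1,0)) p (0,1)
  rw [e, e]
  exact hs _ _

/-- cone -/
def GCone (θ₀ : ℝ) (p : ℝ × ℝ) : Prop := |p.2 - θ₀| ≤ Real.exp (-p.1)

lemma gcone_back {θ₀ σ k s T : ℝ} (hσ : |σ| = 1) (hsT : s ≤ T)
    (h : GCone θ₀ (T, k + σ * Real.exp (-T))) : GCone θ₀ (s, k + σ * Real.exp (-s)) := by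
  simp only [GCone] at *
  have he : Real.exp (-T) ≤ Real.exp (-s) := Real.exp_le_exp.2 (by linarith)
  have : k + σ * Real.exp (-s) - θ₀
      = (k + σ * Real.exp (-T) - θ₀) + σ * (Real.exp (-s) - Real.exp (-T)) := by ring
  rw [this]
  refine (abs_add_le _ _).trans ?_
  rw [abs_mul, hσ, abs_of_nonneg (by linarith : 0 ≤ Real.exp (-s) - Real.exp (-T))]
  linarith

lemma gexp_mono {G G' : ℝ → ℝ} {l S T X : ℝ} (hST : S ≤ T)
    (hG : ∀ s ∈ Set.Icc S T, HasDerivAt G (G' s) s)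
    (h : ∀ s ∈ Set.Icc S T, G' s ≤ l * (X - G s)) :
    Real.exp (l * T) * (G T - X) ≤ Real.exp (l * S) * (G S - X) := by
  have hd : ∀ s ∈ Set.Icc S T, HasDerivAt (fun s => Real.exp (l * s) * (G s - X))
      (Real.exp (l * s) * (l * 1) * (G s - X) + Real.exp (l * s) * G' s) s := by
    intro s hs
    exact (((hasDerivAt_id s).const_mul l).exp).mul ((hG s hs).sub_const X)
  have ha : AntitoneOn (fun s => Real.exp (l * s) * (G s - X)) (Set.Icc S T) := by
    apply antitoneOn_of_deriv_nonpos (convex_Icc S T)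
    · intro s hs; exact (hd s hs).continuousAt.continuousWithinAt
    · intro s hs; rw [interior_Icc] at hs
      exact (hd s ⟨hs.1.le, hs.2.le⟩).differentiableAt.differentiableWithinAt
    · intro s hs; rw [interior_Icc] at hs
      have hs' : s ∈ Set.Icc S T := ⟨hs.1.le, hs.2.le⟩
      rw [(hd s hs').deriv]
      have h1 := h s hs'
      have h2 := Real.exp_pos (l * s)
      nlinarith [mul_le_mul_of_nonneg_left h1 h2.le]
  exact ha (Set.left_mem_Icc.2 hST) (Set.right_mem_Icc.2 hST) hST

/-- maximum principle along one family of characteristics -/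
lemma gmax_aux {θ₀ σ l X s₀ B : ℝ} (hσ : |σ| = 1) {f : ℝ × ℝ → ℝ} (hf : GSm f)
    {T x : ℝ} (hp : GCone θ₀ (T, x)) (hT : s₀ ≤ T)
    (hd : ∀ p, GCone θ₀ p → s₀ ≤ p.1 → p.1 ≤ T → gdS σ f p ≤ l * (X - f p))
    (hB : ∀ y, GCone θ₀ (s₀, y) → f (s₀, y) ≤ B) (hX : f (T, x) = X) : X ≤ B := by
  set k := x - σ * Real.exp (-T) with hk
  have hx : x = k + σ * Real.exp (-T) := by rw [hk]; ring
  rw [hx] at hp hX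
  have := gexp_mono (G := fun s => f (s, k + σ * Real.exp (-s))) (l := l) (X := X) hT
    (fun s _ => gchar hf σ k s)
    (fun s hs => hd _ (gcone_back hσ hs.2 hp) hs.1 hs.2)
  simp only [hX, sub_self, mul_zero] at this
  have h1 := hB _ (gcone_back hσ hT hp)
  have h2 := Real.exp_pos (l * s₀)
  by_contra hc
  push Not at hc
  nlinarith [mul_pos h2 (by linarith : 0 < X - f (s₀, k + σ * Real.exp (-s₀)))]

lemma gcone_compact (θ₀ s₀ T : ℝ) : IsCompact {p : ℝ × ℝ | GCone θ₀ p ∧ s₀ ≤ p.1 ∧ p.1 ≤ T} := by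
  apply IsCompact.of_isClosed_subset
    ((isCompact_Icc (a := s₀) (b := T)).prod
      (isCompact_Icc (a := θ₀ - Real.exp (-s₀)) (b := θ₀ + Real.exp (-s₀))))
  · refine IsClosed.inter ?_ (IsClosed.inter ?_ ?_)
    · exact isClosed_le (f := fun p : ℝ × ℝ => |p.2 - θ₀|) (g := fun p : ℝ × ℝ => Real.exp (-p.1))
        (by fun_prop) (by fun_prop)
    · exact isClosed_le (f := fun _ : ℝ × ℝ => s₀) (g := fun p : ℝ × ℝ => p.1)
        (by fun_prop) (by fun_prop)
    · exact isClosed_le (f := fun p : ℝ × ℝ => p.1) (g := fun _ : ℝ × ℝ => T)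
        (by fun_prop) (by fun_prop)
  · rintro ⟨s, x⟩ ⟨h1, h2, h3⟩
    simp only [GCone] at h1 h2 h3
    have := Real.exp_le_exp.2 (neg_le_neg h2)
    have h4 := abs_le.1 h1
    refine ⟨⟨h2, h3⟩, ?_, ?_⟩ <;> simp only <;> linarith

lemma gmax {θ₀ l s₀ B C : ℝ} (hl : 0 ≤ l) (hCB : C ≤ B) {f g : ℝ × ℝ → ℝ} (hf : GSm f) (hg : GSm g)
    (hdf : ∀ p, GCone θ₀ p → s₀ ≤ p.1 → gdS 1 f p ≤ l * (max (g p) C - f p))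
    (hdg : ∀ p, GCone θ₀ p → s₀ ≤ p.1 → gdS (-1) g p ≤ l * (max (f p) C - g p))
    (hfB : ∀ y, GCone θ₀ (s₀, y) → f (s₀, y) ≤ B)
    (hgB : ∀ y, GCone θ₀ (s₀, y) → g (s₀, y) ≤ B) :
    ∀ p, GCone θ₀ p → s₀ ≤ p.1 → f p ≤ B ∧ g p ≤ B := by
  rintro ⟨T, x⟩ hp hT
  have hc := gcone_compact θ₀ s₀ T
  obtain ⟨⟨s, y⟩, ⟨hq, hs0, hsT⟩, hmax⟩ := hc.exists_isMaxOn ⟨(T, x), hp, hT, le_refl _⟩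
    (f := fun p => max (f p) (g p)) (hf.continuous.max hg.continuous).continuousOn
  set X := max (f (s, y)) (g (s, y)) with hX
  have hbd : ∀ p, GCone θ₀ p → s₀ ≤ p.1 → p.1 ≤ s → f p ≤ X ∧ g p ≤ X := by
    intro p h1 h2 h3
    exact max_le_iff.1 (hmax ⟨h1, h2, h3.trans hsT⟩)
  have hXB : X ≤ B := by
    by_contra hcon
    push Not at hcon
    rcases le_total (g (s, y)) (f (s, y)) with h | h
    · have hfX : f (s, y) = X := by rw [hX, max_eq_left h]
      refine absurd (gmax_aux (σ := 1) (l := l) (by simp) hf hq hs0 ?_ hfB hfX) (not_le.2 hcon)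
      intro p h1 h2 h3
      refine (hdf p h1 h2).trans (mul_le_mul_of_nonneg_left ?_ hl)
      have := max_le (hbd p h1 h2 h3).2 (by linarith : C ≤ X)
      linarith
    · have hfX : g (s, y) = X := by rw [hX, max_eq_right h]
      refine absurd (gmax_aux (σ := -1) (l := l) (by simp) hg hq hs0 ?_ hgB hfX) (not_le.2 hcon)
      intro p h1 h2 h3
      refine (hdg p h1 h2).trans (mul_le_mul_of_nonneg_left ?_ hl)
      have := max_le (hbd p h1 h2 h3).1 (by linarith : C ≤ X)
      linarith
  have hfin : max (f (T, x)) (g (T, x)) ≤ X := hmax ⟨hp, hT, le_refl _⟩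
  have := max_le_iff.1 hfin
  exact ⟨this.1.trans hXB, this.2.trans hXB⟩

lemma gstep {G Y : ℝ → ℝ} {T K δ η : ℝ} (hK : 0 < K) (hδ : 0 < δ)
    (hG : ∀ s ∈ Set.Icc (T - 2) T, HasDerivAt G ((Y s - G s) / 2) s)
    (hY : ∀ s ∈ Set.Icc (T - 2) T, 0 ≤ Y s)
    (hG0 : ∀ s ∈ Set.Icc (T - 2) T, 0 ≤ G s)
    (hL : ∀ s ∈ Set.Icc (T - 2) T, ∀ s' ∈ Set.Icc (T - 2) T, s ≤ s' → Y s' - Y s ≤ K * (s' - s))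
    (hGT : G T ≤ η) (hη : 24 * η < δ * min 1 (δ / (2 * K))) :
    ∀ s ∈ Set.Icc (T - 1) T, G s ≤ 3 * η ∧ Y s < δ := by
  have hη0 : 0 ≤ η := (hG0 T ⟨by linarith, le_refl _⟩).trans hGT
  have hG3 : ∀ s ∈ Set.Icc (T - 2) T, G s ≤ 3 * η := by
    intro s hs
    have := gexp_mono (G := fun s => -G s) (G' := fun s => -((Y s - G s) / 2)) (l := 1 / 2) (X := 0)
      hs.2 (fun u hu => (hG u ⟨hs.1.trans hu.1, hu.2⟩).neg)
      (fun u hu => by have := hY u ⟨hs.1.trans hu.1, hu.2⟩; linarith)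
    have h1 : Real.exp (1 / 2 * T) = Real.exp (1 / 2 * s) * Real.exp (1 / 2 * (T - s)) := by
      rw [← Real.exp_add]; ring_nf
    have h2 : Real.exp (1 / 2 * (T - s)) ≤ 3 := by
      have := Real.exp_le_exp.2 (by linarith [hs.1] : 1 / 2 * (T - s) ≤ 1)
      have := Real.exp_one_lt_d9
      linarith
    rw [h1] at this
    have h3 := Real.exp_pos (1 / 2 * s)
    have h4 : Real.exp (1 / 2 * s) * G s
        ≤ Real.exp (1 / 2 * s) * (Real.exp (1 / 2 * (T - s)) * G T) := by linarith
    have h5 := le_of_mul_le_mul_left h4 h3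
    have h6 := Real.exp_pos (1 / 2 * (T - s))
    nlinarith [hG0 T ⟨by linarith, le_refl _⟩]
  intro s hs
  have hs2 : s ∈ Set.Icc (T - 2) T := ⟨by linarith [hs.1], hs.2⟩
  refine ⟨hG3 s hs2, ?_⟩
  by_contra hc
  push Not at hc
  set r := min 1 (δ / (2 * K)) with hr
  have hr0 : 0 < r := lt_min one_pos (by positivity)
  have hr1 : r ≤ 1 := min_le_left _ _
  have hrK : K * r ≤ δ / 2 := by
    have := mul_le_mul_of_nonneg_left (min_le_right 1 (δ / (2 * K))) hK.le
    rw [← hr] at this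
    have e : K * (δ / (2 * K)) = δ / 2 := by field_simp
    linarith
  have hsub : ∀ u ∈ Set.Icc (s - r) s, u ∈ Set.Icc (T - 2) T := fun u hu =>
    ⟨by linarith [hu.1, hs.1], hu.2.trans hs.2⟩
  have hmvt : r * δ / 8 * 1 ≤ G s - G (s - r) := by
    have := (convex_Icc (s - r) s).mul_sub_le_image_sub_of_le_deriv (f := G) (C := δ / 8)
      (fun u hu => (hG u (hsub u hu)).continuousAt.continuousWithinAt)
      (fun u hu => by
        rw [interior_Icc] at hu
        exact (hG u (hsub u ⟨hu.1.le, hu.2.le⟩)).differentiableAt.differentiableWithinAt)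
      (fun u hu => by
        rw [interior_Icc] at hu
        have hu' := hsub u ⟨hu.1.le, hu.2.le⟩
        rw [(hG u hu').deriv]
        have h1 := hL u hu' s hs2 hu.2.le
        have h2 := hG3 u hu'
        have h3 : K * (s - u) ≤ K * r := mul_le_mul_of_nonneg_left (by linarith [hu.1]) hK.le
        nlinarith)
      (s - r) ⟨le_refl _, by linarith⟩ s ⟨by linarith, le_refl _⟩ (by linarith)
    linarith
  have h1 := hG3 s hs2
  have h2 := hG0 (s - r) (hsub _ ⟨le_refl _, by linarith⟩)
  linarith

lemma gstep_char {θ₀ σ s₀ L K δ η : ℝ} (hσ : |σ| = 1) {f g W : ℝ × ℝ → ℝ}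
    (hf : GSm f) (hg : GSm g) (hW : GSm W) (hK : 0 < K) (hδ : 0 < δ)
    (hdf : ∀ p, gdS σ f p = (g p - f p) / 2 - W p / 2)
    (hfL : ∀ p, GCone θ₀ p → s₀ ≤ p.1 → f p ≤ L) (hgL : ∀ p, GCone θ₀ p → s₀ ≤ p.1 → g p ≤ L)
    (hW0 : ∀ p, 0 ≤ W p)
    (hLip : ∀ p, GCone θ₀ p → s₀ ≤ p.1 → gdS σ W p - gdS σ g p ≤ K)
    {T k : ℝ} (hT : s₀ + 2 ≤ T) (hp : GCone θ₀ (T, k + σ * Real.exp (-T)))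
    (hη : 24 * η < δ * min 1 (δ / (2 * K)))
    (hfT : L - f (T, k + σ * Real.exp (-T)) ≤ η) :
    ∀ s ∈ Set.Icc (T - 1) T, L - f (s, k + σ * Real.exp (-s)) ≤ 3 * η ∧
      L - g (s, k + σ * Real.exp (-s)) + W (s, k + σ * Real.exp (-s)) < δ := by
  have hc : ∀ s ∈ Set.Icc (T - 2) T, GCone θ₀ (s, k + σ * Real.exp (-s)) := fun s hs =>
    gcone_back hσ hs.2 hp
  have hY : ∀ s, HasDerivAt (fun s => L - g (s, k + σ * Real.exp (-s)) + W (s, k + σ * Real.exp (-s)))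
      (gdS σ W (s, k + σ * Real.exp (-s)) - gdS σ g (s, k + σ * Real.exp (-s))) s := by
    intro s
    exact (((gchar hg σ k s).const_sub L).add (gchar hW σ k s)).congr_deriv (by ring)
  refine gstep (G := fun s => L - f (s, k + σ * Real.exp (-s)))
    (Y := fun s => L - g (s, k + σ * Real.exp (-s)) + W (s, k + σ * Real.exp (-s)))
    hK hδ ?_ ?_ ?_ ?_ hfT hη
  · intro s hs
    refine ((gchar hf σ k s).const_sub L).congr_deriv ?_
    rw [hdf]; ring
  · intro s hs
    have := hgL _ (hc s hs) (by simp only; linarith [hs.1])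
    have := hW0 (s, k + σ * Real.exp (-s))
    linarith
  · intro s hs
    have := hfL _ (hc s hs) (by simp only; linarith [hs.1])
    linarith
  · intro s hs s' hs' hss
    refine (convex_Icc (T - 2) T).image_sub_le_mul_sub_of_deriv_le
      (f := fun s => L - g (s, k + σ * Real.exp (-s)) + W (s, k + σ * Real.exp (-s)))
      (fun u _ => (hY u).continuousAt.continuousWithinAt)
      (fun u _ => (hY u).differentiableAt.differentiableWithinAt) ?_ s hs s' hs' hss
    intro u hu
    rw [interior_Icc] at hu
    rw [(hY u).deriv]
    exact hLip _ (hc u ⟨hu.1.le, hu.2.le⟩) (by simp only; linarith [hu.1])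

lemma gtwo {θ₀ σ s₀ L K δ₁ δ₂ η : ℝ} (hσ : |σ| = 1) {f g W : ℝ × ℝ → ℝ}
    (hf : GSm f) (hg : GSm g) (hW : GSm W) (hK : 0 < K) (hδ₁ : 0 < δ₁) (hδ₂ : 0 < δ₂)
    (hdf : ∀ p, gdS σ f p = (g p - f p) / 2 - W p / 2)
    (hdg : ∀ p, gdS (-σ) g p = (f p - g p) / 2 - W p / 2)
    (hfL : ∀ p, GCone θ₀ p → s₀ ≤ p.1 → f p ≤ L) (hgL : ∀ p, GCone θ₀ p → s₀ ≤ p.1 → g p ≤ L)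
    (hW0 : ∀ p, 0 ≤ W p)
    (hLip : ∀ p, GCone θ₀ p → s₀ ≤ p.1 → gdS σ W p - gdS σ g p ≤ K)
    (hLip' : ∀ p, GCone θ₀ p → s₀ ≤ p.1 → gdS (-σ) W p - gdS (-σ) f p ≤ K)
    {S x : ℝ} (hS : s₀ + 2 ≤ S) (hp : GCone θ₀ (S + Real.log 2, x))
    (hη : 24 * η < δ₁ * min 1 (δ₁ / (2 * K)))
    (hη₁ : 24 * δ₁ < δ₂ * min 1 (δ₂ / (2 * K)))
    (hfT : L - f (S + Real.log 2, x) ≤ η) :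
    L - g (S, θ₀) ≤ 3 * δ₁ ∧ L - f (S, θ₀) + W (S, θ₀) < δ₂ := by
  set T := S + Real.log 2 with hT
  have hl0 : 0 < Real.log 2 := Real.log_pos (by norm_num)
  have hl1 : Real.log 2 < 1 := by have := Real.log_two_lt_d9; linarith
  set e := Real.exp (-T) with he
  have he0 : 0 < e := Real.exp_pos _
  have heS : Real.exp (-S) = 2 * e := by
    rw [he, hT, neg_add, Real.exp_add, Real.exp_neg (Real.log 2), Real.exp_log (by norm_num)]; ring
  have hx : |x - θ₀| ≤ e := hp
  have hσ2 : σ * σ = 1 := by rw [← abs_mul_abs_self, hσ]; norm_num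
  have hσx : |σ * (θ₀ - x)| ≤ e := by rw [abs_mul, hσ, one_mul, abs_sub_comm]; exact hx
  obtain ⟨hx1, hx2⟩ := abs_le.1 hσx
  -- the turning time
  set m := (σ * (θ₀ - x) + 3 * e) / 2 with hm
  have hm1 : e ≤ m := by rw [hm]; linarith
  have hm2 : m ≤ 2 * e := by rw [hm]; linarith
  have hm0 : 0 < m := by linarith
  set s := -Real.log m with hs
  have hes : Real.exp (-s) = m := by rw [hs, neg_neg, Real.exp_log hm0]
  have hsT : s ≤ T := by
    have : Real.exp (-T) ≤ Real.exp (-s) := by rw [hes]; exact hm1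
    have := Real.exp_le_exp.1 this
    linarith
  have hSs : S ≤ s := by
    have : Real.exp (-s) ≤ Real.exp (-S) := by rw [hes, heS]; exact hm2
    have := Real.exp_le_exp.1 this
    linarith
  have hxk : x = (x - σ * e) + σ * Real.exp (-T) := by rw [← he]; ring
  rw [hxk] at hp hfT
  have h1 := (gstep_char hσ hf hg hW hK hδ₁ hdf hfL hgL hW0 hLip (by linarith) hp hη hfT
    s ⟨by linarith, hsT⟩).2
  have hp2 := gcone_back hσ hsT hp
  set x' := (x - σ * e) + σ * Real.exp (-s) with hx'
  have hxk' : x' = (x' + σ * m) + (-σ) * Real.exp (-s) := by rw [hes]; ring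
  have h1' : L - g (s, x') ≤ δ₁ := by linarith [hW0 (s, x')]
  rw [hxk'] at h1' hp2
  have h2 := gstep_char (σ := -σ) (by rw [abs_neg, hσ]) hg hf hW hK hδ₂ hdg hgL hfL hW0 hLip'
    (by linarith) hp2 hη₁ h1' S ⟨by linarith, hSs⟩
  have hend : (x' + σ * m) + (-σ) * Real.exp (-S) = θ₀ := by
    rw [hx', hes, heS, hm]
    linear_combination (θ₀ - x) * hσ2
  rw [hend] at h2
  exact h2

lemma gmain {θ₀ K : ℝ} {f g W : ℝ × ℝ → ℝ}
    (hf : GSm f) (hg : GSm g) (hW : GSm W) (hK : 0 < K)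
    (hdf : ∀ p, gdS 1 f p = (g p - f p) / 2 - W p / 2)
    (hdg : ∀ p, gdS (-1) g p = (f p - g p) / 2 - W p / 2)
    (hf0 : ∀ p, 0 ≤ f p) (hW0 : ∀ p, 0 ≤ W p)
    (hLip : ∀ p, GCone θ₀ p → 0 ≤ p.1 → gdS 1 W p - gdS 1 g p ≤ K)
    (hLip' : ∀ p, GCone θ₀ p → 0 ≤ p.1 → gdS (-1) W p - gdS (-1) f p ≤ K) :
    ∃ L : ℝ, Tendsto (fun s => (f (s, θ₀) + g (s, θ₀)) / 2 - W (s, θ₀) / 4) atTop (nhds L) := by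
  have hex : ∀ T : ℝ, ∃ x, GCone θ₀ (T, x) ∧
      ∀ y, GCone θ₀ (T, y) → max (f (T, y)) (g (T, y)) ≤ max (f (T, x)) (g (T, x)) := by
    intro T
    obtain ⟨⟨s, x⟩, ⟨h1, h2, h3⟩, hmax⟩ := (gcone_compact θ₀ T T).exists_isMaxOn
      ⟨(T, θ₀), by simp [GCone, Real.exp_nonneg], le_refl _, le_refl _⟩
      (f := fun p => max (f p) (g p)) (hf.continuous.max hg.continuous).continuousOn
    have hs : s = T := le_antisymm h3 h2
    subst hs
    exact ⟨x, h1, fun y hy => hmax ⟨hy, le_refl _, le_refl _⟩⟩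
  choose ξ hξ hmax using hex
  set N : ℝ → ℝ := fun T => max (f (T, ξ T)) (g (T, ξ T)) with hN
  have hbd : ∀ s₀ p, GCone θ₀ p → s₀ ≤ p.1 → f p ≤ N s₀ ∧ g p ≤ N s₀ := by
    intro s₀
    refine gmax (l := 1 / 2) (C := 0) (by norm_num) ((hf0 _).trans (le_max_left _ _)) hf hg ?_ ?_ ?_ ?_
    · intro p _ _
      have := le_max_left (g p) 0
      have := hW0 p
      rw [hdf]; linarith
    · intro p _ _
      have := le_max_left (f p) 0
      have := hW0 p
      rw [hdg]; linarith
    · intro y hy; exact (le_max_left _ _).trans (hmax s₀ y hy)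
    · intro y hy; exact (le_max_right _ _).trans (hmax s₀ y hy)
  have hanti : Antitone N := by
    intro s T hsT
    have := hbd s (T, ξ T) (hξ T) hsT
    exact max_le this.1 this.2
  have hbb : BddBelow (Set.range N) := ⟨0, by rintro _ ⟨T, rfl⟩; exact (hf0 _).trans (le_max_left _ _)⟩
  have hlim := tendsto_atTop_ciInf hanti hbb
  set L := ⨅ T, N T with hL
  have hLN : ∀ T, L ≤ N T := fun T => ciInf_le hbb T
  refine ⟨L, ?_⟩
  rw [Metric.tendsto_atTop]
  intro ε hε
  -- choose the small parameters
  set r : ℝ → ℝ := fun δ => δ * min 1 (δ / (2 * K)) with hr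
  have hrpos : ∀ δ, 0 < δ → 0 < r δ := fun δ hδ => mul_pos hδ (lt_min one_pos (by positivity))
  set δ₂ := ε / 4 with hδ₂
  have hδ₂p : 0 < δ₂ := by positivity
  set δ₁ := min (r δ₂ / 48) (ε / 12) with hδ₁
  have hδ₁p : 0 < δ₁ := lt_min (by have := hrpos _ hδ₂p; positivity) (by positivity)
  set η := min (r δ₁ / 48) (ε / 4) with hη
  have hηp : 0 < η := lt_min (by have := hrpos _ hδ₁p; positivity) (by positivity)
  have c1 : 24 * δ₁ < r δ₂ := by
    have := min_le_left (r δ₂ / 48) (ε / 12); have := hrpos _ hδ₂p; linarith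
  have c2 : 24 * η < r δ₁ := by
    have := min_le_left (r δ₁ / 48) (ε / 4); have := hrpos _ hδ₁p; linarith
  have c3 : δ₁ ≤ ε / 12 := min_le_right _ _
  have c4 : η ≤ ε / 4 := min_le_right _ _
  obtain ⟨s₁, hs₁⟩ := (Metric.tendsto_atTop.1 hlim) η hηp
  set s₀ := max s₁ 0 with hs₀
  have hN0 : N s₀ ≤ L + η := by
    have := hs₁ s₀ (le_max_left _ _)
    rw [Real.dist_eq] at this
    linarith [(abs_lt.1 this).2]
  have hs00 : 0 ≤ s₀ := le_max_right _ _
  have hfL : ∀ p, GCone θ₀ p → s₀ ≤ p.1 → f p ≤ L + η := fun p h1 h2 =>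
    (hbd s₀ p h1 h2).1.trans hN0
  have hgL : ∀ p, GCone θ₀ p → s₀ ≤ p.1 → g p ≤ L + η := fun p h1 h2 =>
    (hbd s₀ p h1 h2).2.trans hN0
  refine ⟨s₀ + 2, fun S hS => ?_⟩
  have hcS : GCone θ₀ (S, θ₀) := by simp [GCone, Real.exp_nonneg]
  have u1 := hfL _ hcS (by simp only; linarith)
  have u2 := hgL _ hcS (by simp only; linarith)
  have u3 := hW0 (S, θ₀)
  have hNT := hLN (S + Real.log 2)
  rw [Real.dist_eq, abs_lt]
  rcases le_total (g (S + Real.log 2, ξ (S + Real.log 2))) (f (S + Real.log 2, ξ (S + Real.log 2)))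
    with h | h
  · have hNe : N (S + Real.log 2) = f (S + Real.log 2, ξ (S + Real.log 2)) := max_eq_left h
    have := gtwo (σ := 1) (θ₀ := θ₀) (s₀ := s₀) (L := L + η) (by simp) hf hg hW hK hδ₁p hδ₂p hdf hdg
      hfL hgL hW0 (fun p h1 h2 => hLip p h1 (hs00.trans h2)) (fun p h1 h2 => hLip' p h1 (hs00.trans h2))
      hS (hξ _) c2 c1 (by linarith)
    constructor <;> linarith [this.1, this.2]
  · have hNe : N (S + Real.log 2) = g (S + Real.log 2, ξ (S + Real.log 2)) := max_eq_right h
    have := gtwo (σ := -1) (θ₀ := θ₀) (s₀ := s₀) (L := L + η) (by simp) hg hf hW hK hδ₁p hδ₂p hdg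
      (by simpa using hdf)
      hgL hfL hW0 (fun p h1 h2 => hLip' p h1 (hs00.trans h2))
      (by simpa using fun p h1 h2 => hLip p h1 (hs00.trans h2))
      hS (hξ _) c2 c1 (by linarith)
    constructor <;> linarith [this.1, this.2]

lemma gdX_add {f g : ℝ × ℝ → ℝ} {p : ℝ × ℝ} (hf : DifferentiableAt ℝ f p) (hg : DifferentiableAt ℝ g p) :
    gdX (fun p => f p + g p) p = gdX f p + gdX g p := by
  simp only [gdX, fderiv_fun_add hf hg, add_apply]
lemma gdT_add {f g : ℝ × ℝ → ℝ} {p : ℝ × ℝ} (hf : DifferentiableAt ℝ f p) (hg : DifferentiableAt ℝ g p) :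
    gdT (fun p => f p + g p) p = gdT f p + gdT g p := by
  simp only [gdT, fderiv_fun_add hf hg, add_apply]
lemma gdX_sub {f g : ℝ × ℝ → ℝ} {p : ℝ × ℝ} (hf : DifferentiableAt ℝ f p) (hg : DifferentiableAt ℝ g p) :
    gdX (fun p => f p - g p) p = gdX f p - gdX g p := by
  simp only [gdX, fderiv_fun_sub hf hg, sub_apply]
lemma gdT_sub {f g : ℝ × ℝ → ℝ} {p : ℝ × ℝ} (hf : DifferentiableAt ℝ f p) (hg : DifferentiableAt ℝ g p) :
    gdT (fun p => f p - g p) p = gdT f p - gdT g p := by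
  simp only [gdT, fderiv_fun_sub hf hg, sub_apply]
lemma gdX_mul {f g : ℝ × ℝ → ℝ} {p : ℝ × ℝ} (hf : DifferentiableAt ℝ f p) (hg : DifferentiableAt ℝ g p) :
    gdX (fun p => f p * g p) p = f p * gdX g p + g p * gdX f p := by
  simp only [gdX, fderiv_fun_mul hf hg, add_apply, smul_apply, smul_eq_mul]
lemma gdT_mul {f g : ℝ × ℝ → ℝ} {p : ℝ × ℝ} (hf : DifferentiableAt ℝ f p) (hg : DifferentiableAt ℝ g p) :
    gdT (fun p => f p * g p) p = f p * gdT g p + g p * gdT f p := by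
  simp only [gdT, fderiv_fun_mul hf hg, add_apply, smul_apply, smul_eq_mul]
lemma gdX_const (c : ℝ) (p : ℝ × ℝ) : gdX (fun _ => c) p = 0 := by simp [gdX]
lemma gdT_const (c : ℝ) (p : ℝ × ℝ) : gdT (fun _ => c) p = 0 := by simp [gdT]

def gE (p : ℝ × ℝ) : ℝ := Real.exp (-p.1)
lemma gE_sm : GSm gE := by unfold GSm gE; fun_prop
lemma gdT_E (p : ℝ × ℝ) : gdT gE p = -gE p := by
  have h := gsliceT gE_sm p.1 p.2
  have h2 : HasDerivAt (fun s => gE (s, p.2)) (Real.exp (-p.1) * (-1)) p.1 := (hasDerivAt_neg p.1).exp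
  have := h.unique h2
  simp only [gE] at *
  linarith
lemma gdX_E (p : ℝ × ℝ) : gdX gE p = 0 :=
  (gsliceX gE_sm p.1 p.2).unique (hasDerivAt_const p.2 (Real.exp (-p.1)))

lemma gdS_add {σ : ℝ} {f g : ℝ × ℝ → ℝ} {p : ℝ × ℝ} (hf : DifferentiableAt ℝ f p)
    (hg : DifferentiableAt ℝ g p) : gdS σ (fun p => f p + g p) p = gdS σ f p + gdS σ g p := by
  simp only [gdS, gdX_add hf hg, gdT_add hf hg]; ring
lemma gdS_sub {σ : ℝ} {f g : ℝ × ℝ → ℝ} {p : ℝ × ℝ} (hf : DifferentiableAt ℝ f p)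
    (hg : DifferentiableAt ℝ g p) : gdS σ (fun p => f p - g p) p = gdS σ f p - gdS σ g p := by
  simp only [gdS, gdX_sub hf hg, gdT_sub hf hg]; ring
lemma gdS_mul {σ : ℝ} {f g : ℝ × ℝ → ℝ} {p : ℝ × ℝ} (hf : DifferentiableAt ℝ f p)
    (hg : DifferentiableAt ℝ g p) :
    gdS σ (fun p => f p * g p) p = f p * gdS σ g p + g p * gdS σ f p := by
  simp only [gdS, gdX_mul hf hg, gdT_mul hf hg]; ring
lemma gdS_const (σ c : ℝ) (p : ℝ × ℝ) : gdS σ (fun _ => c) p = 0 := by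
  simp only [gdS, gdX_const, gdT_const]; ring
lemma gdS_E (σ : ℝ) (p : ℝ × ℝ) : gdS σ gE p = -gE p := by
  simp only [gdS, gdX_E, gdT_E]; ring
lemma gdS_flip (σ : ℝ) (f : ℝ × ℝ → ℝ) (p : ℝ × ℝ) :
    gdS σ f p = gdS (-σ) f p - 2 * σ * gE p * gdX f p := by
  simp only [gdS, gE]; ring
lemma gdS_comm {f : ℝ × ℝ → ℝ} (hf : GSm f) (σ : ℝ) (p : ℝ × ℝ) :
    gdS σ (gdX f) p = gdX (gdS σ f) p := by
  have e : gdS σ f = fun p => gdT f p - (σ * gE p) * gdX f p := rfl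
  have d1 := hf.dT.diff
  have d2 := hf.dX.diff
  have d3 := gE_sm.diff
  rw [e]
  simp (disch := fun_prop) only [gdX_sub, gdX_mul, gdX_const, gdX_E]
  rw [← gsymm hf p]
  simp only [gdS, gE]; ring

lemma gbdd (θ₀ : ℝ) {f : ℝ × ℝ → ℝ} (hf : GSm f) :
    ∃ B, ∀ y, GCone θ₀ (0, y) → f (0, y) ≤ B := by
  obtain ⟨q, -, hmax⟩ := (gcone_compact θ₀ 0 0).exists_isMaxOn
    ⟨(0, θ₀), by simp [GCone], le_refl _, le_refl _⟩ hf.continuous.continuousOn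
  exact ⟨f q, fun y hy => hmax ⟨hy, le_refl _, le_refl _⟩⟩

set_option linter.unusedSimpArgs false in
set_option maxHeartbeats 4000000 in
lemma gsystem (θ₀ : ℝ) {a b c d : ℝ × ℝ → ℝ} (ha : GSm a) (hb : GSm b) (hc : GSm c) (hd : GSm d)
    (h1 : ∀ p, gdS 1 a p = d p * b p - (1 / 2) * (a p - c p))
    (h2 : ∀ p, gdS 1 b p = (-1) * (d p * a p) - (1 / 2) * (b p - d p))
    (h3 : ∀ p, gdS (-1) c p = b p * d p + (1 / 2) * (a p - c p))
    (h4 : ∀ p, gdS (-1) d p = (-1) * (b p * c p) + (1 / 2) * (b p - d p)) :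
    ∃ L : ℝ, Tendsto (fun s => ((a (s, θ₀) * a (s, θ₀) + b (s, θ₀) * b (s, θ₀))
      + (c (s, θ₀) * c (s, θ₀) + d (s, θ₀) * d (s, θ₀))) / 2
      - ((a (s, θ₀) - c (s, θ₀)) * (a (s, θ₀) - c (s, θ₀))
        + (b (s, θ₀) - d (s, θ₀)) * (b (s, θ₀) - d (s, θ₀))) / 4) atTop (nhds L) := by
  have da := ha.diff
  have db := hb.diff
  have dc := hc.diff
  have dd := hd.diff
  have dE := gE_sm.diff
  have dxa := ha.dX.diff
  have dxb := hb.dX.diff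
  have dxc := hc.dX.diff
  have dxd := hd.dX.diff
  have sE := gE_sm
  have sxa := ha.dX
  have sxb := hb.dX
  have sxc := hc.dX
  have sxd := hd.dX
  set f : ℝ × ℝ → ℝ := fun p => a p * a p + b p * b p with hf
  set g : ℝ × ℝ → ℝ := fun p => c p * c p + d p * d p with hg
  set W : ℝ × ℝ → ℝ := fun p => (a p - c p) * (a p - c p) + (b p - d p) * (b p - d p) with hW
  have sf : GSm f := by unfold GSm at *; fun_prop
  have sg : GSm g := by unfold GSm at *; fun_prop
  have sW : GSm W := by unfold GSm at *; fun_prop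
  have f0 : ∀ p, 0 ≤ f p := fun p => by simp only [hf]; nlinarith [sq_nonneg (a p), sq_nonneg (b p)]
  have g0 : ∀ p, 0 ≤ g p := fun p => by simp only [hg]; nlinarith [sq_nonneg (c p), sq_nonneg (d p)]
  have W0 : ∀ p, 0 ≤ W p := fun p => by
    simp only [hW]; nlinarith [sq_nonneg (a p - c p), sq_nonneg (b p - d p)]
  have hdf : ∀ p, gdS 1 f p = (g p - f p) / 2 - W p / 2 := by
    intro p
    simp (disch := fun_prop) only [hf, hg, hW, gdS_add, gdS_mul, h1, h2]
    ring
  have hdg : ∀ p, gdS (-1) g p = (f p - g p) / 2 - W p / 2 := by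
    intro p
    simp (disch := fun_prop) only [hf, hg, hW, gdS_add, gdS_mul, h3, h4]
    ring
  -- first derivative bound
  obtain ⟨B, hB⟩ : ∃ B, 0 ≤ B ∧ ∀ p, GCone θ₀ p → 0 ≤ p.1 → f p ≤ B ∧ g p ≤ B := by
    obtain ⟨B1, hB1⟩ := gbdd θ₀ sf
    obtain ⟨B2, hB2⟩ := gbdd θ₀ sg
    refine ⟨max (max B1 B2) 0, le_max_right _ _, ?_⟩
    refine gmax (l := 1 / 2) (C := 0) (by norm_num) (le_max_right _ _) sf sg ?_ ?_ ?_ ?_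
    · intro p _ _
      have := le_max_left (g p) 0
      have := W0 p
      rw [hdf]; linarith
    · intro p _ _
      have := le_max_left (f p) 0
      have := W0 p
      rw [hdg]; linarith
    · intro y hy; exact (hB1 y hy).trans ((le_max_left _ _).trans (le_max_left _ _))
    · intro y hy; exact (hB2 y hy).trans ((le_max_right _ _).trans (le_max_left _ _))
  obtain ⟨hB0, hB⟩ := hB
  -- flipped derivatives
  have h1' : ∀ p, gdS (-1) a p = d p * b p - (1 / 2) * (a p - c p) + 2 * gE p * gdX a p := by
    intro p; rw [gdS_flip, neg_neg, h1]; ring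
  have h2' : ∀ p, gdS (-1) b p
      = (-1) * (d p * a p) - (1 / 2) * (b p - d p) + 2 * gE p * gdX b p := by
    intro p; rw [gdS_flip, neg_neg, h2]; ring
  have h3' : ∀ p, gdS 1 c p = b p * d p + (1 / 2) * (a p - c p) - 2 * gE p * gdX c p := by
    intro p; rw [gdS_flip, h3]; ring
  have h4' : ∀ p, gdS 1 d p
      = (-1) * (b p * c p) + (1 / 2) * (b p - d p) - 2 * gE p * gdX d p := by
    intro p; rw [gdS_flip, h4]; ring
  -- differentiated equations
  have x1 : ∀ p, gdS 1 (gdX a) p = d p * gdX b p + b p * gdX d p - (1 / 2) * (gdX a p - gdX c p) := by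
    intro p
    rw [gdS_comm ha, funext h1]
    simp (disch := fun_prop) only [gdX_add, gdX_sub, gdX_mul, gdX_const]
    ring
  have x2 : ∀ p, gdS 1 (gdX b) p
      = -(d p * gdX a p + a p * gdX d p) - (1 / 2) * (gdX b p - gdX d p) := by
    intro p
    rw [gdS_comm hb, funext h2]
    simp (disch := fun_prop) only [gdX_add, gdX_sub, gdX_mul, gdX_const]
    ring
  have x3 : ∀ p, gdS (-1) (gdX c) p
      = d p * gdX b p + b p * gdX d p + (1 / 2) * (gdX a p - gdX c p) := by
    intro p
    rw [gdS_comm hc, funext h3]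
    simp (disch := fun_prop) only [gdX_add, gdX_sub, gdX_mul, gdX_const]
    ring
  have x4 : ∀ p, gdS (-1) (gdX d) p
      = -(b p * gdX c p + c p * gdX b p) + (1 / 2) * (gdX b p - gdX d p) := by
    intro p
    rw [gdS_comm hd, funext h4]
    simp (disch := fun_prop) only [gdX_add, gdX_sub, gdX_mul, gdX_const]
    ring
  -- covariant second derivatives
  set y1 : ℝ × ℝ → ℝ := fun p => gE p * gdX a p - (1 / 2) * (b p - d p) * b p with hy1
  set y2 : ℝ × ℝ → ℝ := fun p => gE p * gdX b p + (1 / 2) * (b p - d p) * a p with hy2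
  set y3 : ℝ × ℝ → ℝ := fun p => gE p * gdX c p - (1 / 2) * (b p - d p) * d p with hy3
  set y4 : ℝ × ℝ → ℝ := fun p => gE p * gdX d p + (1 / 2) * (b p - d p) * c p with hy4
  set Zp : ℝ × ℝ → ℝ := fun p => y1 p * y1 p + y2 p * y2 p with hZp
  set Zm : ℝ × ℝ → ℝ := fun p => y3 p * y3 p + y4 p * y4 p with hZm
  have sy1 : GSm y1 := by unfold GSm at *; fun_prop
  have sy2 : GSm y2 := by unfold GSm at *; fun_prop
  have sy3 : GSm y3 := by unfold GSm at *; fun_prop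
  have sy4 : GSm y4 := by unfold GSm at *; fun_prop
  have sZp : GSm Zp := by unfold GSm at *; fun_prop
  have sZm : GSm Zm := by unfold GSm at *; fun_prop
  have dy1 := sy1.diff
  have dy2 := sy2.diff
  have dy3 := sy3.diff
  have dy4 := sy4.diff
  have w1 : ∀ p, gdS 1 y1 p = d p * y2 p - (3 / 2) * y1 p + (1 / 2) * y3 p
      - (1 / 2) * (b p * c p - a p * d p) * b p := by
    intro p
    simp (disch := fun_prop) only [hy1, hy2, hy3, gdS_add, gdS_sub, gdS_mul, gdS_const, gdS_E,
      x1, x2, h1, h2, h3', h4']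
    ring
  have w2 : ∀ p, gdS 1 y2 p = -(d p * y1 p) - (3 / 2) * y2 p + (1 / 2) * y4 p
      + (1 / 2) * (b p * c p - a p * d p) * a p := by
    intro p
    simp (disch := fun_prop) only [hy1, hy2, hy4, gdS_add, gdS_sub, gdS_mul, gdS_const, gdS_E,
      x1, x2, h1, h2, h3', h4']
    ring
  have w3 : ∀ p, gdS (-1) y3 p = b p * y4 p - (3 / 2) * y3 p + (1 / 2) * y1 p
      - (1 / 2) * (b p * c p - a p * d p) * d p := by
    intro p
    simp (disch := fun_prop) only [hy1, hy3, hy4, gdS_add, gdS_sub, gdS_mul, gdS_const, gdS_E,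
      x3, x4, h1', h2', h3, h4]
    ring
  have w4 : ∀ p, gdS (-1) y4 p = -(b p * y3 p) - (3 / 2) * y4 p + (1 / 2) * y2 p
      + (1 / 2) * (b p * c p - a p * d p) * c p := by
    intro p
    simp (disch := fun_prop) only [hy2, hy3, hy4, gdS_add, gdS_sub, gdS_mul, gdS_const, gdS_E,
      x3, x4, h1', h2', h3, h4]
    ring
  have hcs : ∀ p, (b p * c p - a p * d p) ^ 2 ≤ f p * g p := by
    intro p
    simp only [hf, hg]
    nlinarith [sq_nonneg (a p * c p + b p * d p)]
  -- second derivative bound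
  set C := B * B * B with hC
  have hC0 : 0 ≤ C := by positivity
  have hR : ∀ p, GCone θ₀ p → 0 ≤ p.1 → (b p * c p - a p * d p) ^ 2 * f p ≤ C ∧
      (b p * c p - a p * d p) ^ 2 * g p ≤ C := by
    intro p hp hp0
    obtain ⟨u1, u2⟩ := hB p hp hp0
    have u3 : f p * g p ≤ B * B := mul_le_mul u1 u2 (g0 p) hB0
    have u4 := (hcs p).trans u3
    exact ⟨mul_le_mul u4 u1 (f0 p) (by positivity), mul_le_mul u4 u2 (g0 p) (by positivity)⟩
  obtain ⟨D, hD⟩ : ∃ D, ∀ p, GCone θ₀ p → 0 ≤ p.1 → Zp p ≤ D ∧ Zm p ≤ D := by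
    obtain ⟨B1, hB1⟩ := gbdd θ₀ sZp
    obtain ⟨B2, hB2⟩ := gbdd θ₀ sZm
    refine ⟨max (max B1 B2) C, ?_⟩
    refine gmax (l := 3 / 2) (C := C) (by norm_num) (le_max_right _ _) sZp sZm ?_ ?_ ?_ ?_
    · intro p hp hp0
      have m1 := le_max_left (Zm p) C
      have m2 := le_max_right (Zm p) C
      have m3 := (hR p hp hp0).1
      have e : gdS 1 Zp p = 2 * (y1 p * gdS 1 y1 p + y2 p * gdS 1 y2 p) := by
        simp (disch := fun_prop) only [hZp, gdS_add, gdS_mul]; ring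
      rw [e, w1, w2]
      set ω := b p * c p - a p * d p
      have q1 := sq_nonneg (y1 p - y3 p)
      have q2 := sq_nonneg (y2 p - y4 p)
      have q3 := sq_nonneg (2 * y1 p + ω * b p)
      have q4 := sq_nonneg (2 * y2 p - ω * a p)
      have key : 2 * (y1 p * (d p * y2 p - 3 / 2 * y1 p + 1 / 2 * y3 p - 1 / 2 * ω * b p)
          + y2 p * (-(d p * y1 p) - 3 / 2 * y2 p + 1 / 2 * y4 p + 1 / 2 * ω * a p))
          ≤ 1 / 2 * Zm p - 3 / 2 * Zp p + 1 / 4 * (ω ^ 2 * f p) := by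
        simp only [hZp, hZm, hf]; linarith
      linarith
    · intro p hp hp0
      have m1 := le_max_left (Zp p) C
      have m2 := le_max_right (Zp p) C
      have m3 := (hR p hp hp0).2
      have e : gdS (-1) Zm p = 2 * (y3 p * gdS (-1) y3 p + y4 p * gdS (-1) y4 p) := by
        simp (disch := fun_prop) only [hZm, gdS_add, gdS_mul]; ring
      rw [e, w3, w4]
      set ω := b p * c p - a p * d p
      have q1 := sq_nonneg (y1 p - y3 p)
      have q2 := sq_nonneg (y2 p - y4 p)
      have q3 := sq_nonneg (2 * y3 p + ω * d p)
      have q4 := sq_nonneg (2 * y4 p - ω * c p)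
      have key : 2 * (y3 p * (b p * y4 p - 3 / 2 * y3 p + 1 / 2 * y1 p - 1 / 2 * ω * d p)
          + y4 p * (-(b p * y3 p) - 3 / 2 * y4 p + 1 / 2 * y2 p + 1 / 2 * ω * c p))
          ≤ 1 / 2 * Zp p - 3 / 2 * Zm p + 1 / 4 * (ω ^ 2 * g p) := by
        simp only [hZp, hZm, hg]; linarith
      linarith
    · intro y hy; exact (hB1 y hy).trans ((le_max_left _ _).trans (le_max_left _ _))
    · intro y hy; exact (hB2 y hy).trans ((le_max_right _ _).trans (le_max_left _ _))
  have hD0 : 0 ≤ D := by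
    have := (hD (0, θ₀) (by simp [GCone]) (le_refl _)).1
    refine le_trans ?_ this
    simp only [hZp]
    nlinarith [sq_nonneg (y1 (0, θ₀)), sq_nonneg (y2 (0, θ₀))]
  refine gmain (K := 10 * B + 2 * D + 1) sf sg sW (by linarith) hdf hdg f0 W0 ?_ ?_
  · intro p hp hp0
    have e : gdS 1 W p - gdS 1 g p = (g p - f p) / 2 - 3 / 2 * W p
        + 4 * (a p * y3 p + b p * y4 p) := by
      simp (disch := fun_prop) only [hf, hg, hW, hy3, hy4, gdS_add, gdS_sub, gdS_mul, h1, h2, h3', h4']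
      ring
    have q : 4 * (a p * y3 p + b p * y4 p) ≤ 2 * f p + 2 * Zm p := by
      simp only [hf, hZm]
      nlinarith [sq_nonneg (a p - y3 p), sq_nonneg (b p - y4 p)]
    have := hB p hp hp0
    have := hD p hp hp0
    have := W0 p
    have := f0 p
    rw [e]; linarith
  · intro p hp hp0
    have e : gdS (-1) W p - gdS (-1) f p = (f p - g p) / 2 - 3 / 2 * W p
        - 4 * (c p * y1 p + d p * y2 p) := by
      simp (disch := fun_prop) only [hf, hg, hW, hy1, hy2, gdS_add, gdS_sub, gdS_mul, h1', h2', h3, h4]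
      ring
    have q : -(4 * (c p * y1 p + d p * y2 p)) ≤ 2 * g p + 2 * Zp p := by
      simp only [hg, hZp]
      nlinarith [sq_nonneg (c p + y1 p), sq_nonneg (d p + y2 p)]
    have := hB p hp hp0
    have := hD p hp hp0
    have := W0 p
    have := g0 p
    rw [e]; linarith

lemma gdT_exp {f : ℝ × ℝ → ℝ} {p : ℝ × ℝ} (hf : DifferentiableAt ℝ f p) :
    gdT (fun p => Real.exp (f p)) p = Real.exp (f p) * gdT f p := by
  simp only [gdT, fderiv_exp hf, smul_apply, smul_eq_mul]
lemma gdX_exp {f : ℝ × ℝ → ℝ} {p : ℝ × ℝ} (hf : DifferentiableAt ℝ f p) :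
    gdX (fun p => Real.exp (f p)) p = Real.exp (f p) * gdX f p := by
  simp only [gdX, fderiv_exp hf, smul_apply, smul_eq_mul]
lemma gdS_exp {σ : ℝ} {f : ℝ × ℝ → ℝ} {p : ℝ × ℝ} (hf : DifferentiableAt ℝ f p) :
    gdS σ (fun p => Real.exp (f p)) p = Real.exp (f p) * gdS σ f p := by
  simp only [gdS, gdX_exp hf, gdT_exp hf]; ring

set_option linter.unusedSimpArgs false in
set_option maxHeartbeats 4000000 in
lemma gwave (θ₀ : ℝ) {u v : ℝ × ℝ → ℝ} (hu : GSm u) (hv : GSm v)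
    (hu2 : ∀ p, gdT (gdT u) p = gE p * gE p * gdX (gdX u) p
      + Real.exp (u p) * Real.exp (u p) * (gdT v p ^ 2 - gE p * gE p * gdX v p ^ 2))
    (hv2 : ∀ p, gdT (gdT v) p = gE p * gE p * gdX (gdX v) p
      - 2 * (gdT u p * gdT v p - gE p * gE p * gdX u p * gdX v p)) :
    ∃ L : ℝ, Tendsto (fun s => gdT u (s, θ₀) ^ 2
      + Real.exp (u (s, θ₀)) * Real.exp (u (s, θ₀)) * gdT v (s, θ₀) ^ 2) atTop (nhds L) := by
  have du := hu.diff
  have dE := gE_sm.diff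
  have dut := hu.dT.diff
  have dux := hu.dX.diff
  have dvt := hv.dT.diff
  have dvx := hv.dX.diff
  have sut := hu.dT
  have sux := hu.dX
  have svt := hv.dT
  have svx := hv.dX
  have sE := gE_sm
  have t1 : ∀ σ p, gdS σ (gdT u) p = gdT (gdT u) p - σ * gE p * gdT (gdX u) p := by
    intro σ p; rw [gsymm hu]; rfl
  have t2 : ∀ σ p, gdS σ (gdX u) p = gdT (gdX u) p - σ * gE p * gdX (gdX u) p := fun σ p => rfl
  have t3 : ∀ σ p, gdS σ (gdT v) p = gdT (gdT v) p - σ * gE p * gdT (gdX v) p := by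
    intro σ p; rw [gsymm hv]; rfl
  have t4 : ∀ σ p, gdS σ (gdX v) p = gdT (gdX v) p - σ * gE p * gdX (gdX v) p := fun σ p => rfl
  have t5 : ∀ σ p, gdS σ u p = gdT u p - σ * gE p * gdX u p := fun σ p => rfl
  obtain ⟨L, hL⟩ := gsystem θ₀
    (a := fun p => gdT u p + gE p * gdX u p)
    (b := fun p => Real.exp (u p) * (gdT v p + gE p * gdX v p))
    (c := fun p => gdT u p - gE p * gdX u p)
    (d := fun p => Real.exp (u p) * (gdT v p - gE p * gdX v p))
    (by unfold GSm at *; fun_prop) (by unfold GSm at *; fun_prop)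
    (by unfold GSm at *; fun_prop) (by unfold GSm at *; fun_prop)
    (by
      intro p
      simp (disch := fun_prop) only [gdS_add, gdS_sub, gdS_mul, gdS_E, gdS_exp, t1, t2, t3, t4, t5,
        hu2, hv2]
      ring)
    (by
      intro p
      simp (disch := fun_prop) only [gdS_add, gdS_sub, gdS_mul, gdS_E, gdS_exp, t1, t2, t3, t4, t5,
        hu2, hv2]
      ring)
    (by
      intro p
      simp (disch := fun_prop) only [gdS_add, gdS_sub, gdS_mul, gdS_E, gdS_exp, t1, t2, t3, t4, t5,
        hu2, hv2]
      ring)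
    (by
      intro p
      simp (disch := fun_prop) only [gdS_add, gdS_sub, gdS_mul, gdS_E, gdS_exp, t1, t2, t3, t4, t5,
        hu2, hv2]
      ring)
  refine ⟨L, hL.congr ?_⟩
  intro s
  ring

end GowdyHelpers

/-- Existence of Ringström's asymptotic velocity for T³ Gowdy solutions: for every `θ`
the limit `V(θ) = lim_{τ→∞} [(∂τP)² + e^{2P}(∂τQ)²]^{1/2}` exists and is a
well-defined nonnegative real number. -/
theorem gowdy_asymptotic_velocity_exists
    (P Q : ℝ → ℝ → ℝ)
    (hPsmooth : ContDiff ℝ (⊤ : ℕ∞) (fun p : ℝ × ℝ => P p.1 p.2))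
    (hQsmooth : ContDiff ℝ (⊤ : ℕ∞) (fun p : ℝ × ℝ => Q p.1 p.2))
    (hPper : ∀ τ θ : ℝ, P τ (θ + 2 * π) = P τ θ)
    (hQper : ∀ τ θ : ℝ, Q τ (θ + 2 * π) = Q τ θ)
    (hPwave : ∀ τ θ : ℝ, deriv (fun s => deriv (fun s' => P s' θ) s) τ
      = Real.exp (-2 * τ) * deriv (deriv (P τ)) θ
        + Real.exp (2 * P τ θ) * ((deriv (fun s => Q s θ) τ) ^ 2
          - Real.exp (-2 * τ) * (deriv (Q τ) θ) ^ 2))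
    (hQwave : ∀ τ θ : ℝ, deriv (fun s => deriv (fun s' => Q s' θ) s) τ
      = Real.exp (-2 * τ) * deriv (deriv (Q τ)) θ
        - 2 * (deriv (fun s => P s θ) τ * deriv (fun s => Q s θ) τ
          - Real.exp (-2 * τ) * deriv (P τ) θ * deriv (Q τ) θ)) :
    ∀ θ : ℝ, ∃ V : ℝ, 0 ≤ V ∧
      Tendsto (fun τ => Real.sqrt ((deriv (fun s => P s θ) τ) ^ 2
        + Real.exp (2 * P τ θ) * (deriv (fun s => Q s θ) τ) ^ 2)) atTop (nhds V) := by
  intro θ₀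
  set u : ℝ × ℝ → ℝ := fun p => P p.1 p.2 with hu
  set v : ℝ × ℝ → ℝ := fun p => Q p.1 p.2 with hv
  have su : GSm u := hPsmooth
  have sv : GSm v := hQsmooth
  have e1 : ∀ τ θ, deriv (fun s => P s θ) τ = gdT u (τ, θ) := fun τ θ => (gsliceT su τ θ).deriv
  have e2 : ∀ τ θ, deriv (fun s => Q s θ) τ = gdT v (τ, θ) := fun τ θ => (gsliceT sv τ θ).deriv
  have e3 : ∀ τ θ, deriv (P τ) θ = gdX u (τ, θ) := fun τ θ => (gsliceX su τ θ).deriv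
  have e4 : ∀ τ θ, deriv (Q τ) θ = gdX v (τ, θ) := fun τ θ => (gsliceX sv τ θ).deriv
  have e5 : ∀ τ θ, deriv (fun s => deriv (fun s' => P s' θ) s) τ = gdT (gdT u) (τ, θ) := by
    intro τ θ; simp only [e1]; exact (gsliceT su.dT τ θ).deriv
  have e6 : ∀ τ θ, deriv (fun s => deriv (fun s' => Q s' θ) s) τ = gdT (gdT v) (τ, θ) := by
    intro τ θ; simp only [e2]; exact (gsliceT sv.dT τ θ).deriv
  have e7 : ∀ τ θ, deriv (deriv (P τ)) θ = gdX (gdX u) (τ, θ) := by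
    intro τ θ; rw [funext (e3 τ)]; exact (gsliceX su.dX τ θ).deriv
  have e8 : ∀ τ θ, deriv (deriv (Q τ)) θ = gdX (gdX v) (τ, θ) := by
    intro τ θ; rw [funext (e4 τ)]; exact (gsliceX sv.dX τ θ).deriv
  have eE : ∀ τ θ : ℝ, Real.exp (-2 * τ) = gE (τ, θ) * gE (τ, θ) := by
    intro τ θ; simp only [gE]; rw [← Real.exp_add]; ring_nf
  have eP : ∀ τ θ : ℝ, Real.exp (2 * P τ θ) = Real.exp (u (τ, θ)) * Real.exp (u (τ, θ)) := by
    intro τ θ; rw [← Real.exp_add]; simp only [hu]; ring_nf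
  obtain ⟨L, hL⟩ := gwave θ₀ su sv
    (by
      rintro ⟨τ, θ⟩
      have := hPwave τ θ
      rw [e5, e7, e2, e4, eE τ θ, eP] at this
      exact this)
    (by
      rintro ⟨τ, θ⟩
      have := hQwave τ θ
      rw [e6, e8, e1, e2, e3, e4, eE τ θ] at this
      exact this)
  refine ⟨Real.sqrt L, Real.sqrt_nonneg _, ?_⟩
  refine (hL.sqrt).congr ?_
  intro τ
  rw [e1, e2, eP]
end

section
/- Let n ≥ 1, T > 0, ε > 0, and let M be a real n×n matrix for which there exists λ > 0 with xᵀMx ≥ λ|x|² for all x ∈ ℝⁿ. Let F : [0,T] × ℝⁿ → ℝⁿ be continuous, bounded, and Lipschitz in its second argument uniformly in the first. Then there exists exactly one continuous function Φ : (0,T] → ℝⁿ which is differentiable on (0,T], satisfies the singular (Fuchsian) system t Φ'(t) + M Φ(t) = t^ε F(t, Φ(t)) for all t ∈ (0,T], and satisfies Φ(t) → 0 as t → 0⁺. -/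
open Filter Matrix

namespace FuchsAux
open MeasureTheory Set Topology

variable {E : Type*} [NormedAddCommGroup E] [InnerProductSpace ℝ E] [CompleteSpace E]

/-- The flow `exp(rA)`. -/
noncomputable def fl (A : E →L[ℝ] E) (r : ℝ) : E →L[ℝ] E := NormedSpace.exp (r • A)

lemma fl_deriv (A : E →L[ℝ] E) (r : ℝ) : HasDerivAt (fl A) (A * fl A r) r :=
  hasDerivAt_exp_smul_const' A r

lemma fl_cont (A : E →L[ℝ] E) : Continuous (fl A) :=
  continuous_iff_continuousAt.2 fun r => (fl_deriv A r).continuousAt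

lemma fl_add (A : E →L[ℝ] E) (r s : ℝ) : fl A (r + s) = fl A r * fl A s := by
  letI : NormedAlgebra ℚ (E →L[ℝ] E) := NormedAlgebra.restrictScalars ℚ ℝ _
  unfold fl
  rw [add_smul]
  exact NormedSpace.exp_add_of_commute (((Commute.refl A).smul_left r).smul_right s)

lemma fl_zero (A : E →L[ℝ] E) : fl A 0 = 1 := by
  simp [fl]

lemma fl_bound (A : E →L[ℝ] E) (hA : ∀ x, 0 ≤ inner ℝ x (A x)) (r : ℝ) (hr : r ≤ 0) (x : E) :
    ‖fl A r x‖ ≤ ‖x‖ := by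
  have hd : ∀ r, HasDerivAt (fun r => ‖fl A r x‖ ^ 2) (2 * inner ℝ (fl A r x) (A (fl A r x))) r := by
    intro r
    have := (fl_deriv A r).clm_apply (hasDerivAt_const r x)
    simp only [map_zero, add_zero] at this
    exact this.norm_sq
  have hm := monotone_of_hasDerivAt_nonneg hd (fun r => by
    have := hA (fl A r x); simp only [Pi.zero_apply]; positivity)
  have := hm hr
  simp only [fl_zero, ContinuousLinearMap.one_apply] at this
  exact (sq_le_sq₀ (norm_nonneg _) (norm_nonneg _)).1 this

/-- The weight. -/
noncomputable def W (K ε r : ℝ) : ℝ := Real.exp (K * Real.exp (ε * r) / ε)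

lemma W_pos (K ε r : ℝ) : 0 < W K ε r := Real.exp_pos _

lemma W_deriv (K ε r : ℝ) (hε : 0 < ε) :
    HasDerivAt (W K ε) (K * (Real.exp (ε * r) * W K ε r)) r := by
  have h1 : HasDerivAt (fun r => Real.exp (ε * r)) (Real.exp (ε * r) * ε) r := by
    have := ((hasDerivAt_id r).const_mul ε).exp
    simpa using this
  have := ((h1.const_mul K).div_const ε).exp
  have e : K * (Real.exp (ε * r) * W K ε r) =
      Real.exp (K * Real.exp (ε * r) / ε) * (K * (Real.exp (ε * r) * ε) / ε) := by
    unfold W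
    field_simp
  rw [e]
  exact this

lemma W_cont (K ε : ℝ) : Continuous (W K ε) := by
  unfold W; fun_prop

lemma one_le_W (K ε r : ℝ) (hε : 0 < ε) (hK : 0 < K) : 1 ≤ W K ε r := by
  unfold W; exact Real.one_le_exp (by positivity)

lemma exp_tendsto (ε : ℝ) (hε : 0 < ε) : Tendsto (fun r => Real.exp (ε * r)) atBot (𝓝 0) :=
  Real.tendsto_exp_atBot.comp (tendsto_id.const_mul_atBot hε)

lemma W_tendsto (K ε : ℝ) (hε : 0 < ε) : Tendsto (W K ε) atBot (𝓝 1) := by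
  have := (((exp_tendsto ε hε).const_mul K).div_const ε).rexp
  simp only [mul_zero, zero_div, Real.exp_zero] at this
  exact this

lemma W_int (K ε s : ℝ) (hε : 0 < ε) (hK : 0 < K) :
    IntegrableOn (fun r => Real.exp (ε * r) * W K ε r) (Iic s) := by
  have h1 : IntegrableOn (fun r => Real.exp (ε * r)) (Iic s) := integrableOn_exp_mul_Iic hε s
  refine (h1.mul_const (W K ε s)).mono' ?_ ?_
  · exact ((by fun_prop : Continuous fun r => Real.exp (ε * r)).mul
      (W_cont K ε)).aestronglyMeasurable
  · refine (ae_restrict_iff' measurableSet_Iic).2 (ae_of_all _ fun r (hr : r ≤ s) => ?_)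
    rw [Real.norm_of_nonneg (mul_nonneg (Real.exp_pos _).le (W_pos _ _ _).le)]
    have : W K ε r ≤ W K ε s := by unfold W; gcongr
    gcongr

lemma W_integral (K ε s : ℝ) (hε : 0 < ε) (hK : 0 < K) :
    ∫ r in Iic s, Real.exp (ε * r) * W K ε r = (W K ε s - 1) / K := by
  have := integral_Iic_of_hasDerivAt_of_tendsto' (a := s) (fun x _ => W_deriv K ε x hε)
    ((W_int K ε s hε hK).const_mul K) (W_tendsto K ε hε)
  rw [integral_const_mul] at this
  field_simp
  linarith

/-- Solution operator of the linear problem. -/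
noncomputable def sol (A : E →L[ℝ] E) (g : ℝ → E) (s : ℝ) : E :=
  fl A (-s) (∫ r in Iic s, fl A r (g r))

lemma sol_int (A : E →L[ℝ] E) (hA : ∀ x, 0 ≤ inner ℝ x (A x)) (K ε : ℝ) (hε : 0 < ε) (hK : 0 < K)
  (g : ℝ → E) (hg : Continuous g) (c : ℝ)
  (hc : ∀ r, ‖g r‖ ≤ c * (Real.exp (ε * r) * W K ε r)) (s : ℝ) :
    IntegrableOn (fun r => fl A r (g r)) (Iic s) := by
  refine (((W_int K ε s hε hK).const_mul c).const_mul ‖fl A s‖).mono' ?_ ?_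
  · exact ((fl_cont A).clm_apply hg).aestronglyMeasurable
  · refine (ae_restrict_iff' measurableSet_Iic).2 (ae_of_all _ fun r (hr : r ≤ s) => ?_)
    have h : fl A r = fl A s * fl A (r - s) := by rw [← fl_add]; congr 1; ring
    rw [h]
    calc ‖fl A s (fl A (r - s) (g r))‖ ≤ ‖fl A s‖ * ‖fl A (r - s) (g r)‖ :=
          ContinuousLinearMap.le_opNorm _ _
      _ ≤ _ := by
        gcongr
        exact (fl_bound A hA _ (by linarith) _).trans (hc r)

lemma sol_bound (A : E →L[ℝ] E) (hA : ∀ x, 0 ≤ inner ℝ x (A x)) (K ε : ℝ) (hε : 0 < ε) (hK : 0 < K)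
  (g : ℝ → E) (hg : Continuous g) (c : ℝ)
  (hc : ∀ r, ‖g r‖ ≤ c * (Real.exp (ε * r) * W K ε r)) (s : ℝ) :
    ‖sol A g s‖ ≤ c * ((W K ε s - 1) / K) := by
  unfold sol
  rw [← ContinuousLinearMap.integral_comp_comm _ (sol_int A hA K ε hε hK g hg c hc s),
    ← W_integral K ε s hε hK, ← integral_const_mul]
  refine norm_integral_le_of_norm_le ((W_int K ε s hε hK).const_mul c) ?_
  refine (ae_restrict_iff' measurableSet_Iic).2 (ae_of_all _ fun r (hr : r ≤ s) => ?_)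
  have h : fl A (-s) (fl A r (g r)) = fl A (r - s) (g r) := by
    rw [← ContinuousLinearMap.mul_apply, ← fl_add]; congr 2; ring
  rw [h]
  exact (fl_bound A hA _ (by linarith) _).trans (hc r)

lemma sol_deriv (A : E →L[ℝ] E) (hA : ∀ x, 0 ≤ inner ℝ x (A x)) (K ε : ℝ) (hε : 0 < ε) (hK : 0 < K)
  (g : ℝ → E) (hg : Continuous g) (c : ℝ)
  (hc : ∀ r, ‖g r‖ ≤ c * (Real.exp (ε * r) * W K ε r)) (s : ℝ) :
    HasDerivAt (sol A g) (-A (sol A g s) + g s) s := by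
  have hi := sol_int A hA K ε hε hK g hg c hc
  have hcont : Continuous fun r => fl A r (g r) := (fl_cont A).clm_apply hg
  have h1 : HasDerivAt (fun s => ∫ r in Iic s, fl A r (g r)) (fl A s (g s)) s := by
    have e : (fun s => ∫ r in Iic s, fl A r (g r)) =
        fun s => (∫ r in Iic (0:ℝ), fl A r (g r)) + ∫ r in (0:ℝ)..s, fl A r (g r) := by
      funext s
      rw [← intervalIntegral.integral_Iic_sub_Iic (hi 0) (hi s)]; abel
    rw [e]
    exact (hcont.integral_hasStrictDerivAt 0 s).hasDerivAt.const_add _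
  have h2 : HasDerivAt (fun s => fl A (-s)) (-(A * fl A (-s))) s := by
    have := (fl_deriv A (-s)).scomp s (hasDerivAt_neg s)
    simpa [Function.comp_def] using this
  have := h2.clm_apply h1
  have h3 : fl A (-s) (fl A s (g s)) = g s := by
    rw [← ContinuousLinearMap.mul_apply, ← fl_add]; simp [fl_zero]
  rw [h3] at this
  exact this

theorem exists_log (A : E →L[ℝ] E) (hA : ∀ x, 0 ≤ inner ℝ x (A x)) (ε : ℝ) (hε : 0 < ε)
    (G : ℝ → E → E) (hG : Continuous fun p : ℝ × E => G p.1 p.2)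
    (B : ℝ) (hB : ∀ s x, ‖G s x‖ ≤ B) (L : NNReal) (hL : ∀ s, LipschitzWith L (G s)) :
    ∃ φ : ℝ → E, (∀ s, HasDerivAt φ (-A (φ s) + Real.exp (ε * s) • G s (φ s)) s) ∧
      Tendsto φ atBot (𝓝 0) := by
  have hB0 : 0 ≤ B := (norm_nonneg _).trans (hB 0 0)
  set K : ℝ := 2 * (L + 1) with hKdef
  have hK : 0 < K := by positivity
  let g : BoundedContinuousFunction ℝ E → ℝ → E := fun u r =>
    Real.exp (ε * r) • G r (W K ε r • u r)
  have hgc : ∀ u, Continuous (g u) := fun u =>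
    (by fun_prop : Continuous fun r => Real.exp (ε * r)).smul
      (hG.comp (continuous_id.prodMk ((W_cont K ε).smul u.continuous)))
  have hgb : ∀ u r, ‖g u r‖ ≤ B * (Real.exp (ε * r) * W K ε r) := by
    intro u r
    simp only [g, norm_smul, Real.norm_eq_abs, Real.abs_exp]
    have h1 := one_le_W K ε r hε hK
    have h2 := hB r (W K ε r • u r)
    have h3 := Real.exp_pos (ε * r)
    calc _ ≤ Real.exp (ε * r) * (B * 1) := by rw [mul_one]; gcongr
      _ ≤ Real.exp (ε * r) * (B * W K ε r) := by gcongr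
      _ = _ := by ring
  have hsd := fun u => sol_deriv A hA K ε hε hK (g u) (hgc u) B (hgb u)
  have hsb := fun u => sol_bound A hA K ε hε hK (g u) (hgc u) B (hgb u)
  have hsc : ∀ u, Continuous (sol A (g u)) := fun u =>
    continuous_iff_continuousAt.2 fun r => (hsd u r).continuousAt
  -- weighting a bound
  have hw : ∀ (c : ℝ) (y : E) (s : ℝ), 0 ≤ c → ‖y‖ ≤ c * ((W K ε s - 1) / K) →
      ‖(W K ε s)⁻¹ • y‖ ≤ c / K := by
    intro c y s hc hy
    have hW := W_pos K ε s
    rw [norm_smul, norm_inv, Real.norm_of_nonneg hW.le, inv_mul_le_iff₀ hW]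
    refine hy.trans ?_
    rw [mul_div_assoc', mul_div_assoc', div_le_div_iff_of_pos_right hK]
    nlinarith
  let Tm : BoundedContinuousFunction ℝ E → BoundedContinuousFunction ℝ E := fun u =>
    BoundedContinuousFunction.ofNormedAddCommGroup (fun s => (W K ε s)⁻¹ • sol A (g u) s)
      (((W_cont K ε).inv₀ fun s => (W_pos K ε s).ne').smul (hsc u)) (B / K)
      (fun s => hw B _ s hB0 (hsb u s))
  have hTm : ∀ u s, Tm u s = (W K ε s)⁻¹ • sol A (g u) s := fun u s => rfl
  have hcontr : ContractingWith (1 / 2) Tm := by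
    refine ⟨by norm_num, LipschitzWith.of_dist_le_mul fun u v => ?_⟩
    rw [BoundedContinuousFunction.dist_le (by positivity)]
    intro s
    have hd : ∀ r, ‖(g u - g v) r‖ ≤ (L * dist u v) * (Real.exp (ε * r) * W K ε r) := by
      intro r
      simp only [g, Pi.sub_apply, ← smul_sub, norm_smul, Real.norm_eq_abs, Real.abs_exp]
      have h1 := (hL r).dist_le_mul (W K ε r • u r) (W K ε r • v r)
      rw [dist_smul₀, Real.norm_of_nonneg (W_pos K ε r).le, dist_eq_norm] at h1
      have h2 := BoundedContinuousFunction.dist_coe_le_dist (f := u) (g := v) r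
      have hW := W_pos K ε r
      calc _ ≤ Real.exp (ε * r) * (L * (W K ε r * dist u v)) := by
            refine mul_le_mul_of_nonneg_left (h1.trans ?_) (Real.exp_pos _).le
            gcongr
        _ = _ := by ring
    have hb := sol_bound A hA K ε hε hK (g u - g v) ((hgc u).sub (hgc v)) _ hd s
    have he : sol A (g u - g v) s = sol A (g u) s - sol A (g v) s := by
      unfold sol
      rw [← map_sub, ← integral_sub
        (sol_int A hA K ε hε hK (g u) (hgc u) B (hgb u) s)
        (sol_int A hA K ε hε hK (g v) (hgc v) B (hgb v) s)]
      simp only [Pi.sub_apply, map_sub]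
    rw [he] at hb
    have := hw _ _ s (by positivity) hb
    rw [dist_eq_norm, hTm, hTm, ← smul_sub]
    refine this.trans ?_
    rw [div_le_iff₀ hK, hKdef]
    have := dist_nonneg (x := u) (y := v)
    push_cast
    nlinarith
  obtain ⟨u, hu⟩ : ∃ u, Tm u = u := ⟨_, hcontr.fixedPoint_isFixedPt⟩
  have hus : ∀ s, W K ε s • u s = sol A (g u) s := by
    intro s
    conv_lhs => rw [← hu]
    rw [hTm, smul_inv_smul₀ (W_pos K ε s).ne']
  refine ⟨sol A (g u), fun s => ?_, ?_⟩
  · have := hsd u s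
    simp only [g] at this ⊢
    rw [← hus s]
    simpa only [g, ← hus s] using this
  · refine squeeze_zero_norm (hsb u) ?_
    have := (((W_tendsto K ε hε).sub_const 1).div_const K).const_mul B
    simpa using this

theorem unique_aux (A : E →L[ℝ] E) (hA : ∀ x, 0 ≤ inner ℝ x (A x)) (T ε : ℝ) (hε : 0 < ε)
    (G : ℝ → E → E) (L : NNReal) (hL : ∀ s ∈ Icc 0 T, LipschitzWith L (G s))
    (φ ψ φ' ψ' : ℝ → E) (hφ : ∀ t ∈ Ioc 0 T, HasDerivAt φ (φ' t) t)
    (hψ : ∀ t ∈ Ioc 0 T, HasDerivAt ψ (ψ' t) t)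
    (eφ : ∀ t ∈ Ioc 0 T, t • φ' t + A (φ t) = t ^ ε • G t (φ t))
    (eψ : ∀ t ∈ Ioc 0 T, t • ψ' t + A (ψ t) = t ^ ε • G t (ψ t))
    (lφ : Tendsto φ (𝓝[>] 0) (𝓝 0)) (lψ : Tendsto ψ (𝓝[>] 0) (𝓝 0)) :
    EqOn φ ψ (Ioc 0 T) := by
  let w := fun t => φ t - ψ t
  let q : ℝ → ℝ := fun t => Real.exp (-(2 * L / ε * t ^ ε))
  let q' : ℝ → ℝ := fun t => q t * -(2 * L / ε * (ε * t ^ (ε - 1)))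
  let h := fun t => ‖w t‖ ^ 2 * q t
  have hw : ∀ t ∈ Ioc 0 T, HasDerivAt w (φ' t - ψ' t) t := fun t ht => (hφ t ht).sub (hψ t ht)
  have hq : ∀ t ∈ Ioc 0 T, HasDerivAt q (q' t) t := fun t ht =>
    (((Real.hasDerivAt_rpow_const (p := ε) (Or.inl ht.1.ne')).const_mul (2 * L / ε)).neg).exp
  have hh : ∀ t ∈ Ioc 0 T, HasDerivAt h
      (2 * inner ℝ (w t) (φ' t - ψ' t) * q t + ‖w t‖ ^ 2 * q' t) t :=
    fun t ht => (hw t ht).norm_sq.mul (hq t ht)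
  have hneg : ∀ t ∈ Ioc 0 T,
      2 * inner ℝ (w t) (φ' t - ψ' t) * q t + ‖w t‖ ^ 2 * q' t ≤ 0 := by
    intro t ht
    have ht0 : 0 < t := ht.1
    have h1 : t • (φ' t - ψ' t) = t ^ ε • (G t (φ t) - G t (ψ t)) - A (w t) := by
      have a := eφ t ht
      have b := eψ t ht
      simp only [w, map_sub, smul_sub]
      rw [← a, ← b]; abel
    have h2 : t * inner ℝ (w t) (φ' t - ψ' t) ≤ t ^ ε * (L * ‖w t‖ ^ 2) := by
      rw [← real_inner_smul_right, h1, inner_sub_right, real_inner_smul_right]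
      have h3 : inner ℝ (w t) (G t (φ t) - G t (ψ t)) ≤ L * ‖w t‖ ^ 2 := by
        have h4 := (hL t ⟨ht.1.le, ht.2⟩).dist_le_mul (φ t) (ψ t)
        rw [dist_eq_norm, dist_eq_norm] at h4
        refine (real_inner_le_norm _ _).trans ?_
        calc _ ≤ ‖w t‖ * (L * ‖w t‖) := by gcongr
          _ = _ := by ring
      have h5 := hA (w t)
      have h6 : 0 ≤ t ^ ε := by positivity
      nlinarith [mul_le_mul_of_nonneg_left h3 h6]
    have h3 : t ^ ε = t * t ^ (ε - 1) := by
      rw [Real.rpow_sub_one ht0.ne']; field_simp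
    have h4 : inner ℝ (w t) (φ' t - ψ' t) ≤ t ^ (ε - 1) * (L * ‖w t‖ ^ 2) := by
      rw [h3, mul_assoc] at h2
      exact le_of_mul_le_mul_left h2 ht0
    have hqp : 0 < q t := Real.exp_pos _
    have h5 : q' t = q t * -(2 * L * t ^ (ε - 1)) := by
      simp only [q']; field_simp
    rw [h5]
    nlinarith [mul_le_mul_of_nonneg_left h4 hqp.le]
  have hanti : AntitoneOn h (Ioc 0 T) := by
    refine antitoneOn_of_deriv_nonpos (convex_Ioc 0 T)
      (fun t ht => (hh t ht).continuousAt.continuousWithinAt)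
      (fun t ht => (hh t (interior_subset ht)).differentiableAt.differentiableWithinAt) ?_
    intro t ht
    rw [(hh t (interior_subset ht)).deriv]
    exact hneg t (interior_subset ht)
  have hlim : Tendsto h (𝓝[>] 0) (𝓝 0) := by
    have h1 : Tendsto (fun t => ‖w t‖ ^ 2) (𝓝[>] 0) (𝓝 0) := by
      have := ((lφ.sub lψ).norm).pow 2
      simpa using this
    refine squeeze_zero' (g := fun t => ‖w t‖ ^ 2) ?_ ?_ h1
    · exact Eventually.of_forall fun t => mul_nonneg (sq_nonneg _) (Real.exp_pos _).le
    · filter_upwards [self_mem_nhdsWithin] with t ht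
      have ht : 0 < t := ht
      refine mul_le_of_le_one_right (sq_nonneg _) (Real.exp_le_one_iff.2 ?_)
      have : 0 ≤ 2 * L / ε * t ^ ε := by positivity
      linarith
  intro t ht
  have h0 : h t ≤ 0 := by
    refine ge_of_tendsto hlim ?_
    filter_upwards [Ioo_mem_nhdsGT ht.1] with r hr
    exact hanti ⟨hr.1, hr.2.le.trans ht.2⟩ ht hr.2.le
  have hqp : 0 < q t := Real.exp_pos _
  have h1 : ‖w t‖ ^ 2 ≤ 0 := by
    by_contra hcon
    push Not at hcon
    exact absurd h0 (not_le.2 (mul_pos hcon hqp))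
  have h2 : w t = 0 := by
    have : ‖w t‖ = 0 := by nlinarith [norm_nonneg (w t)]
    exact norm_eq_zero.1 this
  exact sub_eq_zero.1 h2

end FuchsAux

/-- Finite-dimensional model Fuchsian theorem: the singular system
`t Φ'(t) + M Φ(t) = t^ε F(t, Φ(t))` on `(0,T]`, with `M` positive definite and `F`
continuous, bounded, and uniformly Lipschitz in its second argument, has exactly one
solution tending to `0` as `t → 0⁺`. -/
theorem fuchsian_ode_exists_unique
    (n : ℕ) (hn : 1 ≤ n) (T ε : ℝ) (hT : 0 < T) (hε : 0 < ε)
    (M : Matrix (Fin n) (Fin n) ℝ)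
    (hM : ∃ lam : ℝ, 0 < lam ∧ ∀ x : Fin n → ℝ,
      lam * (x ⬝ᵥ x) ≤ x ⬝ᵥ M.mulVec x)
    (F : ℝ → (Fin n → ℝ) → (Fin n → ℝ))
    (hFcont : ContinuousOn (fun p : ℝ × (Fin n → ℝ) => F p.1 p.2)
      (Set.Icc 0 T ×ˢ Set.univ))
    (hFbdd : ∃ B : ℝ, ∀ t ∈ Set.Icc (0:ℝ) T, ∀ x : Fin n → ℝ, ‖F t x‖ ≤ B)
    (hFlip : ∃ L : NNReal, ∀ t ∈ Set.Icc (0:ℝ) T, LipschitzWith L (F t)) :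
    ∃ Φ : ℝ → (Fin n → ℝ),
      (ContinuousOn Φ (Set.Ioc 0 T) ∧
        (∀ t ∈ Set.Ioc (0:ℝ) T, DifferentiableAt ℝ Φ t ∧
          t • deriv Φ t + M.mulVec (Φ t) = t ^ ε • F t (Φ t)) ∧
        Tendsto Φ (nhdsWithin 0 (Set.Ioi 0)) (nhds 0)) ∧
      ∀ Ψ : ℝ → (Fin n → ℝ),
        (ContinuousOn Ψ (Set.Ioc 0 T) ∧
          (∀ t ∈ Set.Ioc (0:ℝ) T, DifferentiableAt ℝ Ψ t ∧
            t • deriv Ψ t + M.mulVec (Ψ t) = t ^ ε • F t (Ψ t)) ∧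
          Tendsto Ψ (nhdsWithin 0 (Set.Ioi 0)) (nhds 0)) →
        Set.EqOn Ψ Φ (Set.Ioc 0 T) := by
  obtain ⟨lam, hlam, hM⟩ := hM
  obtain ⟨B, hB⟩ := hFbdd
  obtain ⟨L, hL⟩ := hFlip
  let A : EuclideanSpace ℝ (Fin n) →L[ℝ] EuclideanSpace ℝ (Fin n) := Matrix.toEuclideanCLM (𝕜 := ℝ) M
  have hAof : ∀ x, (A x).ofLp = M.mulVec x.ofLp := Matrix.ofLp_toEuclideanCLM M
  have hA : ∀ x, 0 ≤ inner ℝ x (A x) := by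
    intro x
    rw [EuclideanSpace.inner_eq_star_dotProduct, hAof, star_trivial, dotProduct_comm]
    refine le_trans (mul_nonneg hlam.le ?_) (hM x.ofLp)
    exact Finset.sum_nonneg fun i _ => mul_self_nonneg _
  let e := PiLp.continuousLinearEquiv 2 ℝ (fun _ : Fin n => ℝ)
  have he : ∀ x, e x = x.ofLp := fun x => rfl
  have hes : ∀ x, e.symm x = WithLp.toLp 2 x := fun x => rfl
  let H : ℝ → EuclideanSpace ℝ (Fin n) → EuclideanSpace ℝ (Fin n) := fun t x => e.symm (F t (e x))
  obtain ⟨L', hL'⟩ : ∃ L' : NNReal, ∀ t ∈ Set.Icc (0:ℝ) T, LipschitzWith L' (H t) :=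
    ⟨_, fun t ht => (e.symm.lipschitz.comp (hL t ht)).comp e.lipschitz⟩
  have hmem : ∀ s, min (Real.exp s) T ∈ Set.Icc (0:ℝ) T := fun s =>
    ⟨le_min (Real.exp_pos _).le hT.le, min_le_right _ _⟩
  let G : ℝ → EuclideanSpace ℝ (Fin n) → EuclideanSpace ℝ (Fin n) := fun s x => H (min (Real.exp s) T) x
  have hG : Continuous fun p : ℝ × EuclideanSpace ℝ (Fin n) => G p.1 p.2 := by
    refine e.symm.continuous.comp ?_
    exact hFcont.comp_continuous
      (f := fun p : ℝ × EuclideanSpace ℝ (Fin n) => (min (Real.exp p.1) T, e p.2))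
      (by fun_prop) (fun p => ⟨hmem p.1, Set.mem_univ _⟩)
  have hGB : ∀ s x, ‖G s x‖ ≤ ‖(e.symm : (Fin n → ℝ) →L[ℝ] EuclideanSpace ℝ (Fin n))‖ * B := by
    intro s x
    refine (ContinuousLinearMap.le_opNorm
      (e.symm : (Fin n → ℝ) →L[ℝ] EuclideanSpace ℝ (Fin n)) _).trans ?_
    gcongr
    exact hB _ (hmem s) _
  obtain ⟨φ, hφ, hφ0⟩ := FuchsAux.exists_log A hA ε hε G hG _ hGB L' (fun s => hL' _ (hmem s))
  let Φ : ℝ → EuclideanSpace ℝ (Fin n) := fun t => φ (Real.log t)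
  let Φ' : ℝ → EuclideanSpace ℝ (Fin n) := fun t => t⁻¹ • (-A (Φ t) + t ^ ε • G (Real.log t) (Φ t))
  have hΦ : ∀ t ∈ Set.Ioc (0:ℝ) T, HasDerivAt Φ (Φ' t) t := by
    intro t ht
    have := (hφ (Real.log t)).scomp t (Real.hasDerivAt_log ht.1.ne')
    rw [mul_comm, ← Real.rpow_def_of_pos ht.1] at this
    exact this
  have hΦe : ∀ t ∈ Set.Ioc (0:ℝ) T, t • Φ' t + A (Φ t) = t ^ ε • H t (Φ t) := by
    intro t ht
    have hGt : G (Real.log t) (Φ t) = H t (Φ t) := by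
      simp only [G]; rw [Real.exp_log ht.1, min_eq_left ht.2]
    simp only [Φ']
    rw [smul_inv_smul₀ ht.1.ne', hGt]; abel
  have hΦ0 : Tendsto Φ (nhdsWithin 0 (Set.Ioi 0)) (nhds 0) :=
    hφ0.comp Real.tendsto_log_nhdsGT_zero
  have hd : ∀ t ∈ Set.Ioc (0:ℝ) T, HasDerivAt (fun t => e (Φ t)) (e (Φ' t)) t := fun t ht =>
    e.hasFDerivAt.comp_hasDerivAt t (hΦ t ht)
  refine ⟨fun t => e (Φ t), ⟨fun t ht => (hd t ht).continuousAt.continuousWithinAt,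
    fun t ht => ⟨(hd t ht).differentiableAt, ?_⟩, ?_⟩, ?_⟩
  · rw [(hd t ht).deriv]
    have := congrArg e (hΦe t ht)
    simp only [map_add, map_smul] at this
    rw [he (A (Φ t)), hAof, ← he (Φ t)] at this
    simpa [H] using this
  · have := (e.continuous.tendsto 0).comp hΦ0
    simpa [Function.comp_def] using this
  · rintro Ψ ⟨-, hΨ, hΨ0⟩ t ht
    have := FuchsAux.unique_aux A hA T ε hε H L' hL' (fun t => e.symm (Ψ t)) Φ
      (fun t => e.symm (deriv Ψ t)) Φ'
      (fun t ht => e.symm.hasFDerivAt.comp_hasDerivAt t (hΨ t ht).1.hasDerivAt) hΦ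
      (fun t ht => by
        have h := congrArg e.symm (hΨ t ht).2
        simp only [map_add, map_smul] at h
        have hAe : A (e.symm (Ψ t)) = e.symm (M.mulVec (Ψ t)) := by
          apply e.injective
          rw [he, hAof, e.apply_symm_apply]; rfl
        rw [hAe, h]
        simp [H]) hΦe
      (by simpa [Function.comp_def] using (e.symm.continuous.tendsto 0).comp hΨ0) hΦ0 ht
    have h2 := congrArg e this
    simpa using h2
end
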